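/- For the Glauber dynamics of the square plaquette model on Λ=[1:L_c]² with all-plus boundary conditions, where L_c=⌊e^{β/2}⌋ is the critical length, there exist constants c,C>0 and β₀ such that for all β≥β₀: c·e^{3.5β} ≤ T_mix⁺(L_c) ≤ C·β⁸·e^{3.75β}. -/

import Mathlib

open scoped BigOperators

attribute [local instance] Classical.propDecidable

noncomputable section

namespace SPM

/-- Spin configurations on the box `[1:L]²`; `true` codes spin `+1`. -/
abbrev Config (L : ℕ) := Fin L × Fin L → Bool

/-- The spin at the integer point `y ∈ ℤ²`, with all-plus boundary conditions:
sites outside `[1:L]²` carry spin `+1`. Site `i : Fin L × Fin L` sits at `(i₁+1, i₂+1)`. -/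
def spinAt (L : ℕ) (σ : Config L) (y : ℤ × ℤ) : ℝ :=
  if ∃ i : Fin L × Fin L, ((i.1 : ℤ) + 1, (i.2 : ℤ) + 1) = y ∧ σ i = false then -1 else 1

/-- The plaquette variable `p_x(σ) = ∏_{y ∈ B_x} σ_y`. -/
def plaq (L : ℕ) (σ : Config L) (x : ℤ × ℤ) : ℝ :=
  spinAt L σ x * spinAt L σ (x.1 + 1, x.2) * spinAt L σ (x.1, x.2 + 1) *
    spinAt L σ (x.1 + 1, x.2 + 1)

/-- The plaquettes meeting the box `[1:L]²` are indexed by `[0:L]²`. -/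
def plaqSet (L : ℕ) : Finset (ℤ × ℤ) :=
  Finset.Icc (0 : ℤ) (L : ℤ) ×ˢ Finset.Icc (0 : ℤ) (L : ℤ)

/-- The set of defects `D(σ)`. -/
def defects (L : ℕ) (σ : Config L) : Finset (ℤ × ℤ) :=
  (plaqSet L).filter fun x => plaq L σ x = -1

/-- The Hamiltonian `H(σ) = -(1/2) ∑_x p_x(σ)`. -/
def ham (L : ℕ) (σ : Config L) : ℝ := -(1 / 2) * ∑ x ∈ plaqSet L, plaq L σ x

/-- The Gibbs measure `π(σ) = e^{-βH(σ)}/Z`. -/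
def gibbs (L : ℕ) (β : ℝ) (σ : Config L) : ℝ :=
  Real.exp (-β * ham L σ) / ∑ η : Config L, Real.exp (-β * ham L η)

/-- Flip one spin. -/
def flip (L : ℕ) (σ : Config L) (x : Fin L × Fin L) : Config L :=
  fun i => if i = x then !(σ i) else σ i

/-- Metropolis rate of the move `σ → η`: `min(1, e^{-β(H(η)-H(σ))})`. -/
def metroRate (L : ℕ) (β : ℝ) (σ η : Config L) : ℝ :=
  min 1 (Real.exp (-β * (ham L η - ham L σ)))

/-- The Glauber generator, as a matrix. -/
def gen (L : ℕ) (β : ℝ) : Matrix (Config L) (Config L) ℝ :=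
  fun σ η =>
    if η = σ then -(∑ x : Fin L × Fin L, metroRate L β σ (flip L σ x))
    else ∑ x : Fin L × Fin L, if η = flip L σ x then metroRate L β σ (flip L σ x) else 0

/-- Entrywise matrix exponential `∑ₖ Aᵏ/k!`. -/
def mexp {n : Type*} [Fintype n] [DecidableEq n] (A : Matrix n n ℝ) : Matrix n n ℝ :=
  fun i j => ∑' k : ℕ, (A ^ k) i j / (Nat.factorial k : ℝ)

/-- Total-variation distance between two (probability) vectors. -/
def tv {n : Type*} [Fintype n] (μ ν : n → ℝ) : ℝ := (∑ s, |μ s - ν s|) / 2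

/-- The `ε`-mixing time of the Glauber dynamics. -/
def tmix (L : ℕ) (β ε : ℝ) : ℝ :=
  sInf {t : ℝ | 0 < t ∧ ∀ σ : Config L, tv (mexp (t • gen L β) σ) (gibbs L β) < ε}

/-- The critical length scale `L_c = ⌊e^{β/2}⌋`. -/
def Lc (β : ℝ) : ℕ := ⌊Real.exp (β / 2)⌋₊

end SPM


open SPM

section MatrixExponential

variable {S : Type*} [Fintype S] [DecidableEq S]

theorem hasSum_mexp (A : Matrix S S ℝ) (i j : S) :
    HasSum (fun k : ℕ => (A ^ k) i j / (Nat.factorial k : ℝ)) (NormedSpace.exp A i j) := by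
  let _ : NormedRing (Matrix S S ℝ) := Matrix.linftyOpNormedRing
  let _ : NormedAlgebra ℝ (Matrix S S ℝ) := Matrix.linftyOpNormedAlgebra
  have h := NormedSpace.exp_series_hasSum_exp' (𝕂 := ℝ) A
  have h2 : HasSum (fun k : ℕ => (((Nat.factorial k : ℝ)⁻¹) • A ^ k) i j)
      (NormedSpace.exp A i j) := by
    have := Pi.hasSum.1 h i
    exact Pi.hasSum.1 this j
  simpa [div_eq_inv_mul] using h2

theorem mexp_eq_exp (A : Matrix S S ℝ) : mexp A = NormedSpace.exp A := by
  ext i j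
  exact (hasSum_mexp A i j).tsum_eq

theorem mexp_nonneg_of_nonneg {A : Matrix S S ℝ} (hA : ∀ i j, 0 ≤ A i j) (i j : S) :
    0 ≤ mexp A i j := by
  have hp : ∀ k : ℕ, ∀ i j, 0 ≤ (A ^ k) i j := by
    intro k
    induction k with
    | zero => intro i j; rw [pow_zero, Matrix.one_apply]; split_ifs <;> norm_num
    | succ k ih =>
      intro i j
      rw [pow_succ, Matrix.mul_apply]
      exact Finset.sum_nonneg fun l _ => mul_nonneg (ih _ _) (hA _ _)
  exact tsum_nonneg fun k => div_nonneg (hp k i j) (by positivity)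

theorem mexp_nonneg_of_offDiag_nonneg {A : Matrix S S ℝ} (hA : ∀ i j, i ≠ j → 0 ≤ A i j) (i j : S) :
    0 ≤ mexp A i j := by
  obtain ⟨c, hc⟩ : ∃ c : ℝ, ∀ i, -c ≤ A i i := by
    refine ⟨∑ i, |A i i|, fun i => ?_⟩
    have h1 : |A i i| ≤ ∑ i, |A i i| := Finset.single_le_sum (f := fun i => |A i i|) (fun i _ => abs_nonneg _)
      (Finset.mem_univ i)
    have h2 := neg_abs_le (A i i)
    linarith
  have hB : ∀ i j, 0 ≤ (A + c • (1 : Matrix S S ℝ)) i j := by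
    intro i j
    by_cases h : i = j
    · subst h
      have := hc i
      simp
      linarith
    · simpa [h] using hA i j h
  have hcomm : Commute (A + c • (1 : Matrix S S ℝ)) ((-c) • (1 : Matrix S S ℝ)) :=
    (Commute.one_right _).smul_right _
  have hsplit : A = (A + c • (1 : Matrix S S ℝ)) + (-c) • (1 : Matrix S S ℝ) := by
    rw [neg_smul]; abel
  have hexp : NormedSpace.exp ((-c) • (1 : Matrix S S ℝ)) = Real.exp (-c) • (1 : Matrix S S ℝ) := by
    rw [show ((-c) • (1 : Matrix S S ℝ)) = Matrix.diagonal (fun _ : S => -c) by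
      ext i j; simp [Matrix.diagonal, Matrix.one_apply], Matrix.exp_diagonal]
    ext i j
    simp [Matrix.diagonal, Matrix.one_apply, Real.exp_eq_exp_ℝ]
  rw [mexp_eq_exp, hsplit, Matrix.exp_add_of_commute _ _ hcomm, hexp, ← mexp_eq_exp]
  simp only [Matrix.mul_smul, mul_one, Matrix.smul_apply, smul_eq_mul]
  exact mul_nonneg (Real.exp_pos _).le (mexp_nonneg_of_nonneg hB i j)

theorem hasDerivAt_mexp (A : Matrix S S ℝ) (t : ℝ) (i j : S) :
    HasDerivAt (fun s : ℝ => mexp (s • A) i j) ((A * mexp (t • A)) i j) t := by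
  let _ : NormedRing (Matrix S S ℝ) := Matrix.linftyOpNormedRing
  let _ : NormedAlgebra ℝ (Matrix S S ℝ) := Matrix.linftyOpNormedAlgebra
  have h := hasDerivAt_exp_smul_const' (𝕂 := ℝ) A t
  have h1 := hasDerivAt_pi.1 h i
  have h2 := hasDerivAt_pi.1 h1 j
  simp only [mexp_eq_exp]
  exact h2

theorem mexp_zero_smul (A : Matrix S S ℝ) : mexp ((0 : ℝ) • A) = 1 := by
  rw [mexp_eq_exp, zero_smul, NormedSpace.exp_zero]

theorem mexp_mulVec_of_mulVec_eq_zero {A : Matrix S S ℝ} {v : S → ℝ} (h : A.mulVec v = 0) :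
    (mexp A).mulVec v = v := by
  have hk : ∀ k : ℕ, k ≠ 0 → (A ^ k).mulVec v = 0 := by
    intro k hk
    obtain ⟨m, rfl⟩ := Nat.exists_eq_succ_of_ne_zero hk
    rw [pow_succ, ← Matrix.mulVec_mulVec, h, Matrix.mulVec_zero]
  ext i
  have h1 : HasSum (fun k : ℕ => ∑ j, (A ^ k) i j / (Nat.factorial k : ℝ) * v j)
      (∑ j, mexp A i j * v j) := by
    refine hasSum_sum fun j _ => ?_
    rw [mexp_eq_exp]
    exact (hasSum_mexp A i j).mul_right _
  have h2 : HasSum (fun k : ℕ => ∑ j, (A ^ k) i j / (Nat.factorial k : ℝ) * v j) (v i) := by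
    have := hasSum_single (f := fun k : ℕ => ∑ j, (A ^ k) i j / (Nat.factorial k : ℝ) * v j) 0
      (by
        intro k hk0
        have := congrFun (hk k hk0) i
        simp only [Matrix.mulVec, dotProduct, Pi.zero_apply] at this
        calc _ = (∑ j, (A ^ k) i j * v j) / (Nat.factorial k : ℝ) := by
              rw [Finset.sum_div]; exact Finset.sum_congr rfl fun j _ => by ring
          _ = 0 := by rw [this, zero_div])
    simpa [Matrix.one_apply] using this
  exact h1.unique h2

theorem mexp_detailed_balance {A : Matrix S S ℝ} {p : S → ℝ}
    (h : ∀ i j, p i * A i j = p j * A j i) (i j : S) :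
    p i * mexp A i j = p j * mexp A j i := by
  have hk : ∀ k : ℕ, ∀ i j, p i * (A ^ k) i j = p j * (A ^ k) j i := by
    intro k
    induction k with
    | zero =>
      intro i j
      by_cases hij : i = j
      · subst hij; rfl
      · simp [hij, Ne.symm hij]
    | succ k ih =>
      intro i j
      rw [pow_succ, Matrix.mul_apply, Finset.mul_sum, ← pow_succ, pow_succ', Matrix.mul_apply,
        Finset.mul_sum]
      refine Finset.sum_congr rfl fun l _ => ?_
      rw [← mul_assoc, ih, mul_right_comm, h l j, mul_right_comm, mul_assoc]
      ring
  have h1 := (hasSum_mexp A i j).mul_left (p i)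
  have h2 := (hasSum_mexp A j i).mul_left (p j)
  rw [mexp_eq_exp]
  refine h1.unique ?_
  convert h2 using 2 with k
  rw [← mul_div_assoc, hk, mul_div_assoc]

end MatrixExponential

section ReversibleChain

variable {S : Type*} [Fintype S]

/-- `G` is the generator of a continuous-time chain on `S`, reversible with respect to the
probability vector `p`. -/
structure IsReversibleGenerator (G : Matrix S S ℝ) (p : S → ℝ) : Prop where
  pos : ∀ s, 0 < p s
  sum_one : ∑ s, p s = 1
  row_sum : ∀ s, ∑ r, G s r = 0
  offDiag_nonneg : ∀ s r, s ≠ r → 0 ≤ G s r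
  balance : ∀ s r, p s * G s r = p r * G r s

/-- The Dirichlet form of the generator `G` with respect to `p`. -/
def dirichlet (G : Matrix S S ℝ) (p f : S → ℝ) : ℝ :=
  (∑ s, ∑ r, p s * G s r * (f r - f s) ^ 2) / 2

variable {G : Matrix S S ℝ} {p : S → ℝ}

theorem IsReversibleGenerator.term_nonneg (h : IsReversibleGenerator G p) (f : S → ℝ) (s r : S) :
    0 ≤ p s * G s r * (f r - f s) ^ 2 := by
  by_cases hsr : s = r
  · subst hsr; simp
  · exact mul_nonneg (mul_nonneg (h.pos s).le (h.offDiag_nonneg s r hsr)) (sq_nonneg _)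

theorem IsReversibleGenerator.dirichlet_nonneg (h : IsReversibleGenerator G p) (f : S → ℝ) :
    0 ≤ dirichlet G p f :=
  div_nonneg (Finset.sum_nonneg fun s _ => Finset.sum_nonneg fun r _ => h.term_nonneg f s r)
    zero_le_two

theorem IsReversibleGenerator.dirichlet_le_of_lipschitz (h : IsReversibleGenerator G p)
    {f g : S → ℝ} (hfg : ∀ s r, |f r - f s| ≤ |g r - g s|) :
    dirichlet G p f ≤ dirichlet G p g := by
  unfold dirichlet
  refine div_le_div_of_nonneg_right
    (Finset.sum_le_sum fun s _ => Finset.sum_le_sum fun r _ => ?_) zero_le_two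
  by_cases hsr : s = r
  · subst hsr; simp only [sub_self, le_refl]
  · exact mul_le_mul_of_nonneg_left (sq_le_sq.2 (hfg s r))
      (mul_nonneg (h.pos s).le (h.offDiag_nonneg s r hsr))

theorem IsReversibleGenerator.sum_mul_mulVec_comm (h : IsReversibleGenerator G p) (f g : S → ℝ) :
    ∑ s, p s * f s * (G.mulVec g) s = ∑ s, p s * g s * (G.mulVec f) s := by
  simp only [Matrix.mulVec, dotProduct, Finset.mul_sum]
  rw [Finset.sum_comm]
  refine Finset.sum_congr rfl fun s _ => Finset.sum_congr rfl fun r _ => ?_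
  linear_combination (f r * g s) * h.balance r s

theorem IsReversibleGenerator.sum_mul_mulVec_self (h : IsReversibleGenerator G p) (f : S → ℝ) :
    ∑ s, p s * f s * (G.mulVec f) s = -dirichlet G p f := by
  have h1 : ∑ s, ∑ r, p s * G s r * f s ^ 2 = 0 := by
    refine Finset.sum_eq_zero fun s _ => ?_
    calc _ = p s * f s ^ 2 * ∑ r, G s r := by
          rw [Finset.mul_sum]; exact Finset.sum_congr rfl fun r _ => by ring
      _ = 0 := by rw [h.row_sum, mul_zero]
  have h2 : ∑ s, ∑ r, p s * G s r * f r ^ 2 = 0 := by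
    rw [Finset.sum_comm, ← h1]
    refine Finset.sum_congr rfl fun s _ => Finset.sum_congr rfl fun r _ => ?_
    rw [h.balance]
  have h3 : ∑ s, ∑ r, p s * G s r * (f r - f s) ^ 2 =
      ∑ s, ∑ r, p s * G s r * f r ^ 2 + ∑ s, ∑ r, p s * G s r * f s ^ 2
        - 2 * ∑ s, ∑ r, p s * f s * (G s r * f r) := by
    simp only [Finset.mul_sum, ← Finset.sum_add_distrib, ← Finset.sum_sub_distrib]
    exact Finset.sum_congr rfl fun s _ => Finset.sum_congr rfl fun r _ => by ring
  simp only [dirichlet, Matrix.mulVec, dotProduct, Finset.mul_sum]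
  rw [h3, h1, h2]
  ring

theorem dirichlet_sub_const (G : Matrix S S ℝ) (p f : S → ℝ) (c : ℝ) :
    dirichlet G p (fun s => f s - c) = dirichlet G p f := by
  simp [dirichlet]

variable [DecidableEq S]

/-- The action of the semigroup `e^{tG}` on functions. -/
def semigroup (G : Matrix S S ℝ) (t : ℝ) (f : S → ℝ) : S → ℝ := (mexp (t • G)).mulVec f

theorem hasDerivAt_semigroup (G : Matrix S S ℝ) (f : S → ℝ) (t : ℝ) (s : S) :
    HasDerivAt (fun t => semigroup G t f s) ((G.mulVec (semigroup G t f)) s) t := by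
  have : HasDerivAt (fun t => ∑ r, mexp (t • G) s r * f r)
      (∑ r, (G * mexp (t • G)) s r * f r) t :=
    HasDerivAt.fun_sum fun r _ => (hasDerivAt_mexp G t s r).mul_const _
  have he : G.mulVec (semigroup G t f) = (G * mexp (t • G)).mulVec f := Matrix.mulVec_mulVec _ _ _
  rw [he]
  exact this

theorem semigroup_zero (G : Matrix S S ℝ) (f : S → ℝ) : semigroup G 0 f = f := by
  rw [semigroup, mexp_zero_smul, Matrix.one_mulVec]

theorem IsReversibleGenerator.semigroup_const (h : IsReversibleGenerator G p) (t c : ℝ) :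
    semigroup G t (fun _ => c) = fun _ => c := by
  refine mexp_mulVec_of_mulVec_eq_zero ?_
  ext s
  simp only [Matrix.mulVec, dotProduct, Matrix.smul_apply, smul_eq_mul, Pi.zero_apply]
  rw [← Finset.sum_mul, ← Finset.mul_sum, h.row_sum, mul_zero, zero_mul]

theorem IsReversibleGenerator.mexp_balance (h : IsReversibleGenerator G p) (t : ℝ) (s r : S) :
    p s * mexp (t • G) s r = p r * mexp (t • G) r s := by
  refine mexp_detailed_balance (fun i j => ?_) s r
  simp only [Matrix.smul_apply, smul_eq_mul]
  linear_combination t * h.balance i j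

theorem IsReversibleGenerator.mexp_row_sum (h : IsReversibleGenerator G p) (t : ℝ) (s : S) :
    ∑ r, mexp (t • G) s r = 1 := by
  have := congrFun (h.semigroup_const t 1) s
  simpa [semigroup, Matrix.mulVec, dotProduct] using this

theorem IsReversibleGenerator.mexp_nonneg (h : IsReversibleGenerator G p) {t : ℝ} (ht : 0 ≤ t)
    (s r : S) : 0 ≤ mexp (t • G) s r := by
  refine mexp_nonneg_of_offDiag_nonneg (fun i j hij => ?_) s r
  exact mul_nonneg ht (h.offDiag_nonneg i j hij)

theorem IsReversibleGenerator.sum_semigroup (h : IsReversibleGenerator G p) (t : ℝ) (f : S → ℝ) :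
    ∑ s, p s * semigroup G t f s = ∑ s, p s * f s := by
  simp only [semigroup, Matrix.mulVec, dotProduct, Finset.mul_sum]
  rw [Finset.sum_comm]
  refine Finset.sum_congr rfl fun r _ => ?_
  calc _ = ∑ s, p r * f r * mexp (t • G) r s :=
        Finset.sum_congr rfl fun s _ => by linear_combination f r * h.mexp_balance t s r
    _ = _ := by rw [← Finset.mul_sum, h.mexp_row_sum, mul_one]

theorem IsReversibleGenerator.hasDerivAt_sum_sq (h : IsReversibleGenerator G p) (f : S → ℝ)
    (t : ℝ) : HasDerivAt (fun t => ∑ s, p s * semigroup G t f s ^ 2)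
      (-2 * dirichlet G p (semigroup G t f)) t := by
  have : HasDerivAt (fun t => ∑ s, p s * semigroup G t f s ^ 2)
      (∑ s, p s * (2 * semigroup G t f s * (G.mulVec (semigroup G t f)) s)) t := by
    refine HasDerivAt.fun_sum fun s _ => ?_
    have := ((hasDerivAt_semigroup G f t s).pow 2).const_mul (p s)
    simpa using this
  convert this using 1
  have h1 := h.sum_mul_mulVec_self (semigroup G t f)
  rw [show -2 * dirichlet G p (semigroup G t f) = 2 * -dirichlet G p (semigroup G t f) by ring,
    ← h1, Finset.mul_sum]
  exact Finset.sum_congr rfl fun s _ => by ring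

theorem IsReversibleGenerator.hasDerivAt_dirichlet (h : IsReversibleGenerator G p) (f : S → ℝ)
    (t : ℝ) : HasDerivAt (fun t => dirichlet G p (semigroup G t f))
      (-2 * ∑ s, p s * (G.mulVec (semigroup G t f) s) ^ 2) t := by
  have hG : ∀ s, HasDerivAt (fun t => (G.mulVec (semigroup G t f)) s)
      ((G.mulVec (G.mulVec (semigroup G t f))) s) t := fun s =>
    HasDerivAt.fun_sum fun r _ => (hasDerivAt_semigroup G f t r).const_mul _
  have h0 : (fun t => dirichlet G p (semigroup G t f)) =
      fun t => -∑ s, p s * semigroup G t f s * (G.mulVec (semigroup G t f)) s := by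
    ext t; rw [h.sum_mul_mulVec_self, neg_neg]
  rw [h0]
  have h1 : HasDerivAt (fun t => -∑ s, p s * semigroup G t f s * (G.mulVec (semigroup G t f)) s)
      (-∑ s, (p s * (G.mulVec (semigroup G t f)) s * (G.mulVec (semigroup G t f)) s +
        p s * semigroup G t f s * (G.mulVec (G.mulVec (semigroup G t f))) s)) t :=
    (HasDerivAt.fun_sum fun s _ =>
      ((hasDerivAt_semigroup G f t s).const_mul (p s)).mul (hG s)).neg
  convert h1 using 1
  rw [Finset.sum_add_distrib, h.sum_mul_mulVec_comm (semigroup G t f), ← Finset.sum_add_distrib,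
    Finset.mul_sum, ← Finset.sum_neg_distrib]
  exact Finset.sum_congr rfl fun s _ => by ring

theorem IsReversibleGenerator.dirichlet_semigroup_le (h : IsReversibleGenerator G p) (f : S → ℝ)
    {t : ℝ} (ht : 0 ≤ t) : dirichlet G p (semigroup G t f) ≤ dirichlet G p f := by
  have hanti : Antitone fun t => dirichlet G p (semigroup G t f) :=
    antitone_of_hasDerivAt_nonpos (fun t => h.hasDerivAt_dirichlet f t) fun t => by
      have : 0 ≤ ∑ s, p s * (G.mulVec (semigroup G t f) s) ^ 2 :=
        Finset.sum_nonneg fun s _ => mul_nonneg (h.pos s).le (sq_nonneg _)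
      simp only [Pi.zero_apply]
      linarith
  simpa [semigroup_zero] using hanti ht

theorem IsReversibleGenerator.sum_sq_semigroup_ge (h : IsReversibleGenerator G p) (f : S → ℝ)
    {t : ℝ} (ht : 0 ≤ t) :
    ∑ s, p s * f s ^ 2 - 2 * t * dirichlet G p f ≤ ∑ s, p s * semigroup G t f s ^ 2 := by
  have hmono : MonotoneOn (fun t => ∑ s, p s * semigroup G t f s ^ 2 + 2 * t * dirichlet G p f)
      (Set.Ici 0) := by
    have hd : ∀ t, HasDerivAt
        (fun t => ∑ s, p s * semigroup G t f s ^ 2 + 2 * t * dirichlet G p f)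
        (-2 * dirichlet G p (semigroup G t f) + 2 * dirichlet G p f) t := fun t => by
      have h2 : HasDerivAt (fun t : ℝ => 2 * t * dirichlet G p f) (2 * dirichlet G p f) t := by
        simpa using ((hasDerivAt_id t).const_mul 2).mul_const (dirichlet G p f)
      exact (h.hasDerivAt_sum_sq f t).add h2
    refine monotoneOn_of_hasDerivWithinAt_nonneg (convex_Ici 0)
      (fun t _ => (hd t).continuousAt.continuousWithinAt)
      (fun t _ => (hd t).hasDerivWithinAt) ?_
    intro t ht
    have ht' : 0 ≤ t := by
      rw [interior_Ici] at ht
      exact le_of_lt ht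
    have := h.dirichlet_semigroup_le f ht'
    linarith
  have := hmono (Set.mem_Ici.2 le_rfl) (Set.mem_Ici.2 ht) ht
  simp only [semigroup_zero] at this
  linarith

/-- If all rows of `e^{tG}` are within total variation `1/4` of `p`, then `e^{tG}` contracts
mean-zero functions in `L²` by a factor `1/2`. -/
theorem IsReversibleGenerator.sum_sq_semigroup_le_of_tv (h : IsReversibleGenerator G p) {t : ℝ}
    (hmix : ∀ s, tv (mexp (t • G) s) p < 1 / 4) {f : S → ℝ} (hf : ∑ s, p s * f s = 0) :
    ∑ s, p s * semigroup G t f s ^ 2 ≤ (1 / 4) * ∑ s, p s * f s ^ 2 := by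
  have hK : ∀ s, ∑ r, |mexp (t • G) s r - p r| ≤ 1 / 2 := by
    intro s
    have := hmix s
    unfold tv at this
    linarith
  have hsemi : ∀ s, semigroup G t f s = ∑ r, (mexp (t • G) s r - p r) * f r := by
    intro s
    simp only [sub_mul, Finset.sum_sub_distrib, hf, sub_zero]
    rfl
  have hpt : ∀ s, semigroup G t f s ^ 2 ≤
      (1 / 2) * ∑ r, |mexp (t • G) s r - p r| * f r ^ 2 := by
    intro s
    rw [hsemi]
    have hcs : (∑ r, (mexp (t • G) s r - p r) * f r) ^ 2 ≤
        (∑ r, |mexp (t • G) s r - p r|) * ∑ r, |mexp (t • G) s r - p r| * f r ^ 2 := by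
      refine Finset.sum_sq_le_sum_mul_sum_of_sq_le_mul _ (fun r _ => abs_nonneg _)
        (fun r _ => mul_nonneg (abs_nonneg _) (sq_nonneg _)) (fun r _ => le_of_eq ?_)
      rw [mul_pow, ← sq_abs (mexp (t • G) s r - p r)]
      ring
    refine hcs.trans ?_
    exact mul_le_mul_of_nonneg_right (hK s)
      (Finset.sum_nonneg fun r _ => mul_nonneg (abs_nonneg _) (sq_nonneg _))
  calc ∑ s, p s * semigroup G t f s ^ 2
      ≤ ∑ s, p s * ((1 / 2) * ∑ r, |mexp (t • G) s r - p r| * f r ^ 2) :=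
        Finset.sum_le_sum fun s _ => mul_le_mul_of_nonneg_left (hpt s) (h.pos s).le
    _ = ∑ r, (1 / 2) * (p r * f r ^ 2) * ∑ s, |mexp (t • G) r s - p s| := by
        simp only [Finset.mul_sum]
        rw [Finset.sum_comm]
        refine Finset.sum_congr rfl fun r _ => Finset.sum_congr rfl fun s _ => ?_
        have hb : p s * |mexp (t • G) s r - p r| = p r * |mexp (t • G) r s - p s| := by
          rw [← abs_of_pos (h.pos s), ← abs_mul, abs_of_pos (h.pos s), mul_sub, h.mexp_balance,
            mul_comm (p s) (p r), ← mul_sub, abs_mul, abs_of_pos (h.pos r)]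
        linear_combination (1 / 2) * f r ^ 2 * hb
    _ ≤ ∑ r, (1 / 2) * (p r * f r ^ 2) * (1 / 2) :=
        Finset.sum_le_sum fun r _ => mul_le_mul_of_nonneg_left (hK r)
          (mul_nonneg (by norm_num) (mul_nonneg (h.pos r).le (sq_nonneg _)))
    _ = _ := by
        rw [Finset.mul_sum]
        exact Finset.sum_congr rfl fun r _ => by ring

/-- A mixed chain has run at least as long as the variational lower bound on its relaxation time. -/
theorem IsReversibleGenerator.variance_le_of_tv (h : IsReversibleGenerator G p) {t : ℝ}
    (ht : 0 ≤ t) (hmix : ∀ s, tv (mexp (t • G) s) p < 1 / 4) (f : S → ℝ) :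
    (3 / 8) * (∑ s, p s * f s ^ 2 - (∑ s, p s * f s) ^ 2) ≤ t * dirichlet G p f := by
  set m := ∑ s, p s * f s with hm
  have h0 : ∑ s, p s * (f s - m) = 0 := by
    simp only [mul_sub, Finset.sum_sub_distrib, ← Finset.sum_mul, h.sum_one, ← hm]
    ring
  have h1 := h.sum_sq_semigroup_le_of_tv hmix h0
  have h2 := h.sum_sq_semigroup_ge (fun s => f s - m) ht
  have h3 : ∑ s, p s * (f s - m) ^ 2 = ∑ s, p s * f s ^ 2 - m ^ 2 := by
    have : ∀ s, p s * (f s - m) ^ 2 = p s * f s ^ 2 - 2 * m * (p s * f s) + m ^ 2 * p s :=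
      fun s => by ring
    simp only [this, Finset.sum_add_distrib, Finset.sum_sub_distrib, ← Finset.mul_sum, h.sum_one,
      ← hm]
    ring
  rw [dirichlet_sub_const] at h2
  rw [← h3]
  linarith

end ReversibleChain

section UpperBound

variable {S : Type*} [Fintype S] {G : Matrix S S ℝ} {p : S → ℝ}

/-- The energy-weighted Poincaré inequality yields a logarithmic-Sobolev-type bound for
probability densities of large `L²` norm. -/
theorem IsReversibleGenerator.mul_log_le_of_energy_poincare (h : IsReversibleGenerator G p)
    {D : S → ℕ} {o : S} {β Z A : ℝ} (hβ : 0 < β) (hZ0 : 0 < Z) (hZ : Z ≤ 2)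
    (hp : ∀ s, p s = Real.exp (-β * D s) / Z) (ho : D o = 0)
    (hpoinc : ∀ f : S → ℝ, f o = 0 → ∑ s, p s * D s * f s ^ 2 ≤ A * dirichlet G p f) (hA : 0 < A)
    {g : S → ℝ} (hg : ∀ s, 0 ≤ g s) (hg1 : ∑ s, p s * g s = 1) {u : ℝ}
    (hu : u = ∑ s, p s * g s ^ 2) (hu8 : 8 ≤ u) :
    u * Real.log (u / 8) ≤ 2 * β * A * dirichlet G p g := by
  have hple : ∀ s, p s * g s ≤ 1 := by
    intro s
    rw [← hg1]
    exact Finset.single_le_sum (f := fun s => p s * g s)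
      (fun s _ => mul_nonneg (h.pos s).le (hg s)) (Finset.mem_univ s)
  set c := u / 4 with hc
  have hc2 : 2 ≤ c := by rw [hc]; linarith
  set k : S → ℝ := fun s => max (g s - c) 0 with hk
  have hko : k o = 0 := by
    have h1 : p o = 1 / Z := by rw [hp, ho]; simp
    have h2 := hple o
    rw [h1, div_mul_eq_mul_div, div_le_one hZ0, one_mul] at h2
    simp only [hk]
    exact max_eq_right (by linarith)
  have h1 := hpoinc k hko
  have h2 : dirichlet G p k ≤ dirichlet G p g := by
    refine h.dirichlet_le_of_lipschitz fun s r => ?_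
    simp only [hk]
    calc |max (g r - c) 0 - max (g s - c) 0| ≤ |(g r - c) - (g s - c)| :=
          abs_max_sub_max_le_abs _ _ _
      _ = |g r - g s| := by ring_nf
  have hlog : 0 ≤ Real.log (u / 8) := Real.log_nonneg (by linarith)
  have h3 : Real.log (u / 8) / β * ∑ s, p s * k s ^ 2 ≤ ∑ s, p s * D s * k s ^ 2 := by
    rw [Finset.mul_sum]
    refine Finset.sum_le_sum fun s _ => ?_
    by_cases hs : g s ≤ c
    · have : k s = 0 := max_eq_right (by linarith)
      rw [this]; simp
    · push Not at hs
      have hd : Real.log (u / 8) / β ≤ D s := by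
        rw [div_le_iff₀ hβ, Real.log_le_iff_le_exp (by linarith)]
        have h4 : p s * c ≤ 1 := (mul_le_mul_of_nonneg_left hs.le (h.pos s).le).trans (hple s)
        rw [hp, div_mul_eq_mul_div, div_le_one hZ0] at h4
        have h5 : Real.exp (D s * β) * Real.exp (-β * D s) = 1 := by
          rw [← Real.exp_add]; simp [mul_comm]
        have h6 : Real.exp (D s * β) * (Real.exp (-β * D s) * c) ≤ Real.exp (D s * β) * 2 :=
          mul_le_mul_of_nonneg_left (h4.trans hZ) (Real.exp_pos _).le
        rw [← mul_assoc, h5, hc] at h6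
        linarith
      calc Real.log (u / 8) / β * (p s * k s ^ 2) ≤ D s * (p s * k s ^ 2) :=
            mul_le_mul_of_nonneg_right hd (mul_nonneg (h.pos s).le (sq_nonneg _))
        _ = _ := by ring
  have h4 : u / 2 ≤ ∑ s, p s * k s ^ 2 := by
    have : ∑ s, (p s * g s ^ 2 - 2 * c * (p s * g s)) ≤ ∑ s, p s * k s ^ 2 := by
      refine Finset.sum_le_sum fun s _ => ?_
      have hpt : g s ^ 2 - 2 * c * g s ≤ k s ^ 2 := by
        by_cases hs : g s ≤ c
        · have : k s = 0 := max_eq_right (by linarith)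
          rw [this]
          nlinarith [hg s]
        · push Not at hs
          have : k s = g s - c := max_eq_left (by linarith)
          rw [this]
          nlinarith [sq_nonneg c]
      calc _ = p s * (g s ^ 2 - 2 * c * g s) := by ring
        _ ≤ _ := mul_le_mul_of_nonneg_left hpt (h.pos s).le
    rw [Finset.sum_sub_distrib, ← Finset.mul_sum, hg1, ← hu, hc] at this
    linarith
  have h5 : Real.log (u / 8) / β * (u / 2) ≤ A * dirichlet G p g :=
    (mul_le_mul_of_nonneg_left h4 (div_nonneg hlog hβ.le)).trans
      (h3.trans (h1.trans (mul_le_mul_of_nonneg_left h2 hA.le)))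
  have h6 : Real.log (u / 8) / β * (u / 2) = u * Real.log (u / 8) / (2 * β) := by
    field_simp
  rw [h6, div_le_iff₀ (by positivity)] at h5
  linarith

theorem IsReversibleGenerator.variance_le_of_energy_poincare (h : IsReversibleGenerator G p)
    {D : S → ℕ} {o : S} {A : ℝ} (hD : ∀ s, s ≠ o → 1 ≤ D s)
    (hpoinc : ∀ f : S → ℝ, f o = 0 → ∑ s, p s * D s * f s ^ 2 ≤ A * dirichlet G p f)
    {g : S → ℝ} (hg1 : ∑ s, p s * g s = 1) :
    ∑ s, p s * g s ^ 2 - 1 ≤ A * dirichlet G p g := by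
  have h1 := hpoinc (fun s => g s - g o) (sub_self _)
  rw [dirichlet_sub_const] at h1
  refine le_trans ?_ h1
  have h2 : ∑ s, p s * (g s - g o) ^ 2 ≤ ∑ s, p s * D s * (g s - g o) ^ 2 := by
    refine Finset.sum_le_sum fun s _ => ?_
    by_cases hs : s = o
    · subst hs; simp
    · have : (1 : ℝ) ≤ D s := by exact_mod_cast hD s hs
      have h3 : 0 ≤ p s * (g s - g o) ^ 2 := mul_nonneg (h.pos s).le (sq_nonneg _)
      nlinarith
  refine le_trans ?_ h2
  have h3 : ∑ s, p s * (g s - g o) ^ 2 = ∑ s, p s * g s ^ 2 - 2 * g o + g o ^ 2 := by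
    have : ∀ s, p s * (g s - g o) ^ 2 =
        p s * g s ^ 2 - 2 * g o * (p s * g s) + g o ^ 2 * p s := fun s => by ring
    simp only [this, Finset.sum_add_distrib, Finset.sum_sub_distrib, ← Finset.mul_sum, hg1,
      h.sum_one]
    ring
  rw [h3]
  nlinarith [sq_nonneg (g o - 1)]

variable [DecidableEq S]

theorem IsReversibleGenerator.semigroup_single (h : IsReversibleGenerator G p) (t : ℝ) (s r : S) :
    semigroup G t (Pi.single s (1 / p s)) r = mexp (t • G) s r / p r := by
  have h1 : semigroup G t (Pi.single s (1 / p s)) r = mexp (t • G) r s * (1 / p s) := by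
    unfold semigroup
    rw [Matrix.mulVec_single]
    simp
  rw [h1]
  have := h.mexp_balance t s r
  have hs := (h.pos s).ne'
  have hr := (h.pos r).ne'
  field_simp
  linarith

theorem tv_lt_of_sum_sq_lt (h : IsReversibleGenerator G p) {t : ℝ} {s : S}
    (hu : ∑ r, p r * semigroup G t (Pi.single s (1 / p s)) r ^ 2 - 1 < 1 / 4) :
    tv (mexp (t • G) s) p < 1 / 4 := by
  set g := semigroup G t (Pi.single s (1 / p s)) with hgdef
  have hg : ∀ r, mexp (t • G) s r = p r * g r := by
    intro r
    rw [hgdef, h.semigroup_single, mul_div_cancel₀ _ (h.pos r).ne']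
  have hg1 : ∑ r, p r * g r = 1 := by
    simp only [← hg]
    exact h.mexp_row_sum t s
  have h1 : ∑ r, |mexp (t • G) s r - p r| = ∑ r, p r * |g r - 1| := by
    refine Finset.sum_congr rfl fun r _ => ?_
    rw [hg, show p r * g r - p r = p r * (g r - 1) by ring, abs_mul, abs_of_pos (h.pos r)]
  have h2 : (∑ r, p r * |g r - 1|) ^ 2 ≤ (∑ r, p r) * ∑ r, p r * (g r - 1) ^ 2 := by
    refine Finset.sum_sq_le_sum_mul_sum_of_sq_le_mul _ (fun r _ => (h.pos r).le)
      (fun r _ => mul_nonneg (h.pos r).le (sq_nonneg _)) (fun r _ => le_of_eq ?_)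
    rw [mul_pow, sq_abs]; ring
  have h3 : ∑ r, p r * (g r - 1) ^ 2 = ∑ r, p r * g r ^ 2 - 1 := by
    have : ∀ r, p r * (g r - 1) ^ 2 = p r * g r ^ 2 - 2 * (p r * g r) + p r := fun r => by ring
    simp only [this, Finset.sum_add_distrib, Finset.sum_sub_distrib, ← Finset.mul_sum, hg1,
      h.sum_one]
    ring
  rw [h.sum_one, one_mul, h3] at h2
  unfold tv
  rw [h1]
  have h4 : ∑ r, p r * |g r - 1| < 1 / 2 := by
    refine lt_of_pow_lt_pow_left₀ 2 (by norm_num) ?_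
    linarith
  linarith

/-- Mixing-time bound from an energy-weighted Poincaré inequality for a Gibbs measure
concentrated on its ground state. -/
theorem IsReversibleGenerator.tv_lt_of_energy_poincare (h : IsReversibleGenerator G p)
    {D : S → ℕ} {o : S} {β Z A M : ℝ} (hβ : 0 < β) (hZ0 : 0 < Z) (hZ : Z ≤ 2)
    (hp : ∀ s, p s = Real.exp (-β * D s) / Z) (ho : D o = 0) (hD : ∀ s, s ≠ o → 1 ≤ D s)
    (hM : ∀ s, (D s : ℝ) ≤ M) (hM1 : 1 ≤ β * M) (hA : 0 < A)
    (hpoinc : ∀ f : S → ℝ, f o = 0 → ∑ s, p s * D s * f s ^ 2 ≤ A * dirichlet G p f) (s : S) :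
    tv (mexp ((β * A * Real.log (β * M) + 3 * A) • G) s) p < 1 / 4 := by
  refine tv_lt_of_sum_sq_lt h ?_
  set φ : S → ℝ := Pi.single s (1 / p s) with hφ
  set u : ℝ → ℝ := fun t => ∑ r, p r * semigroup G t φ r ^ 2 with hu
  have hder : ∀ t, HasDerivAt u (-2 * dirichlet G p (semigroup G t φ)) t :=
    fun t => h.hasDerivAt_sum_sq φ t
  have hnn : ∀ t, 0 ≤ t → ∀ r, 0 ≤ semigroup G t φ r := by
    intro t ht r
    rw [hφ, h.semigroup_single]
    exact div_nonneg (h.mexp_nonneg ht s r) (h.pos r).le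
  have hone : ∀ t, ∑ r, p r * semigroup G t φ r = 1 := by
    intro t
    rw [h.sum_semigroup, hφ, Finset.sum_eq_single s]
    · rw [Pi.single_eq_same, mul_one_div_cancel (h.pos s).ne']
    · intro b _ hb; rw [Pi.single_eq_of_ne hb, mul_zero]
    · intro hs; exact absurd (Finset.mem_univ s) hs
  have hu0 : u 0 ≤ 8 * Real.exp (β * M) := by
    have h1 : u 0 = 1 / p s := by
      simp only [hu, semigroup_zero, hφ]
      rw [Finset.sum_eq_single s]
      · rw [Pi.single_eq_same]
        have := (h.pos s).ne'
        field_simp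
      · intro b _ hb; rw [Pi.single_eq_of_ne hb]; ring
      · intro hs; exact absurd (Finset.mem_univ s) hs
    rw [h1, hp, one_div_div, neg_mul, Real.exp_neg, div_inv_eq_mul]
    have h2 : Real.exp (β * D s) ≤ Real.exp (β * M) :=
      Real.exp_le_exp.2 (mul_le_mul_of_nonneg_left (hM s) hβ.le)
    have h3 := Real.exp_pos (β * D s)
    nlinarith
  have hanti : Antitone u := antitone_of_hasDerivAt_nonpos hder fun t => by
    have := h.dirichlet_nonneg (semigroup G t φ)
    simp only [Pi.zero_apply]
    linarith
  set T₁ := β * A * Real.log (β * M) with hT₁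
  have hT₁0 : 0 ≤ T₁ := mul_nonneg (mul_pos hβ hA).le (Real.log_nonneg hM1)
  have hphase1 : u T₁ ≤ 24 := by
    by_contra hcon
    push Not at hcon
    have hbig : ∀ t, t ≤ T₁ → 24 < u t := fun t ht => hcon.trans_le (hanti ht)
    have hpsi : AntitoneOn (fun t => Real.log (u t / 8) * Real.exp (t / (β * A)))
        (Set.Icc 0 T₁) := by
      have hd : ∀ t ∈ Set.Icc 0 T₁, HasDerivAt
          (fun t => Real.log (u t / 8) * Real.exp (t / (β * A)))
          ((-2 * dirichlet G p (semigroup G t φ) / 8) / (u t / 8) * Real.exp (t / (β * A)) +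
            Real.log (u t / 8) * (Real.exp (t / (β * A)) * (1 / (β * A)))) t := by
        intro t ht
        have hpos := hbig t ht.2
        exact (((hder t).div_const 8).log (by positivity)).mul
          (((hasDerivAt_id t).div_const (β * A)).exp)
      refine antitoneOn_of_hasDerivWithinAt_nonpos (convex_Icc 0 T₁)
        (fun t ht => (hd t ht).continuousAt.continuousWithinAt)
        (fun t ht => (hd t (interior_subset ht)).hasDerivWithinAt) ?_
      intro t ht
      have ht' := interior_subset ht
      have hpos := hbig t ht'.2
      have key := h.mul_log_le_of_energy_poincare hβ hZ0 hZ hp ho hpoinc hA (hnn t ht'.1) (hone t)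
        (u := u t) rfl (by linarith)
      have hfac : (-2 * dirichlet G p (semigroup G t φ) / 8) / (u t / 8) *
          Real.exp (t / (β * A)) +
          Real.log (u t / 8) * (Real.exp (t / (β * A)) * (1 / (β * A))) =
          Real.exp (t / (β * A)) / (u t * (β * A)) *
            (u t * Real.log (u t / 8) - 2 * β * A * dirichlet G p (semigroup G t φ)) := by
        have : u t ≠ 0 := by linarith
        field_simp
        ring
      rw [hfac]
      refine mul_nonpos_of_nonneg_of_nonpos ?_ (by linarith)
      have : 0 < u t := by linarith
      positivity
    have h1 := hpsi (Set.left_mem_Icc.2 hT₁0) (Set.right_mem_Icc.2 hT₁0) hT₁0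
    simp only [zero_div, Real.exp_zero, mul_one] at h1
    have h2 : Real.exp (T₁ / (β * A)) = β * M := by
      rw [hT₁, mul_div_cancel_left₀ _ (mul_pos hβ hA).ne', Real.exp_log (by linarith)]
    rw [h2] at h1
    have h3 : Real.log (u 0 / 8) ≤ β * M := by
      have := hbig 0 hT₁0
      rw [Real.log_le_iff_le_exp (by linarith)]
      linarith
    have h4 : 1 < Real.log (u T₁ / 8) := by
      rw [Real.lt_log_iff_exp_lt (by linarith)]
      have := Real.exp_one_lt_d9
      linarith
    nlinarith
  have hchi : Antitone (fun t => (u t - 1) * Real.exp (2 * t / A)) := by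
    have hd : ∀ t, HasDerivAt (fun t => (u t - 1) * Real.exp (2 * t / A))
        (-2 * dirichlet G p (semigroup G t φ) * Real.exp (2 * t / A) +
          (u t - 1) * (Real.exp (2 * t / A) * (2 * 1 / A))) t := fun t =>
      ((hder t).sub_const 1).mul ((((hasDerivAt_id t).const_mul 2).div_const A).exp)
    refine antitone_of_hasDerivAt_nonpos hd fun t => ?_
    have key := h.variance_le_of_energy_poincare hD hpoinc (hone t)
    have hfac : -2 * dirichlet G p (semigroup G t φ) * Real.exp (2 * t / A) +
          (u t - 1) * (Real.exp (2 * t / A) * (2 * 1 / A)) =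
        Real.exp (2 * t / A) * (2 / A) * (u t - 1 - A * dirichlet G p (semigroup G t φ)) := by
      field_simp
      ring
    simp only [Pi.zero_apply]
    rw [hfac]
    refine mul_nonpos_of_nonneg_of_nonpos (by positivity) ?_
    simp only [hu]
    linarith
  have hfin := hchi (show T₁ ≤ T₁ + 3 * A by linarith)
  have he : Real.exp (2 * (T₁ + 3 * A) / A) = Real.exp 6 * Real.exp (2 * T₁ / A) := by
    rw [← Real.exp_add]
    congr 1
    field_simp
    ring
  simp only [he] at hfin
  have he6 : (100 : ℝ) < Real.exp 6 := by
    have h1 := Real.exp_one_gt_d9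
    have h2 : Real.exp 6 = Real.exp 1 ^ 6 := by rw [← Real.exp_nat_mul]; norm_num
    have h3 : (2.7 : ℝ) ^ 6 < Real.exp 1 ^ 6 := by gcongr; linarith
    rw [h2]
    refine lt_trans ?_ h3
    norm_num
  have hE := Real.exp_pos (2 * T₁ / A)
  have h5 : (u (T₁ + 3 * A) - 1) * Real.exp 6 ≤ u T₁ - 1 := by
    refine le_of_mul_le_mul_right ?_ hE
    linarith
  change u (T₁ + 3 * A) - 1 < 1 / 4
  by_contra hcon
  push Not at hcon
  nlinarith

end UpperBound

namespace SPM

variable {L : ℕ}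

/-- `minusAt σ i j` says that the spin at the lattice point `(i, j)` is `-1`. -/
def minusAt (σ : Config L) (i j : ℕ) : Bool :=
  decide (∃ k : Fin L × Fin L, (k.1 : ℕ) + 1 = i ∧ (k.2 : ℕ) + 1 = j ∧ σ k = false)

/-- `isDefect σ i j` says that the plaquette `(i, j)` is a defect of `σ`. -/
def isDefect (σ : Config L) (i j : ℕ) : Bool :=
  (minusAt σ i j ^^ minusAt σ (i + 1) j) ^^ (minusAt σ i (j + 1) ^^ minusAt σ (i + 1) (j + 1))

/-- The plaquette index set `[0:L]²` in natural coordinates. -/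
def grid (L : ℕ) : Finset (ℕ × ℕ) := Finset.range (L + 1) ×ˢ Finset.range (L + 1)

/-- The defect set in natural coordinates. -/
def defectSet (σ : Config L) : Finset (ℕ × ℕ) := (grid L).filter fun z => isDefect σ z.1 z.2 = true

/-- The number of defects. -/
def energy (σ : Config L) : ℕ := (defectSet σ).card

/-- `between a u i` says that exactly one of `a`, `u` is smaller than `i`. -/
def between (a u i : ℕ) : Bool := decide (a < i) ^^ decide (u < i)

/-- Flip all spins in the rectangle with opposite plaquette corners `(a, b)` and `(u, v)`. -/
def flipRect (σ : Config L) (a u b v : ℕ) : Config L :=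
  fun k => σ k ^^ (between a u (k.1 + 1) && between b v (k.2 + 1))

/-- The all-plus configuration. -/
def allPlus (L : ℕ) : Config L := fun _ => true

theorem mem_grid {z : ℕ × ℕ} : z ∈ grid L ↔ z.1 ≤ L ∧ z.2 ≤ L := by
  simp [grid]

theorem mem_defectSet {σ : Config L} {z : ℕ × ℕ} :
    z ∈ defectSet σ ↔ (z.1 ≤ L ∧ z.2 ≤ L) ∧ isDefect σ z.1 z.2 = true := by
  simp [defectSet, mem_grid]

theorem minusAt_succ (σ : Config L) (k : Fin L × Fin L) :
    minusAt σ (k.1 + 1) (k.2 + 1) = !(σ k) := by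
  unfold minusAt
  cases h : σ k
  · simp only [Bool.not_false, decide_eq_true_eq]
    exact ⟨k, rfl, rfl, h⟩
  · simp only [Bool.not_true, decide_eq_false_iff_not]
    rintro ⟨k', h1, h2, h3⟩
    have : k' = k := Prod.ext (Fin.ext (by omega)) (Fin.ext (by omega))
    rw [this, h] at h3
    exact absurd h3 (by simp)

theorem minusAt_eq_false {σ : Config L} {i j : ℕ} (h : i = 0 ∨ L < i ∨ j = 0 ∨ L < j) :
    minusAt σ i j = false := by
  unfold minusAt
  simp only [decide_eq_false_iff_not]
  rintro ⟨k, h1, h2, -⟩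
  have := k.1.2
  have := k.2.2
  omega

theorem exists_site_or (L i j : ℕ) :
    (∃ k : Fin L × Fin L, i = k.1 + 1 ∧ j = k.2 + 1) ∨ (i = 0 ∨ L < i ∨ j = 0 ∨ L < j) := by
  by_cases h : i = 0 ∨ L < i ∨ j = 0 ∨ L < j
  · exact Or.inr h
  · left
    push Not at h
    refine ⟨(⟨i - 1, by omega⟩, ⟨j - 1, by omega⟩), ?_, ?_⟩ <;> simp <;> omega

theorem between_eq_false {a u i : ℕ} (ha : a ≤ L) (hu : u ≤ L) (h : i = 0 ∨ L < i) :
    between a u i = false := by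
  unfold between
  rcases h with h | h
  · simp [h]
  · have h1 : a < i := by omega
    have h2 : u < i := by omega
    simp [h1, h2]

theorem minusAt_flipRect (σ : Config L) {a u b v : ℕ} (ha : a ≤ L) (hu : u ≤ L) (hb : b ≤ L)
    (hv : v ≤ L) (i j : ℕ) :
    minusAt (flipRect σ a u b v) i j = (minusAt σ i j ^^ (between a u i && between b v j)) := by
  rcases exists_site_or L i j with ⟨k, rfl, rfl⟩ | h
  · rw [minusAt_succ, minusAt_succ, flipRect]
    cases σ k <;> simp
  · rw [minusAt_eq_false h, minusAt_eq_false h]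
    rcases h with h | h | h | h
    · simp [between_eq_false ha hu (Or.inl h)]
    · simp [between_eq_false ha hu (Or.inr h)]
    · simp [between_eq_false hb hv (Or.inl h)]
    · simp [between_eq_false hb hv (Or.inr h)]

theorem between_xor_succ (a u i : ℕ) :
    (between a u i ^^ between a u (i + 1)) = (decide (i = a) ^^ decide (i = u)) := by
  unfold between
  rcases lt_trichotomy a i with h | h | h <;> rcases lt_trichotomy u i with h' | h' | h' <;> grind

theorem isDefect_flipRect (σ : Config L) {a u b v : ℕ} (ha : a ≤ L) (hu : u ≤ L) (hb : b ≤ L)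
    (hv : v ≤ L) (i j : ℕ) :
    isDefect (flipRect σ a u b v) i j =
      (isDefect σ i j ^^ ((decide (i = a) ^^ decide (i = u)) && (decide (j = b) ^^ decide (j = v)))) := by
  rw [← between_xor_succ, ← between_xor_succ]
  unfold isDefect
  simp only [minusAt_flipRect σ ha hu hb hv]
  generalize between a u i = p1
  generalize between a u (i + 1) = p2
  generalize between b v j = r1
  generalize between b v (j + 1) = r2
  generalize minusAt σ i j = m1
  generalize minusAt σ (i + 1) j = m2
  generalize minusAt σ i (j + 1) = m3
  generalize minusAt σ (i + 1) (j + 1) = m4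
  revert p1 p2 r1 r2 m1 m2 m3 m4
  decide

theorem flipRect_flipRect_add (σ : Config L) (a k u b v : ℕ) :
    flipRect (flipRect σ a k b v) k u b v = flipRect σ a u b v := by
  funext z
  unfold flipRect between
  generalize decide (a < _) = p1
  generalize decide (k < _) = p2
  generalize decide (u < _) = p3
  generalize decide (b < _) = p4
  generalize decide (v < _) = p5
  generalize σ z = s
  revert p1 p2 p3 p4 p5 s
  decide

theorem flipRect_self (σ : Config L) (a b v : ℕ) : flipRect σ a a b v = σ := by
  funext z; simp [flipRect, between]

theorem flipRect_comm_left (σ : Config L) (a u b v : ℕ) :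
    flipRect σ a u b v = flipRect σ u a b v := by
  funext z; simp only [flipRect, between, Bool.xor_comm]

theorem flipRect_flipRect (σ : Config L) (a u b v : ℕ) :
    flipRect (flipRect σ a u b v) a u b v = σ := by
  rw [flipRect_comm_left (flipRect σ a u b v), flipRect_flipRect_add, flipRect_self]

theorem flip_eq_flipRect (σ : Config L) (x : Fin L × Fin L) :
    flip L σ x = flipRect σ x.1 (x.1 + 1) x.2 (x.2 + 1) := by
  have hb : ∀ a k : ℕ, between a (a + 1) (k + 1) = decide (k = a) := by
    intro a k; unfold between; rcases lt_trichotomy a k with h | h | h <;> grind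
  funext z
  simp only [flip, flipRect, hb]
  by_cases h : z = x
  · subst h; cases σ z <;> simp
  · have : ¬ ((z.1 : ℕ) = x.1 ∧ (z.2 : ℕ) = x.2) := fun h' =>
      h (Prod.ext (Fin.ext h'.1) (Fin.ext h'.2))
    rw [if_neg h]
    by_cases h1 : (z.1 : ℕ) = x.1
    · have h2 : ¬ ((z.2 : ℕ) = x.2) := fun h2 => this ⟨h1, h2⟩
      simp [h2]
    · simp [h1]

theorem flip_ne (σ : Config L) (x : Fin L × Fin L) : flip L σ x ≠ σ := by
  intro h
  have := congrFun h x
  simp [flip] at this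

theorem flip_flip (σ : Config L) (x : Fin L × Fin L) : flip L (flip L σ x) x = σ := by
  funext z; by_cases h : z = x <;> simp [flip, h]

theorem energy_eq_sum (σ : Config L) :
    energy σ = ∑ z ∈ grid L, (isDefect σ z.1 z.2).toNat := by
  unfold energy defectSet
  rw [Finset.card_filter]
  exact Finset.sum_congr rfl fun z _ => by cases isDefect σ z.1 z.2 <;> simp

theorem energy_flipRect (σ : Config L) {a u b v : ℕ} (ha : a ≤ L) (hu : u ≤ L) (hb : b ≤ L)
    (hv : v ≤ L) (hau : a ≠ u) (hbv : b ≠ v) :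
    energy (flipRect σ a u b v) + 2 * ((isDefect σ a b).toNat + (isDefect σ a v).toNat +
      (isDefect σ u b).toNat + (isDefect σ u v).toNat) = energy σ + 4 := by
  have hsub : ({a, u} ×ˢ {b, v} : Finset (ℕ × ℕ)) ⊆ grid L := by
    intro z hz
    simp only [Finset.mem_product, Finset.mem_insert, Finset.mem_singleton] at hz
    rw [mem_grid]
    omega
  have hcorner : ∀ g : ℕ × ℕ → ℕ, ∑ z ∈ grid L, (if z ∈ ({a, u} ×ˢ {b, v} : Finset (ℕ × ℕ))
      then g z else 0) = g (a, b) + g (a, v) + g (u, b) + g (u, v) := by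
    intro g
    rw [← Finset.sum_filter, Finset.filter_mem_eq_inter, Finset.inter_eq_right.2 hsub,
      Finset.sum_product, Finset.sum_pair hau, Finset.sum_pair hbv, Finset.sum_pair hbv]
    ring
  have key : ∑ z ∈ grid L, ((isDefect (flipRect σ a u b v) z.1 z.2).toNat +
      (if z ∈ ({a, u} ×ˢ {b, v} : Finset (ℕ × ℕ)) then 2 * (isDefect σ z.1 z.2).toNat else 0)) =
      ∑ z ∈ grid L, ((isDefect σ z.1 z.2).toNat +
      (if z ∈ ({a, u} ×ˢ {b, v} : Finset (ℕ × ℕ)) then 1 else 0)) := by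
    refine Finset.sum_congr rfl fun z _ => ?_
    rw [isDefect_flipRect σ ha hu hb hv]
    simp only [Finset.mem_product, Finset.mem_insert, Finset.mem_singleton]
    by_cases h1 : z.1 = a <;> by_cases h2 : z.1 = u <;> by_cases h3 : z.2 = b <;>
      by_cases h4 : z.2 = v <;> cases hq : isDefect σ z.1 z.2 <;> grind
  rw [Finset.sum_add_distrib, Finset.sum_add_distrib, hcorner (fun z => 2 * (isDefect σ z.1 z.2).toNat),
    hcorner (fun _ => 1), ← energy_eq_sum, ← energy_eq_sum] at key
  simp only at key
  omega

theorem exists_flip_of_ne {g : ℕ → Bool} {x n : ℕ} (hx : x ≤ n) (h0 : g 0 = false)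
    (hn : g (n + 1) = false) (h : (g x ^^ g (x + 1)) = true) :
    ∃ u ≤ n, u ≠ x ∧ (g u ^^ g (u + 1)) = true := by
  by_contra hcon
  push Not at hcon
  have h1 : ∀ i ≤ x, g i = false := by
    intro i
    induction i with
    | zero => exact fun _ => h0
    | succ i ih =>
      intro hi
      have := hcon i (by omega) (by omega)
      rw [ih (by omega)] at this
      simpa using this
  have h2 : ∀ d i, i + d = n + 1 → x < i → g i = false := by
    intro d
    induction d with
    | zero => intro i hi _; rw [show i = n + 1 by omega]; exact hn
    | succ d ih =>
      intro i hi hxi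
      have := hcon i (by omega) (by omega)
      rw [ih (i + 1) (by omega) (by omega)] at this
      simpa using this
  rw [h1 x le_rfl, h2 (n - x) (x + 1) (by omega) (by omega)] at h
  simp at h

theorem exists_row_mate {σ : Config L} {x y : ℕ} (hx : x ≤ L) (h : isDefect σ x y = true) :
    ∃ u ≤ L, u ≠ x ∧ isDefect σ u y = true := by
  obtain ⟨u, h1, h2, h3⟩ := exists_flip_of_ne (g := fun i => minusAt σ i y ^^ minusAt σ i (y + 1))
    hx (by simp [minusAt_eq_false]) (by simp [minusAt_eq_false]) (by
      rw [← h, isDefect]; generalize minusAt σ x y = m1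
      generalize minusAt σ _ _ = m2
      generalize minusAt σ _ _ = m3
      generalize minusAt σ _ _ = m4
      revert m1 m2 m3 m4; decide)
  refine ⟨u, h1, h2, ?_⟩
  rw [← h3, isDefect]; generalize minusAt σ u y = m1
  generalize minusAt σ _ _ = m2
  generalize minusAt σ _ _ = m3
  generalize minusAt σ _ _ = m4
  revert m1 m2 m3 m4; decide

theorem exists_col_mate {σ : Config L} {x y : ℕ} (hy : y ≤ L) (h : isDefect σ x y = true) :
    ∃ v ≤ L, v ≠ y ∧ isDefect σ x v = true := by
  obtain ⟨u, h1, h2, h3⟩ := exists_flip_of_ne (g := fun j => minusAt σ x j ^^ minusAt σ (x + 1) j)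
    hy (by simp [minusAt_eq_false]) (by simp [minusAt_eq_false]) h
  exact ⟨u, h1, h2, h3⟩

theorem minusAt_eq_of_isDefect_eq {σ τ : Config L}
    (h : ∀ i ≤ L, ∀ j ≤ L, isDefect σ i j = isDefect τ i j) (i j : ℕ) :
    minusAt σ i j = minusAt τ i j := by
  induction i generalizing j with
  | zero => simp [minusAt_eq_false]
  | succ i ihi =>
    induction j with
    | zero => simp [minusAt_eq_false]
    | succ j ihj =>
      by_cases hL : i ≤ L ∧ j ≤ L
      · have := h i hL.1 j hL.2
        unfold isDefect at this
        rw [ihi, ihi, ihj] at this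
        simpa using this
      · rw [minusAt_eq_false (by omega), minusAt_eq_false (by omega)]

theorem eq_of_isDefect_eq {σ τ : Config L}
    (h : ∀ i ≤ L, ∀ j ≤ L, isDefect σ i j = isDefect τ i j) : σ = τ := by
  funext k
  have := minusAt_eq_of_isDefect_eq h (k.1 + 1) (k.2 + 1)
  rw [minusAt_succ, minusAt_succ] at this
  simpa using this

theorem isDefect_allPlus (i j : ℕ) : isDefect (allPlus L) i j = false := by
  have : ∀ i j, minusAt (allPlus L) i j = false := by
    intro i j; simp [minusAt, allPlus]
  simp [isDefect, this]

theorem energy_allPlus : energy (allPlus L) = 0 := by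
  simp [energy_eq_sum, isDefect_allPlus]

theorem eq_allPlus_of_energy_eq_zero {σ : Config L} (h : energy σ = 0) : σ = allPlus L := by
  refine eq_of_isDefect_eq fun i hi j hj => ?_
  rw [isDefect_allPlus]
  by_contra hne
  have : (i, j) ∈ defectSet σ := mem_defectSet.2 ⟨⟨hi, hj⟩, by simpa using hne⟩
  rw [energy, Finset.card_eq_zero] at h
  rw [h] at this
  simp at this

theorem exists_defect_of_ne_allPlus {σ : Config L} (h : σ ≠ allPlus L) :
    ∃ z, z ∈ defectSet σ := by
  by_contra hcon
  push Not at hcon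
  exact h (eq_allPlus_of_energy_eq_zero
    (Finset.card_eq_zero.2 (Finset.eq_empty_of_forall_notMem hcon)))

theorem four_le_energy {σ : Config L} (h : σ ≠ allPlus L) : 4 ≤ energy σ := by
  obtain ⟨⟨x, y⟩, hz⟩ := exists_defect_of_ne_allPlus h
  obtain ⟨⟨hx, hy⟩, hd⟩ := mem_defectSet.1 hz
  simp only at hx hy hd
  obtain ⟨u, hu, hux, hud⟩ := exists_row_mate hx hd
  obtain ⟨v, hv, hvy, hvd⟩ := exists_col_mate hy hd
  obtain ⟨w, hw, hwy, hwd⟩ := exists_col_mate hy hud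
  have hsub : ({(x, y), (u, y), (x, v), (u, w)} : Finset (ℕ × ℕ)) ⊆ defectSet σ := by
    intro z hz
    simp only [Finset.mem_insert, Finset.mem_singleton] at hz
    rw [mem_defectSet]
    rcases hz with rfl | rfl | rfl | rfl
    · exact ⟨⟨hx, hy⟩, hd⟩
    · exact ⟨⟨hu, hy⟩, hud⟩
    · exact ⟨⟨hx, hv⟩, hvd⟩
    · exact ⟨⟨hu, hw⟩, hwd⟩
  have hcard : ({(x, y), (u, y), (x, v), (u, w)} : Finset (ℕ × ℕ)).card = 4 := by
    rw [Finset.card_insert_of_notMem, Finset.card_insert_of_notMem, Finset.card_insert_of_notMem,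
      Finset.card_singleton] <;>
      simp only [Finset.mem_insert, Finset.mem_singleton, Prod.mk.injEq] <;> omega
  exact hcard ▸ Finset.card_le_card hsub

theorem energy_le (σ : Config L) : energy σ ≤ (L + 1) ^ 2 := by
  refine (Finset.card_filter_le _ _).trans ?_
  simp [grid, sq]

theorem spinAt_natCast (σ : Config L) (i j : ℕ) :
    spinAt L σ ((i : ℤ), (j : ℤ)) = if minusAt σ i j = true then -1 else 1 := by
  unfold spinAt minusAt
  simp only [decide_eq_true_eq]
  refine if_congr (exists_congr fun k => ?_) rfl rfl
  rw [Prod.mk.injEq, and_assoc]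
  constructor
  · rintro ⟨h1, h2, h3⟩; exact ⟨by exact_mod_cast h1, by exact_mod_cast h2, h3⟩
  · rintro ⟨h1, h2, h3⟩; exact ⟨by exact_mod_cast h1, by exact_mod_cast h2, h3⟩

theorem plaq_natCast (σ : Config L) (i j : ℕ) :
    plaq L σ ((i : ℤ), (j : ℤ)) = 1 - 2 * ((isDefect σ i j).toNat : ℝ) := by
  have h1 := spinAt_natCast σ i j
  have h2 := spinAt_natCast σ (i + 1) j
  have h3 := spinAt_natCast σ i (j + 1)
  have h4 := spinAt_natCast σ (i + 1) (j + 1)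
  push_cast at h2 h3 h4
  unfold plaq isDefect
  rw [h1, h2, h3, h4]
  cases minusAt σ i j <;> cases minusAt σ (i + 1) j <;> cases minusAt σ i (j + 1) <;>
    cases minusAt σ (i + 1) (j + 1) <;> norm_num

theorem plaqSet_eq_image (L : ℕ) :
    plaqSet L = (grid L).image fun z => ((z.1 : ℤ), (z.2 : ℤ)) := by
  ext ⟨a, b⟩
  simp only [plaqSet, grid, Finset.mem_product, Finset.mem_Icc, Finset.mem_image, Finset.mem_range,
    Prod.mk.injEq, Prod.exists]
  constructor
  · rintro ⟨⟨h1, h2⟩, h3, h4⟩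
    exact ⟨a.toNat, b.toNat, by omega, by omega, by omega⟩
  · rintro ⟨i, j, h, h1, h2⟩; omega

theorem ham_eq (σ : Config L) :
    ham L σ = -((L + 1 : ℝ) ^ 2 / 2) + energy σ := by
  unfold ham
  rw [plaqSet_eq_image, Finset.sum_image (by
    rintro ⟨a, b⟩ _ ⟨c, d⟩ _ h
    simpa using h)]
  rw [Finset.sum_congr rfl fun z _ => plaq_natCast σ z.1 z.2, Finset.sum_sub_distrib,
    ← Finset.mul_sum, energy_eq_sum]
  simp [grid]
  ring

/-- The partition function normalised so that the ground state has weight one. -/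
def partitionFn (L : ℕ) (β : ℝ) : ℝ := ∑ σ : Config L, Real.exp (-β * energy σ)

theorem one_le_partitionFn (L : ℕ) (β : ℝ) : 1 ≤ partitionFn L β := by
  unfold partitionFn
  refine le_trans ?_ (Finset.single_le_sum (fun σ _ => (Real.exp_pos _).le)
    (Finset.mem_univ (allPlus L)))
  simp [energy_allPlus]

theorem partitionFn_pos (L : ℕ) (β : ℝ) : 0 < partitionFn L β :=
  zero_lt_one.trans_le (one_le_partitionFn L β)

theorem gibbs_eq (β : ℝ) (σ : Config L) :
    gibbs L β σ = Real.exp (-β * energy σ) / partitionFn L β := by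
  have h : ∀ η : Config L, Real.exp (-β * ham L η) =
      Real.exp (β * ((L + 1 : ℝ) ^ 2 / 2)) * Real.exp (-β * energy η) := by
    intro η; rw [ham_eq, ← Real.exp_add]; congr 1; ring
  unfold gibbs partitionFn
  simp only [h]
  rw [← Finset.mul_sum, mul_div_mul_left _ _ (Real.exp_pos _).ne']

theorem gibbs_pos (β : ℝ) (σ : Config L) : 0 < gibbs L β σ := by
  rw [gibbs_eq]; exact div_pos (Real.exp_pos _) (partitionFn_pos _ _)

theorem sum_gibbs (L : ℕ) (β : ℝ) : ∑ σ : Config L, gibbs L β σ = 1 := by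
  simp only [gibbs_eq]
  rw [← Finset.sum_div]
  exact div_self (ne_of_gt (partitionFn_pos L β))

/-- Gibbs weights of two configurations whose energies differ by `d`. -/
theorem gibbs_eq_mul_of_energy {β : ℝ} {σ τ : Config L} {d : ℝ} (h : (energy σ : ℝ) = energy τ + d) :
    gibbs L β σ = Real.exp (-β * d) * gibbs L β τ := by
  rw [gibbs_eq, gibbs_eq, h, mul_add, Real.exp_add]; ring

theorem gibbs_le_of_energy_le {β : ℝ} (hβ : 0 ≤ β) {σ τ : Config L} (h : energy τ ≤ energy σ) :
    gibbs L β σ ≤ gibbs L β τ := by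
  rw [gibbs_eq, gibbs_eq]
  refine div_le_div_of_nonneg_right (Real.exp_le_exp.2 ?_) (partitionFn_pos _ _).le
  have : (energy τ : ℝ) ≤ energy σ := by exact_mod_cast h
  nlinarith

theorem gibbs_mul_metroRate (β : ℝ) (σ η : Config L) :
    gibbs L β σ * metroRate L β σ η = min (gibbs L β σ) (gibbs L β η) := by
  unfold metroRate
  rw [mul_min_of_nonneg _ _ (gibbs_pos β σ).le, mul_one]
  congr 1
  rw [gibbs_eq, gibbs_eq, div_mul_eq_mul_div, ← Real.exp_add, ham_eq, ham_eq]
  congr 2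
  ring

theorem gen_of_ne (β : ℝ) {σ η : Config L} (h : η ≠ σ) :
    gen L β σ η = ∑ x : Fin L × Fin L, if η = flip L σ x then metroRate L β σ (flip L σ x) else 0 :=
  if_neg h

theorem gibbs_mul_gen_of_ne (β : ℝ) {σ η : Config L} (h : η ≠ σ) :
    gibbs L β σ * gen L β σ η =
      ∑ x : Fin L × Fin L, if η = flip L σ x then min (gibbs L β σ) (gibbs L β η) else 0 := by
  rw [gen_of_ne β h, Finset.mul_sum]
  refine Finset.sum_congr rfl fun x _ => ?_
  by_cases hx : η = flip L σ x
  · rw [if_pos hx, if_pos hx, ← hx, gibbs_mul_metroRate]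
  · rw [if_neg hx, if_neg hx, mul_zero]

theorem eq_flip_comm {σ η : Config L} {x : Fin L × Fin L} : η = flip L σ x ↔ σ = flip L η x := by
  constructor <;> rintro rfl <;> rw [flip_flip]

theorem isReversibleGenerator_gen (L : ℕ) (β : ℝ) :
    IsReversibleGenerator (gen L β) (gibbs L β) where
  pos := gibbs_pos β
  sum_one := sum_gibbs L β
  row_sum σ := by
    rw [← Finset.sum_erase_add _ _ (Finset.mem_univ σ)]
    have h1 : ∀ η ∈ Finset.univ.erase σ, gen L β σ η = ∑ x : Fin L × Fin L,
        if η = flip L σ x then metroRate L β σ (flip L σ x) else 0 :=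
      fun η hη => gen_of_ne β (Finset.ne_of_mem_erase hη)
    rw [Finset.sum_congr rfl h1, Finset.sum_comm]
    have h2 : gen L β σ σ = -(∑ x : Fin L × Fin L, metroRate L β σ (flip L σ x)) := if_pos rfl
    rw [h2, ← sub_eq_add_neg, sub_eq_zero]
    refine Finset.sum_congr rfl fun x _ => ?_
    rw [Finset.sum_ite_eq', if_pos (Finset.mem_erase.2 ⟨flip_ne σ x, Finset.mem_univ _⟩)]
  offDiag_nonneg σ η h := by
    rw [gen_of_ne β h.symm]
    refine Finset.sum_nonneg fun x _ => ?_
    split_ifs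
    · exact le_min zero_le_one (Real.exp_pos _).le
    · exact le_rfl
  balance σ η := by
    by_cases h : η = σ
    · rw [h]
    · rw [gibbs_mul_gen_of_ne β h, gibbs_mul_gen_of_ne β (Ne.symm h)]
      refine Finset.sum_congr rfl fun x _ => ?_
      rw [min_comm]
      exact if_congr eq_flip_comm rfl rfl

theorem dirichlet_gen (β : ℝ) (f : Config L → ℝ) :
    dirichlet (gen L β) (gibbs L β) f =
      (∑ σ : Config L, ∑ x : Fin L × Fin L,
        min (gibbs L β σ) (gibbs L β (flip L σ x)) * (f (flip L σ x) - f σ) ^ 2) / 2 := by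
  unfold dirichlet
  congr 1
  refine Finset.sum_congr rfl fun σ _ => ?_
  have h1 : ∀ η : Config L, gibbs L β σ * gen L β σ η * (f η - f σ) ^ 2 =
      ∑ x : Fin L × Fin L, if η = flip L σ x then
        min (gibbs L β σ) (gibbs L β η) * (f η - f σ) ^ 2 else 0 := by
    intro η
    by_cases h : η = σ
    · subst h
      rw [sub_self, zero_pow two_ne_zero, mul_zero]
      exact (Finset.sum_eq_zero fun x _ => by rw [mul_zero, ite_self]).symm
    · rw [gibbs_mul_gen_of_ne β h, Finset.sum_mul]
      refine Finset.sum_congr rfl fun x _ => ?_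
      rw [ite_mul, zero_mul]
  rw [Finset.sum_congr rfl fun η _ => h1 η, Finset.sum_comm]
  refine Finset.sum_congr rfl fun x _ => ?_
  rw [Finset.sum_ite_eq', if_pos (Finset.mem_univ _)]

/-- The configurations with exactly `m` defects. -/
def levelSet (L m : ℕ) : Finset (Config L) := Finset.univ.filter fun σ => energy σ = m

theorem mem_levelSet {m : ℕ} {σ : Config L} : σ ∈ levelSet L m ↔ energy σ = m := by
  simp [levelSet]

theorem card_grid (L : ℕ) : (grid L).card = (L + 1) ^ 2 := by simp [grid, sq]

theorem card_levelSet_zero_le (L : ℕ) : (levelSet L 0).card ≤ 1 := by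
  refine Finset.card_le_one.2 fun σ hσ τ hτ => ?_
  rw [eq_allPlus_of_energy_eq_zero (mem_levelSet.1 hσ),
    eq_allPlus_of_energy_eq_zero (mem_levelSet.1 hτ)]

theorem levelSet_eq_empty {m : ℕ} (h1 : 1 ≤ m) (h3 : m ≤ 3) : levelSet L m = ∅ := by
  refine Finset.eq_empty_of_forall_notMem fun σ hσ => ?_
  rw [mem_levelSet] at hσ
  have : σ ≠ allPlus L := by
    rintro rfl; rw [energy_allPlus] at hσ; omega
  have := four_le_energy this
  omega

/-- Flipping the rectangle spanned by a defect, a row mate and a column mate removes two or four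
defects. -/
theorem exists_rectangle_reduction {σ : Config L} {z : ℕ × ℕ} (hz : z ∈ defectSet σ) :
    ∃ w ∈ grid L, (energy (flipRect σ z.1 w.1 z.2 w.2) + 2 = energy σ ∧
        w ∈ defectSet (flipRect σ z.1 w.1 z.2 w.2)) ∨
      energy (flipRect σ z.1 w.1 z.2 w.2) + 4 = energy σ := by
  obtain ⟨⟨hx, hy⟩, hd⟩ := mem_defectSet.1 hz
  obtain ⟨u, hu, hux, hud⟩ := exists_row_mate hx hd
  obtain ⟨v, hv, hvy, hvd⟩ := exists_col_mate hy hd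
  have hE := energy_flipRect σ hx hu hy hv hux.symm hvy.symm
  rw [hd, hud, hvd] at hE
  refine ⟨(u, v), mem_grid.2 ⟨hu, hv⟩, ?_⟩
  cases huv : isDefect σ u v
  · left
    rw [huv] at hE
    simp only [Bool.toNat_true, Bool.toNat_false] at hE
    refine ⟨by simp only; omega, mem_defectSet.2 ⟨⟨hu, hv⟩, ?_⟩⟩
    rw [isDefect_flipRect σ hx hu hy hv, huv]
    simp [hux, hvy]
  · right
    rw [huv] at hE
    simp only [Bool.toNat_true] at hE
    simp only; omega

theorem card_levelSet_recursion (L m : ℕ) :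
    (m + 4) * (levelSet L (m + 4)).card ≤
      (L + 1) ^ 2 * (m + 2) * (levelSet L (m + 2)).card + (L + 1) ^ 4 * (levelSet L m).card := by
  let P : Finset (Config L × (ℕ × ℕ)) :=
    (levelSet L (m + 4) ×ˢ grid L).filter fun p => p.2 ∈ defectSet p.1
  let T₁ : Finset (Config L × (ℕ × ℕ) × (ℕ × ℕ)) :=
    (levelSet L (m + 2) ×ˢ grid L ×ˢ grid L).filter fun p => p.2.2 ∈ defectSet p.1
  let T₂ : Finset (Config L × (ℕ × ℕ) × (ℕ × ℕ)) := levelSet L m ×ˢ grid L ×ˢ grid L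
  have hfil : ∀ σ : Config L, (grid L).filter (fun z => z ∈ defectSet σ) = defectSet σ := by
    intro σ
    rw [Finset.filter_mem_eq_inter, Finset.inter_eq_right]
    exact Finset.filter_subset _ _
  have hP : P.card = (m + 4) * (levelSet L (m + 4)).card := by
    simp only [P, Finset.card_filter, Finset.sum_product]
    rw [Finset.sum_congr rfl fun σ hσ => ?_, Finset.sum_const, smul_eq_mul, mul_comm]
    rw [← Finset.card_filter, hfil]
    exact mem_levelSet.1 hσ
  have hT₁ : T₁.card = (L + 1) ^ 2 * (m + 2) * (levelSet L (m + 2)).card := by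
    simp only [T₁, Finset.card_filter, Finset.sum_product]
    rw [Finset.sum_congr rfl fun σ hσ => ?_, Finset.sum_const, smul_eq_mul, mul_comm]
    rw [Finset.sum_congr rfl fun z _ => ?_, Finset.sum_const, smul_eq_mul, card_grid]
    rw [← Finset.card_filter, hfil]
    exact mem_levelSet.1 hσ
  have hT₂ : T₂.card = (L + 1) ^ 4 * (levelSet L m).card := by
    simp only [T₂, Finset.card_product, card_grid]; ring
  rw [← hP, ← hT₁, ← hT₂]
  have hex : ∀ p : Config L × (ℕ × ℕ), ∃ w : ℕ × ℕ, p ∈ P →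
      (flipRect p.1 p.2.1 w.1 p.2.2 w.2, p.2, w) ∈ T₁ ∪ T₂ := by
    intro p
    by_cases hp : p ∈ P
    · obtain ⟨h1, h2⟩ := Finset.mem_filter.1 hp
      obtain ⟨h3, h4⟩ := Finset.mem_product.1 h1
      rw [mem_levelSet] at h3
      obtain ⟨w, hw, h | h⟩ := exists_rectangle_reduction h2
      · refine ⟨w, fun _ => Finset.mem_union_left _ (Finset.mem_filter.2 ⟨?_, h.2⟩)⟩
        exact Finset.mem_product.2 ⟨mem_levelSet.2 (by simp only; omega),
          Finset.mem_product.2 ⟨h4, hw⟩⟩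
      · refine ⟨w, fun _ => Finset.mem_union_right _ ?_⟩
        exact Finset.mem_product.2 ⟨mem_levelSet.2 (by simp only; omega),
          Finset.mem_product.2 ⟨h4, hw⟩⟩
    · exact ⟨(0, 0), fun h => absurd h hp⟩
  choose w hw using hex
  refine (Finset.card_le_card_of_injOn (fun p => (flipRect p.1 p.2.1 (w p).1 p.2.2 (w p).2, p.2, w p))
    (fun p hp => hw p hp) ?_).trans (Finset.card_union_le _ _)
  rintro p - p' - h
  simp only [Prod.mk.injEq] at h
  obtain ⟨h1, h2, h3⟩ := h
  refine Prod.ext ?_ h2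
  have := flipRect_flipRect p.1 p.2.1 (w p).1 p.2.2 (w p).2
  rw [h1, h2, h3, flipRect_flipRect] at this
  exact this.symm

theorem card_levelSet_le (L m : ℕ) : (levelSet L m).card ≤ (L + 1) ^ m := by
  induction m using Nat.strong_induction_on with
  | _ m ih =>
    rcases lt_or_ge m 4 with hm | hm
    · rcases Nat.eq_zero_or_pos m with rfl | h
      · simpa using card_levelSet_zero_le L
      · rw [levelSet_eq_empty h (by omega)]; simp
    · obtain ⟨k, rfl⟩ := Nat.exists_eq_add_of_le' hm
      have h1 := card_levelSet_recursion L k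
      have h2 := ih (k + 2) (by omega)
      have h3 := ih k (by omega)
      have h4 : (k + 4) * (levelSet L (k + 4)).card ≤ (k + 4) * (L + 1) ^ (k + 4) := by
        calc _ ≤ _ := h1
          _ ≤ (L + 1) ^ 2 * (k + 2) * (L + 1) ^ (k + 2) + (L + 1) ^ 4 * (L + 1) ^ k := by gcongr
          _ = (k + 3) * (L + 1) ^ (k + 4) := by ring
          _ ≤ _ := by gcongr; omega
      exact Nat.le_of_mul_le_mul_left h4 (by omega)

theorem levelSet_five_eq_empty (L : ℕ) : levelSet L 5 = ∅ := by
  have h := card_levelSet_recursion L 1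
  rw [levelSet_eq_empty (m := 3) (by norm_num) le_rfl,
    levelSet_eq_empty (m := 1) le_rfl (by norm_num)] at h
  rw [← Finset.card_eq_zero]
  simp at h
  simpa using h

theorem sum_energy_exp_le {β r : ℝ} (hr : r = (L + 1) * Real.exp (-β)) (hr4 : r ≤ 1 / 4) (k : ℕ) :
    ∑ σ ∈ (Finset.univ : Finset (Config L)).filter (fun σ => k ≤ energy σ),
      (energy σ : ℝ) * Real.exp (-β * energy σ) ≤ 2 * (2 * r) ^ k := by
  have hr0 : 0 ≤ r := by rw [hr]; positivity
  have hmaps : ∀ σ ∈ (Finset.univ : Finset (Config L)).filter (fun σ => k ≤ energy σ),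
      energy σ ∈ Finset.Ico k ((L + 1) ^ 2 + 1) := by
    intro σ hσ
    have := energy_le σ
    rw [Finset.mem_Ico]
    exact ⟨(Finset.mem_filter.1 hσ).2, by omega⟩
  rw [← Finset.sum_fiberwise_of_maps_to hmaps]
  calc _ ≤ ∑ m ∈ Finset.Ico k ((L + 1) ^ 2 + 1), (2 * r) ^ m := by
        refine Finset.sum_le_sum fun m _ => ?_
        calc _ ≤ ∑ σ ∈ levelSet L m, (m : ℝ) * Real.exp (-β * m) := by
              have hc : ∀ σ ∈ levelSet L m, (m : ℝ) * Real.exp (-β * m) =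
                (energy σ : ℝ) * Real.exp (-β * energy σ) := by
                  intro σ hσ; rw [mem_levelSet.1 hσ]
              rw [Finset.sum_congr rfl hc]
              refine Finset.sum_le_sum_of_subset_of_nonneg ?_ fun σ _ _ => by positivity
              intro σ hσ
              exact mem_levelSet.2 (Finset.mem_filter.1 hσ).2
          _ = (levelSet L m).card * ((m : ℝ) * Real.exp (-β * m)) := by
              rw [Finset.sum_const, nsmul_eq_mul]
          _ ≤ ((L + 1 : ℝ) ^ m) * ((2 : ℝ) ^ m * Real.exp (-β * m)) := by
              have h1 : ((levelSet L m).card : ℝ) ≤ (L + 1 : ℝ) ^ m := by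
                exact_mod_cast card_levelSet_le L m
              have h2 : (m : ℝ) ≤ 2 ^ m := by exact_mod_cast Nat.lt_two_pow_self.le
              gcongr
          _ = (2 * r) ^ m := by
              rw [hr, mul_comm (-β), Real.exp_nat_mul, mul_pow, mul_pow]; ring
    _ ≤ (2 * r) ^ k / (1 - 2 * r) := geom_sum_Ico_le_of_lt_one (by linarith) (by linarith)
    _ ≤ _ := by
        rw [div_le_iff₀ (by linarith)]
        nlinarith [pow_nonneg (mul_nonneg zero_le_two hr0) k]

theorem partitionFn_le_two {β : ℝ} (hr4 : (L + 1) * Real.exp (-β) ≤ 1 / 4) :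
    partitionFn L β ≤ 2 := by
  unfold partitionFn
  have h := sum_energy_exp_le (L := L) rfl hr4 1
  have h0 : ∑ σ ∈ (Finset.univ : Finset (Config L)).filter (fun σ => ¬ 1 ≤ energy σ),
      Real.exp (-β * energy σ) ≤ 1 := by
    calc _ ≤ ∑ σ ∈ {allPlus L}, Real.exp (-β * energy σ) := by
          refine Finset.sum_le_sum_of_subset_of_nonneg ?_ fun σ _ _ => (Real.exp_pos _).le
          intro σ hσ
          rw [Finset.mem_singleton]
          exact eq_allPlus_of_energy_eq_zero (by have := (Finset.mem_filter.1 hσ).2; omega)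
      _ = 1 := by simp [energy_allPlus]
  have h1 : ∑ σ ∈ (Finset.univ : Finset (Config L)).filter (fun σ => 1 ≤ energy σ),
      Real.exp (-β * energy σ) ≤ ∑ σ ∈ (Finset.univ : Finset (Config L)).filter
        (fun σ => 1 ≤ energy σ), (energy σ : ℝ) * Real.exp (-β * energy σ) := by
    refine Finset.sum_le_sum fun σ hσ => ?_
    have : (1 : ℝ) ≤ energy σ := by exact_mod_cast (Finset.mem_filter.1 hσ).2
    nlinarith [Real.exp_pos (-β * energy σ)]
  rw [← Finset.sum_filter_add_sum_filter_not _ (fun σ => 1 ≤ energy σ)]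
  linarith

theorem sum_le_of_hardy_recursion {n : ℕ} {A B : ℕ → ℝ} (hB : ∀ j, 0 ≤ B j) (h0 : A 0 ≤ B 0)
    (hA : ∀ j, A (j + 1) ≤ (1 + 1 / n) * A j + B (j + 1)) :
    ∑ j ∈ Finset.range n, A j ≤ 3 * n * ∑ j ∈ Finset.range n, B j := by
  have hc : (1 : ℝ) ≤ 1 + 1 / n := by
    have : (0 : ℝ) ≤ 1 / n := by positivity
    linarith
  have h1 : ∀ j, A j ≤ (1 + 1 / n) ^ j * ∑ i ∈ Finset.range (j + 1), B i := by
    intro j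
    induction j with
    | zero => simpa using h0
    | succ j ih =>
      rw [Finset.sum_range_succ]
      calc _ ≤ _ := hA j
        _ ≤ (1 + 1 / n) * ((1 + 1 / n) ^ j * ∑ i ∈ Finset.range (j + 1), B i) +
            (1 + 1 / n) ^ (j + 1) * B (j + 1) := by
          refine add_le_add (mul_le_mul_of_nonneg_left ih (by linarith)) ?_
          exact le_mul_of_one_le_left (hB _) (one_le_pow₀ hc)
        _ = _ := by ring
  have h2 : ∀ j ∈ Finset.range n, A j ≤ 3 * ∑ i ∈ Finset.range n, B i := by
    intro j hj
    have hj' := Finset.mem_range.1 hj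
    have hn : (n : ℝ) ≠ 0 := by
      have : 0 < n := by omega
      positivity
    refine (h1 j).trans (mul_le_mul ?_ ?_ (Finset.sum_nonneg fun i _ => hB i) (by norm_num))
    · calc (1 + 1 / (n : ℝ)) ^ j ≤ (1 + 1 / n) ^ n := pow_le_pow_right₀ hc hj'.le
        _ ≤ (Real.exp (1 / n)) ^ n := by
            refine pow_le_pow_left₀ (by linarith) ?_ n
            linarith [Real.add_one_le_exp (1 / (n : ℝ))]
        _ = Real.exp 1 := by rw [← Real.exp_nat_mul, mul_one_div_cancel hn]
        _ ≤ 3 := by linarith [Real.exp_one_lt_d9]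
    · refine Finset.sum_le_sum_of_subset_of_nonneg ?_ fun i _ _ => hB i
      exact Finset.range_subset_range.2 (by omega)
  calc _ ≤ ∑ j ∈ Finset.range n, 3 * ∑ i ∈ Finset.range n, B i := Finset.sum_le_sum h2
    _ = _ := by rw [Finset.sum_const, Finset.card_range, nsmul_eq_mul]; ring

/-- The number of defects in column `i` within the strip of rows `y`, `y + 1`. -/
def occ (σ : Config L) (y i : ℕ) : ℕ := (isDefect σ i y).toNat + (isDefect σ i (y + 1)).toNat

theorem occ_le_two (σ : Config L) (y i : ℕ) : occ σ y i ≤ 2 := by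
  unfold occ
  cases isDefect σ i y <;> cases isDefect σ i (y + 1) <;> simp

/-- Flip the spins of row `y` between the columns `a` and `u`. -/
def flipRow (σ : Config L) (y a u : ℕ) : Config L := flipRect σ a u y (y + 1)

theorem flipRow_self (σ : Config L) (y a : ℕ) : flipRow σ y a a = σ := flipRect_self _ _ _ _

theorem flipRow_comm (σ : Config L) (y a u : ℕ) : flipRow σ y a u = flipRow σ y u a :=
  flipRect_comm_left _ _ _ _ _

theorem flipRow_flipRow (σ : Config L) (y a u : ℕ) : flipRow (flipRow σ y a u) y a u = σ :=
  flipRect_flipRect _ _ _ _ _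

/-- `flipRow` as a permutation of the configurations. -/
def flipRowEquiv (L y a u : ℕ) : Config L ≃ Config L where
  toFun σ := flipRow σ y a u
  invFun σ := flipRow σ y a u
  left_inv σ := flipRow_flipRow σ y a u
  right_inv σ := flipRow_flipRow σ y a u

theorem sum_flipRow (y a u : ℕ) (F : Config L → ℝ) :
    ∑ σ, F σ = ∑ σ, F (flipRow σ y a u) :=
  (Equiv.sum_comp (flipRowEquiv L y a u) F).symm

theorem isDefect_flipRow (σ : Config L) {y a u : ℕ} (hy : y < L) (ha : a ≤ L) (hu : u ≤ L)
    (i j : ℕ) :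
    isDefect (flipRow σ y a u) i j = (isDefect σ i j ^^
      ((decide (i = a) ^^ decide (i = u)) && (decide (j = y) ^^ decide (j = y + 1)))) :=
  isDefect_flipRect σ ha hu hy.le hy i j

theorem energy_flipRow (σ : Config L) {y a u : ℕ} (hy : y < L) (ha : a ≤ L) (hu : u ≤ L)
    (hau : a ≠ u) :
    energy (flipRow σ y a u) + 2 * (occ σ y a + occ σ y u) = energy σ + 4 := by
  have := energy_flipRect σ ha hu hy.le hy hau (Nat.lt_succ_self y).ne
  rw [Nat.succ_eq_add_one] at this
  unfold occ flipRow
  omega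

theorem occ_flipRow_of_ne (σ : Config L) {y a u i : ℕ} (hy : y < L) (ha : a ≤ L) (hu : u ≤ L)
    (hia : i ≠ a) (hiu : i ≠ u) : occ (flipRow σ y a u) y i = occ σ y i := by
  unfold occ
  rw [isDefect_flipRow σ hy ha hu, isDefect_flipRow σ hy ha hu]
  simp [hia, hiu]

theorem occ_flipRow_left (σ : Config L) {y a u : ℕ} (hy : y < L) (ha : a ≤ L) (hu : u ≤ L)
    (hau : a ≠ u) : occ (flipRow σ y a u) y a + occ σ y a = 2 := by
  unfold occ
  rw [isDefect_flipRow σ hy ha hu, isDefect_flipRow σ hy ha hu]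
  cases isDefect σ a y <;> cases isDefect σ a (y + 1) <;> simp [hau]

theorem occ_flipRow_right (σ : Config L) {y a u : ℕ} (hy : y < L) (ha : a ≤ L) (hu : u ≤ L)
    (hau : a ≠ u) : occ (flipRow σ y a u) y u + occ σ y u = 2 := by
  rw [flipRow_comm]
  exact occ_flipRow_left σ hy hu ha hau.symm

/-- Column `a` is occupied in the strip at `y` and the columns in `(a, k]` are empty. -/
def RunsTo (σ : Config L) (y a k : ℕ) : Prop :=
  a ≤ k ∧ 0 < occ σ y a ∧ ∀ j, a < j → j ≤ k → occ σ y j = 0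

/-- `a < u` are consecutive occupied columns in the strip at `y`. -/
def Consec (σ : Config L) (y a u : ℕ) : Prop :=
  a < u ∧ u ≤ L ∧ 0 < occ σ y a ∧ 0 < occ σ y u ∧ ∀ k, a < k → k < u → occ σ y k = 0

theorem Consec.runsTo {σ : Config L} {y a u k : ℕ} (h : Consec σ y a u) (h1 : a ≤ k) (h2 : k < u) :
    RunsTo σ y a k := ⟨h1, h.2.2.1, fun j hj hjk => h.2.2.2.2 j hj (by omega)⟩

theorem Consec.unique {σ : Config L} {y a u u' : ℕ} (h : Consec σ y a u) (h' : Consec σ y a u') :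
    u = u' := by
  by_contra hne
  rcases lt_or_gt_of_ne hne with hlt | hlt
  · have := h'.2.2.2.2 u h.1 hlt
    have := h.2.2.2.1
    omega
  · have := h.2.2.2.2 u' h'.1 hlt
    have := h'.2.2.2.1
    omega

theorem energy_flipRow_le_of_runsTo {σ : Config L} {y a k : ℕ} (hy : y < L) (hk : k ≤ L)
    (h : RunsTo σ y a k) : energy (flipRow σ y a k) + 2 * occ σ y a ≤ energy σ + 4 := by
  rcases h.1.eq_or_lt with rfl | hlt
  · rw [flipRow_self]
    have := occ_le_two σ y a
    omega
  · have := energy_flipRow σ hy (h.1.trans hk) hk hlt.ne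
    omega

theorem energy_flipRow_succ_le {σ : Config L} {y a k : ℕ} (hy : y < L) (hk : k < L)
    (h : RunsTo σ y a k) : energy (flipRow σ y a (k + 1)) + 2 * occ σ y a ≤ energy σ + 4 := by
  have := energy_flipRow σ hy (h.1.trans hk.le) hk (by have := h.1; omega : a ≠ k + 1)
  rw [Nat.succ_eq_add_one] at this
  omega

/-- The weight lost along a run started from a column with `m` defects. -/
def runWeight (β : ℝ) (m : ℕ) : ℝ := if m = 1 then Real.exp (2 * β) else 1

theorem runWeight_nonneg (β : ℝ) (m : ℕ) : 0 ≤ runWeight β m := by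
  unfold runWeight; split_ifs
  · exact (Real.exp_pos _).le
  · exact zero_le_one

theorem gibbs_le_runWeight_mul {β : ℝ} (hβ : 0 ≤ β) {σ τ : Config L} {m : ℕ} (hm : 0 < m)
    (hm2 : m ≤ 2) (h : energy τ + 2 * m ≤ energy σ + 4) :
    gibbs L β σ ≤ runWeight β m * gibbs L β τ := by
  have hm' : m = 1 ∨ m = 2 := by omega
  rcases hm' with rfl | rfl
  · rw [runWeight, if_pos rfl, gibbs_eq_mul_of_energy (τ := τ) (d := energy σ - energy τ) (by ring)]
    refine mul_le_mul_of_nonneg_right (Real.exp_le_exp.2 ?_) (gibbs_pos β τ).le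
    have : (energy τ : ℝ) + 2 * 1 ≤ energy σ + 4 := by exact_mod_cast h
    nlinarith
  · rw [runWeight, if_neg (by norm_num), one_mul]
    exact gibbs_le_of_energy_le hβ (by omega)

/-- The contribution of the edge `ξ ↔ ξˣ`, `x = (k, y)`, to the Dirichlet form. -/
def edgeTerm (β : ℝ) (f : Config L → ℝ) (y k : ℕ) (ξ : Config L) : ℝ :=
  min (gibbs L β ξ) (gibbs L β (flipRow ξ y k (k + 1))) * (f (flipRow ξ y k (k + 1)) - f ξ) ^ 2

theorem edgeTerm_nonneg (β : ℝ) (f : Config L → ℝ) (y k : ℕ) (ξ : Config L) :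
    0 ≤ edgeTerm β f y k ξ :=
  mul_nonneg (le_min (gibbs_pos β _).le (gibbs_pos β _).le) (sq_nonneg _)

theorem sum_edgeTerm (β : ℝ) (f : Config L → ℝ) :
    ∑ y ∈ Finset.range L, ∑ k ∈ Finset.range L, ∑ ξ, edgeTerm β f y k ξ =
      2 * dirichlet (gen L β) (gibbs L β) f := by
  rw [dirichlet_gen, mul_div_cancel₀ _ two_ne_zero]
  rw [Finset.sum_comm (s := (Finset.univ : Finset (Config L))), Fintype.sum_prod_type_right,
    Finset.sum_range]
  refine Finset.sum_congr rfl fun y _ => ?_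
  rw [Finset.sum_range]
  refine Finset.sum_congr rfl fun k _ => Finset.sum_congr rfl fun σ _ => ?_
  rw [flip_eq_flipRect]
  rfl

theorem flipRow_flipRow_succ (σ : Config L) (y a k : ℕ) :
    flipRow (flipRow σ y a k) y k (k + 1) = flipRow σ y a (k + 1) :=
  flipRect_flipRect_add σ a k (k + 1) y (y + 1)

theorem sq_sub_le_sum_run (f : Config L → ℝ) (σ : Config L) {y a u : ℕ} (hau : a < u) (hu : u ≤ L) :
    (f (flipRow σ y a u) - f σ) ^ 2 ≤
      L * ∑ k ∈ Finset.Ico a u, (f (flipRow σ y a (k + 1)) - f (flipRow σ y a k)) ^ 2 := by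
  have h1 : f (flipRow σ y a u) - f σ =
      ∑ k ∈ Finset.Ico a u, (f (flipRow σ y a (k + 1)) - f (flipRow σ y a k)) := by
    rw [Finset.sum_Ico_sub (fun k => f (flipRow σ y a k)) hau.le, flipRow_self]
  rw [h1]
  refine sq_sum_le_card_mul_sum_sq.trans (mul_le_mul_of_nonneg_right ?_
    (Finset.sum_nonneg fun _ _ => sq_nonneg _))
  rw [Nat.card_Ico]
  exact_mod_cast (by omega : u - a ≤ L)

theorem run_term_le {β : ℝ} (hβ : 0 ≤ β) (f : Config L → ℝ) {σ : Config L} {y a k : ℕ} (hy : y < L)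
    (hk : k < L) (h : RunsTo σ y a k) :
    gibbs L β σ * (f (flipRow σ y a (k + 1)) - f (flipRow σ y a k)) ^ 2 ≤
      runWeight β (occ σ y a) * edgeTerm β f y k (flipRow σ y a k) := by
  unfold edgeTerm
  rw [flipRow_flipRow_succ, ← mul_assoc]
  refine mul_le_mul_of_nonneg_right ?_ (sq_nonneg _)
  rw [mul_min_of_nonneg _ _ (runWeight_nonneg _ _)]
  exact le_min (gibbs_le_runWeight_mul hβ h.2.1 (occ_le_two σ y a)
      (energy_flipRow_le_of_runsTo hy hk.le h))
    (gibbs_le_runWeight_mul hβ h.2.1 (occ_le_two σ y a) (energy_flipRow_succ_le hy hk h))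

/-- Squared increments of `f` over the flips of maximal empty runs. -/
def runSum (β : ℝ) (f : Config L → ℝ) : ℝ :=
  ∑ y ∈ Finset.range L, ∑ a ∈ Finset.range (L + 1), ∑ u ∈ Finset.range (L + 1), ∑ σ : Config L,
    if Consec σ y a u then gibbs L β σ * (f (flipRow σ y a u) - f σ) ^ 2 else 0

theorem sum_consec_le {β : ℝ} (hβ : 0 ≤ β) (f : Config L → ℝ) (σ : Config L) {y a : ℕ} (hy : y < L) :
    (∑ u ∈ Finset.range (L + 1),
      if Consec σ y a u then gibbs L β σ * (f (flipRow σ y a u) - f σ) ^ 2 else 0) ≤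
    L * ∑ k ∈ Finset.range L, if RunsTo σ y a k then
      runWeight β (occ σ y a) * edgeTerm β f y k (flipRow σ y a k) else 0 := by
  have hnn : ∀ k, 0 ≤ (if RunsTo σ y a k then
      runWeight β (occ σ y a) * edgeTerm β f y k (flipRow σ y a k) else 0) := by
    intro k; split_ifs
    · exact mul_nonneg (runWeight_nonneg _ _) (edgeTerm_nonneg _ _ _ _ _)
    · exact le_rfl
  by_cases hex : ∃ u, Consec σ y a u
  · obtain ⟨u, hu⟩ := hex
    rw [Finset.sum_eq_single u, if_pos hu]
    · calc _ ≤ gibbs L β σ * (L * ∑ k ∈ Finset.Ico a u,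
            (f (flipRow σ y a (k + 1)) - f (flipRow σ y a k)) ^ 2) :=
          mul_le_mul_of_nonneg_left (sq_sub_le_sum_run f σ hu.1 hu.2.1) (gibbs_pos β σ).le
        _ = L * ∑ k ∈ Finset.Ico a u, gibbs L β σ *
            (f (flipRow σ y a (k + 1)) - f (flipRow σ y a k)) ^ 2 := by
          rw [Finset.mul_sum, Finset.mul_sum, Finset.mul_sum]
          exact Finset.sum_congr rfl fun k _ => by ring
        _ ≤ L * ∑ k ∈ Finset.Ico a u, if RunsTo σ y a k then
            runWeight β (occ σ y a) * edgeTerm β f y k (flipRow σ y a k) else 0 := by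
          refine mul_le_mul_of_nonneg_left (Finset.sum_le_sum fun k hk => ?_) (Nat.cast_nonneg L)
          rw [Finset.mem_Ico] at hk
          have hr := hu.runsTo hk.1 hk.2
          rw [if_pos hr]
          exact run_term_le hβ f hy (by have := hu.2.1; omega) hr
        _ ≤ _ := by
          refine mul_le_mul_of_nonneg_left (Finset.sum_le_sum_of_subset_of_nonneg ?_
            fun k _ _ => hnn k) (Nat.cast_nonneg L)
          intro k hk
          rw [Finset.mem_Ico] at hk
          rw [Finset.mem_range]
          have := hu.2.1
          omega
    · intro u' _ hne
      rw [if_neg fun h => hne (h.unique hu)]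
    · intro h
      exact absurd (Finset.mem_range.2 (by have := hu.2.1; omega)) h
  · push Not at hex
    rw [Finset.sum_eq_zero fun u _ => if_neg (hex u)]
    exact mul_nonneg (Nat.cast_nonneg L) (Finset.sum_nonneg fun k _ => hnn k)

theorem runsTo_start_unique {ξ : Config L} {y a a' k : ℕ} (hy : y < L) (hk : k < L)
    (h : RunsTo (flipRow ξ y a k) y a k) (h1 : occ (flipRow ξ y a k) y a = 1)
    (h' : RunsTo (flipRow ξ y a' k) y a' k) (h1' : occ (flipRow ξ y a' k) y a' = 1) : a = a' := by
  have hlt : ∀ b c, b < c → c ≤ k → RunsTo (flipRow ξ y b k) y b k →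
      occ (flipRow ξ y b k) y b = 1 → occ (flipRow ξ y c k) y c = 1 → False := by
    intro b c hbc hck hr hb hc
    have hbk : b ≠ k := by omega
    rcases hck.eq_or_lt with rfl | hck'
    · rw [flipRow_self] at hc
      have e1 := occ_flipRow_right ξ hy (by omega : b ≤ L) hk.le hbk
      have e2 := hr.2.2 c hbc le_rfl
      omega
    · have e1 := occ_flipRow_of_ne ξ hy (by omega : b ≤ L) hk.le (by omega : c ≠ b) hck'.ne
      have e2 := hr.2.2 c hbc hck
      have e3 := occ_flipRow_left ξ hy (by omega : c ≤ L) hk.le hck'.ne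
      omega
  rcases lt_trichotomy a a' with hl | hl | hl
  · exact (hlt a a' hl h'.1 h h1 h1').elim
  · exact hl
  · exact (hlt a' a hl h.1 h' h1' h1).elim

theorem sum_runWeight_le {β : ℝ} (ξ : Config L) {y k : ℕ} (hy : y < L) (hk : k < L) :
    (∑ a ∈ Finset.range (L + 1), if RunsTo (flipRow ξ y a k) y a k then
      runWeight β (occ (flipRow ξ y a k) y a) else 0) ≤ Real.exp (2 * β) + (L + 1) := by
  have h1 : ∀ a ∈ Finset.range (L + 1), (if RunsTo (flipRow ξ y a k) y a k then
      runWeight β (occ (flipRow ξ y a k) y a) else 0) ≤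
      (if RunsTo (flipRow ξ y a k) y a k ∧ occ (flipRow ξ y a k) y a = 1 then Real.exp (2 * β)
        else 0) + 1 := by
    intro a _
    have := Real.exp_pos (2 * β)
    unfold runWeight
    split_ifs <;> first | linarith | tauto
  refine (Finset.sum_le_sum h1).trans ?_
  rw [Finset.sum_add_distrib]
  refine add_le_add ?_ (by simp)
  rw [← Finset.sum_filter, Finset.sum_const, nsmul_eq_mul]
  refine mul_le_of_le_one_left (Real.exp_pos _).le ?_
  have : ((Finset.range (L + 1)).filter fun a => RunsTo (flipRow ξ y a k) y a k ∧
      occ (flipRow ξ y a k) y a = 1).card ≤ 1 := by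
    refine Finset.card_le_one.2 fun a ha a' ha' => ?_
    have h2 := (Finset.mem_filter.1 ha).2
    have h3 := (Finset.mem_filter.1 ha').2
    exact runsTo_start_unique hy hk h2.1 h2.2 h3.1 h3.2
  exact_mod_cast this

theorem runSum_le {β : ℝ} (hβ : 0 ≤ β) (f : Config L → ℝ) :
    runSum β f ≤ L * (Real.exp (2 * β) + (L + 1)) * (2 * dirichlet (gen L β) (gibbs L β) f) := by
  rw [← sum_edgeTerm, runSum, Finset.mul_sum]
  refine Finset.sum_le_sum fun y hy => ?_
  rw [Finset.mem_range] at hy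
  calc _ = ∑ a ∈ Finset.range (L + 1), ∑ σ : Config L, ∑ u ∈ Finset.range (L + 1),
        (if Consec σ y a u then gibbs L β σ * (f (flipRow σ y a u) - f σ) ^ 2 else 0) :=
        Finset.sum_congr rfl fun a _ => Finset.sum_comm
    _ ≤ ∑ a ∈ Finset.range (L + 1), ∑ σ : Config L, L * ∑ k ∈ Finset.range L,
        (if RunsTo σ y a k then
          runWeight β (occ σ y a) * edgeTerm β f y k (flipRow σ y a k) else 0) :=
        Finset.sum_le_sum fun a _ => Finset.sum_le_sum fun σ _ => sum_consec_le hβ f σ hy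
    _ = L * ∑ a ∈ Finset.range (L + 1), ∑ k ∈ Finset.range L, ∑ σ : Config L,
        (if RunsTo σ y a k then
          runWeight β (occ σ y a) * edgeTerm β f y k (flipRow σ y a k) else 0) := by
        rw [Finset.mul_sum]
        refine Finset.sum_congr rfl fun a _ => ?_
        rw [← Finset.mul_sum, Finset.sum_comm]
    _ = L * ∑ a ∈ Finset.range (L + 1), ∑ k ∈ Finset.range L, ∑ ξ : Config L,
        (if RunsTo (flipRow ξ y a k) y a k then
          runWeight β (occ (flipRow ξ y a k) y a) else 0) * edgeTerm β f y k ξ := by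
        congr 1
        refine Finset.sum_congr rfl fun a _ => Finset.sum_congr rfl fun k _ => ?_
        rw [sum_flipRow y a k]
        refine Finset.sum_congr rfl fun ξ _ => ?_
        rw [flipRow_flipRow, ite_mul, zero_mul]
    _ = L * ∑ k ∈ Finset.range L, ∑ ξ : Config L, (∑ a ∈ Finset.range (L + 1),
        (if RunsTo (flipRow ξ y a k) y a k then
          runWeight β (occ (flipRow ξ y a k) y a) else 0)) * edgeTerm β f y k ξ := by
        rw [Finset.sum_comm]
        congr 1
        refine Finset.sum_congr rfl fun k _ => ?_
        rw [Finset.sum_comm]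
        exact Finset.sum_congr rfl fun ξ _ => (Finset.sum_mul _ _ _).symm
    _ ≤ L * ∑ k ∈ Finset.range L, ∑ ξ : Config L,
        (Real.exp (2 * β) + (L + 1)) * edgeTerm β f y k ξ := by
        refine mul_le_mul_of_nonneg_left (Finset.sum_le_sum fun k hk => Finset.sum_le_sum
          fun ξ _ => ?_) (Nat.cast_nonneg L)
        exact mul_le_mul_of_nonneg_right (sum_runWeight_le ξ hy (Finset.mem_range.1 hk))
          (edgeTerm_nonneg _ _ _ _ _)
    _ = _ := by
        simp_rw [← Finset.mul_sum]
        ring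

/-- The defects of `σ` whose nearest defect above in the same column is at distance `j + 1`. -/
def upSet (σ : Config L) (j : ℕ) : Finset (ℕ × ℕ) :=
  (grid L).filter fun z => z.2 + 1 + j ≤ L ∧ isDefect σ z.1 z.2 = true ∧
    isDefect σ z.1 (z.2 + 1 + j) = true ∧ ∀ i < j, isDefect σ z.1 (z.2 + 1 + i) = false

theorem mem_upSet {σ : Config L} {j : ℕ} {z : ℕ × ℕ} :
    z ∈ upSet σ j ↔ z.1 ≤ L ∧ z.2 + 1 + j ≤ L ∧ isDefect σ z.1 z.2 = true ∧
      isDefect σ z.1 (z.2 + 1 + j) = true ∧ ∀ i < j, isDefect σ z.1 (z.2 + 1 + i) = false := by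
  rw [upSet, Finset.mem_filter, mem_grid]
  constructor
  · rintro ⟨h1, h2⟩; exact ⟨h1.1, h2⟩
  · rintro ⟨h1, h2⟩; exact ⟨⟨h1, by omega⟩, h2⟩

theorem energy_le_two_mul_sum_card_upSet (σ : Config L) :
    energy σ ≤ 2 * ∑ j ∈ Finset.range L, (upSet σ j).card := by
  let D := (defectSet σ).filter fun z => ∃ v ≤ L, z.2 < v ∧ isDefect σ z.1 v = true
  have h1 : D.card ≤ ∑ j ∈ Finset.range L, (upSet σ j).card := by
    refine (Finset.card_le_card ?_).trans Finset.card_biUnion_le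
    intro z hz
    obtain ⟨hz1, v, hv, hzv, hd⟩ := Finset.mem_filter.1 hz
    obtain ⟨⟨hx, hy⟩, hdz⟩ := mem_defectSet.1 hz1
    have hex : ∃ j, isDefect σ z.1 (z.2 + 1 + j) = true :=
      ⟨v - z.2 - 1, by rw [← hd]; congr 1; omega⟩
    have hle : Nat.find hex ≤ v - z.2 - 1 := Nat.find_min' hex (by rw [← hd]; congr 1; omega)
    rw [Finset.mem_biUnion]
    refine ⟨Nat.find hex, Finset.mem_range.2 (by omega), mem_upSet.2 ⟨hx, by omega, hdz,
      Nat.find_spec hex, fun i hi => ?_⟩⟩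
    simpa using Nat.find_min hex hi
  have h2 : ((defectSet σ).filter fun z => ¬ ∃ v ≤ L, z.2 < v ∧ isDefect σ z.1 v = true).card ≤
      D.card := by
    have hex : ∀ z : ℕ × ℕ, ∃ v, z ∈ defectSet σ → v ≤ L ∧ v ≠ z.2 ∧ isDefect σ z.1 v = true := by
      intro z
      by_cases hz : z ∈ defectSet σ
      · obtain ⟨⟨-, hy⟩, hd⟩ := mem_defectSet.1 hz
        obtain ⟨v, hv⟩ := exists_col_mate hy hd
        exact ⟨v, fun _ => hv⟩
      · exact ⟨0, fun h => absurd h hz⟩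
    choose m hm using hex
    refine Finset.card_le_card_of_injOn (fun z => (z.1, m z)) ?_ ?_
    · intro z hz
      obtain ⟨hz1, hz2⟩ := Finset.mem_filter.1 hz
      push Not at hz2
      obtain ⟨⟨hx, hy⟩, hdz⟩ := mem_defectSet.1 hz1
      obtain ⟨h1, h2, h3⟩ := hm z hz1
      have : m z < z.2 := by
        by_contra hlt
        exact hz2 (m z) h1 (by omega) h3
      exact Finset.mem_filter.2 ⟨mem_defectSet.2 ⟨⟨hx, h1⟩, h3⟩, z.2, hy, this, hdz⟩
    · intro z hz z' hz' h
      obtain ⟨hz1, hz2⟩ := Finset.mem_filter.1 hz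
      obtain ⟨hz1', hz2'⟩ := Finset.mem_filter.1 hz'
      simp only [Prod.mk.injEq] at h
      obtain ⟨⟨-, hy⟩, hd⟩ := mem_defectSet.1 hz1
      obtain ⟨⟨-, hy'⟩, hd'⟩ := mem_defectSet.1 hz1'
      refine Prod.ext h.1 ?_
      rcases lt_trichotomy z.2 z'.2 with hl | hl | hl
      · exact absurd ⟨z'.2, hy', hl, by rw [h.1]; exact hd'⟩ hz2
      · exact hl
      · exact absurd ⟨z.2, hy, hl, by rw [← h.1]; exact hd⟩ hz2'
  have h3 : energy σ = D.card + ((defectSet σ).filter fun z =>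
      ¬ ∃ v ≤ L, z.2 < v ∧ isDefect σ z.1 v = true).card :=
    (Finset.card_filter_add_card_filter_not _).symm
  omega

/-- `u` is an element of `P` in `[0, L]` next to `x`. -/
def IsNeighbour (L : ℕ) (P : ℕ → Prop) (x u : ℕ) : Prop :=
  u ≤ L ∧ u ≠ x ∧ P u ∧ ∀ k, (x < k ∧ k < u) ∨ (u < k ∧ k < x) → ¬ P k

/-- A neighbour of `x` in `P`, depending only on `P` and `x`. -/
def neighbour (L : ℕ) (P : ℕ → Prop) (x : ℕ) : ℕ :=
  if h : ∃ u, IsNeighbour L P x u then h.choose else 0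

theorem isNeighbour_neighbour {P : ℕ → Prop} {x : ℕ} (hx : x ≤ L) (h : ∃ u ≤ L, u ≠ x ∧ P u) :
    IsNeighbour L P x (neighbour L P x) := by
  have hex : ∃ u, IsNeighbour L P x u := by
    obtain ⟨w, hw, hwx, hwP⟩ := h
    have hne : ((Finset.range (L + 1)).filter fun u => u ≠ x ∧ P u).Nonempty :=
      ⟨w, Finset.mem_filter.2 ⟨Finset.mem_range.2 (by omega), hwx, hwP⟩⟩
    obtain ⟨u, hu, hmin⟩ := Finset.exists_min_image _ (fun u => (u - x) + (x - u)) hne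
    obtain ⟨hu1, hu2, hu3⟩ := Finset.mem_filter.1 hu
    have hu1' := Finset.mem_range.1 hu1
    refine ⟨u, by omega, hu2, hu3, fun k hk hkP => ?_⟩
    have := hmin k (Finset.mem_filter.2 ⟨Finset.mem_range.2 (by omega), by omega, hkP⟩)
    omega
  rw [neighbour, dif_pos hex]
  exact hex.choose_spec

/-- A neighbouring occupied column of `x` in the strip at `y`. -/
def mateCol (σ : Config L) (y x : ℕ) : ℕ := neighbour L (fun i => 0 < occ σ y i) x

/-- Flip the run between `x` and its neighbouring occupied column in the strip at `y`. -/
def pushUp (σ : Config L) (z : ℕ × ℕ) : Config L := flipRow σ z.2 z.1 (mateCol σ z.2 z.1)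

/-- The number of defects at the two columns moved by `pushUp`. -/
def pushOcc (σ : Config L) (z : ℕ × ℕ) : ℕ := occ σ z.2 z.1 + occ σ z.2 (mateCol σ z.2 z.1)

theorem occ_pos_of_isDefect {σ : Config L} {y x : ℕ} (h : isDefect σ x y = true) :
    0 < occ σ y x := by simp [occ, h]

theorem isNeighbour_mateCol {σ : Config L} {y x : ℕ} (hx : x ≤ L) (h : isDefect σ x y = true) :
    IsNeighbour L (fun i => 0 < occ σ y i) x (mateCol σ y x) := by
  obtain ⟨u, hu, hux, hd⟩ := exists_row_mate hx h
  exact isNeighbour_neighbour hx ⟨u, hu, hux, occ_pos_of_isDefect hd⟩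

theorem consec_mateCol {σ : Config L} {y x : ℕ} (hx : x ≤ L) (h : isDefect σ x y = true) :
    Consec σ y x (mateCol σ y x) ∨ Consec σ y (mateCol σ y x) x := by
  obtain ⟨h1, h2, h3, h4⟩ := isNeighbour_mateCol hx h
  have h0 := occ_pos_of_isDefect h
  rcases lt_or_gt_of_ne h2 with hl | hl
  · exact Or.inr ⟨hl, hx, h3, h0, fun k hk hk' => by
      have := h4 k (Or.inr ⟨hk, hk'⟩); omega⟩
  · exact Or.inl ⟨hl, h1, h0, h3, fun k hk hk' => by
      have := h4 k (Or.inl ⟨hk, hk'⟩); omega⟩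

theorem energy_pushUp {σ : Config L} {z : ℕ × ℕ} (hx : z.1 ≤ L) (hy : z.2 < L)
    (h : isDefect σ z.1 z.2 = true) : energy (pushUp σ z) + 2 * pushOcc σ z = energy σ + 4 := by
  obtain ⟨h1, h2, -, -⟩ := isNeighbour_mateCol hx h
  exact energy_flipRow σ hy hx h1 h2.symm

theorem occ_pushUp {σ : Config L} {z : ℕ × ℕ} (hx : z.1 ≤ L) (hy : z.2 < L)
    (h : isDefect σ z.1 z.2 = true) (hocc : pushOcc σ z ≤ 2) (i : ℕ) :
    occ (pushUp σ z) z.2 i = occ σ z.2 i := by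
  obtain ⟨h1, h2, h3, -⟩ := isNeighbour_mateCol hx h
  have h0 := occ_pos_of_isDefect h
  unfold pushOcc at hocc
  unfold pushUp
  by_cases hi : i = z.1
  · subst hi
    have := occ_flipRow_left σ hy hx h1 h2.symm
    omega
  · by_cases hi' : i = mateCol σ z.2 z.1
    · have := occ_flipRow_right σ hy hx h1 h2.symm
      rw [hi']
      omega
    · exact occ_flipRow_of_ne σ hy hx h1 hi hi'

theorem mateCol_pushUp {σ : Config L} {z : ℕ × ℕ} (hx : z.1 ≤ L) (hy : z.2 < L)
    (h : isDefect σ z.1 z.2 = true) (hocc : pushOcc σ z ≤ 2) :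
    mateCol (pushUp σ z) z.2 z.1 = mateCol σ z.2 z.1 := by
  have hP : (fun i => 0 < occ (pushUp σ z) z.2 i) = fun i => 0 < occ σ z.2 i := by
    funext i
    rw [occ_pushUp hx hy h hocc]
  unfold mateCol
  rw [hP]

theorem pushUp_pushUp {σ : Config L} {z : ℕ × ℕ} (hx : z.1 ≤ L) (hy : z.2 < L)
    (h : isDefect σ z.1 z.2 = true) (hocc : pushOcc σ z ≤ 2) : pushUp (pushUp σ z) z = σ := by
  rw [pushUp, mateCol_pushUp hx hy h hocc, pushUp, flipRow_flipRow]

theorem pushUp_mem_upSet {σ : Config L} {z : ℕ × ℕ} {j : ℕ} (hz : z ∈ upSet σ (j + 1)) :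
    (z.1, z.2 + 1) ∈ upSet (pushUp σ z) j := by
  obtain ⟨hx, hyj, hd, hdj, hi⟩ := mem_upSet.1 hz
  obtain ⟨h1, h2, h3, -⟩ := isNeighbour_mateCol hx hd
  have hD : ∀ j', isDefect (pushUp σ z) z.1 j' =
      (isDefect σ z.1 j' ^^ (decide (j' = z.2) ^^ decide (j' = z.2 + 1))) := by
    intro j'
    rw [pushUp, isDefect_flipRow σ (by omega) hx h1]
    simp [h2.symm]
  refine mem_upSet.2 ⟨hx, by simp only; omega, ?_, ?_, ?_⟩
  · simp only
    rw [hD]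
    have := hi 0 (by omega)
    rw [add_zero] at this
    simp [this]
  · simp only
    rw [hD, show z.2 + 1 + 1 + j = z.2 + 1 + (j + 1) by ring, hdj]
    have e1 : ¬ (z.2 + 1 + (j + 1) = z.2) := by omega
    have e2 : ¬ (z.2 + 1 + (j + 1) = z.2 + 1) := by omega
    simp [e1]
  · intro i hij
    simp only
    rw [hD, show z.2 + 1 + 1 + i = z.2 + 1 + (i + 1) by ring, hi (i + 1) (by omega)]
    have e1 : ¬ (z.2 + 1 + (i + 1) = z.2) := by omega
    simp [e1]

theorem three_le_pushOcc_of_mem_upSet_zero {σ : Config L} {z : ℕ × ℕ} (hz : z ∈ upSet σ 0) :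
    3 ≤ pushOcc σ z := by
  obtain ⟨hx, hyj, hd, hdj, -⟩ := mem_upSet.1 hz
  obtain ⟨h1, h2, h3, -⟩ := isNeighbour_mateCol hx hd
  rw [add_zero] at hdj
  unfold pushOcc
  have : occ σ z.2 z.1 = 2 := by simp [occ, hd, hdj]
  omega

/-- The Hardy weight at the defect `z`: the squared increment of `f` along `pushUp`, plus the value
of `f` after a push that removes defects. -/
def hardyTerm (β : ℝ) (f : Config L → ℝ) (σ : Config L) (z : ℕ × ℕ) : ℝ :=
  (1 + L) * (gibbs L β σ * (f (pushUp σ z) - f σ) ^ 2) +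
    2 * (if 3 ≤ pushOcc σ z then gibbs L β σ * f (pushUp σ z) ^ 2 else 0)

theorem hardyTerm_nonneg (β : ℝ) (f : Config L → ℝ) (σ : Config L) (z : ℕ × ℕ) :
    0 ≤ hardyTerm β f σ z := by
  have := gibbs_pos β σ
  unfold hardyTerm
  split_ifs <;> positivity

theorem gibbs_mul_sq_le_of_terminal {β : ℝ} (f : Config L → ℝ) {σ : Config L} {z : ℕ × ℕ}
    (hL : 1 ≤ L) (h : 3 ≤ pushOcc σ z) : gibbs L β σ * f σ ^ 2 ≤ hardyTerm β f σ z := by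
  rw [hardyTerm, if_pos h]
  have hp := gibbs_pos β σ
  have hL' : (1 : ℝ) ≤ L := by exact_mod_cast hL
  have h1 : f σ ^ 2 ≤ (1 + L) * (f (pushUp σ z) - f σ) ^ 2 + 2 * f (pushUp σ z) ^ 2 := by
    nlinarith [sq_nonneg (2 * f (pushUp σ z) - f σ), sq_nonneg (f (pushUp σ z) - f σ)]
  nlinarith

theorem gibbs_mul_sq_le_of_not_terminal {β : ℝ} (f : Config L → ℝ) {σ : Config L} {z : ℕ × ℕ}
    (hL : 1 ≤ L) (hE : energy (pushUp σ z) = energy σ) :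
    gibbs L β σ * f σ ^ 2 ≤ (1 + 1 / L) * (gibbs L β (pushUp σ z) * f (pushUp σ z) ^ 2) +
      hardyTerm β f σ z := by
  have hp := gibbs_pos β σ
  have hpe : gibbs L β (pushUp σ z) = gibbs L β σ := by rw [gibbs_eq, gibbs_eq, hE]
  have hL' : (0 : ℝ) < L := by exact_mod_cast hL
  have h1 : f σ ^ 2 ≤ (1 + 1 / L) * f (pushUp σ z) ^ 2 + (1 + L) * (f (pushUp σ z) - f σ) ^ 2 := by
    have h2 : (1 + 1 / (L : ℝ)) * f (pushUp σ z) ^ 2 + (1 + L) * (f (pushUp σ z) - f σ) ^ 2 -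
        f σ ^ 2 = 1 / L * (f (pushUp σ z) + L * (f (pushUp σ z) - f σ)) ^ 2 := by
      field_simp
      ring
    have h3 : 0 ≤ 1 / (L : ℝ) * (f (pushUp σ z) + L * (f (pushUp σ z) - f σ)) ^ 2 := by positivity
    linarith
  rw [hpe, hardyTerm]
  have h4 : 0 ≤ 2 * (if 3 ≤ pushOcc σ z then gibbs L β σ * f (pushUp σ z) ^ 2 else 0) := by
    split_ifs <;> positivity
  nlinarith [mul_le_mul_of_nonneg_left h1 hp.le]

theorem hardy_step (β : ℝ) (f : Config L → ℝ) (j : ℕ) :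
    ∑ σ, ∑ _z ∈ upSet σ (j + 1), gibbs L β σ * f σ ^ 2 ≤
      (1 + 1 / L) * ∑ σ, ∑ _z ∈ upSet σ j, gibbs L β σ * f σ ^ 2 +
        ∑ σ, ∑ z ∈ upSet σ (j + 1), hardyTerm β f σ z := by
  let V : Finset (Σ _ : Config L, ℕ × ℕ) := Finset.univ.sigma fun σ => upSet σ (j + 1)
  let W := V.filter fun p => pushOcc p.1 p.2 ≤ 2
  let T : (Σ _ : Config L, ℕ × ℕ) → (Σ _ : Config L, ℕ × ℕ) :=
    fun p => ⟨pushUp p.1 p.2, (p.2.1, p.2.2 + 1)⟩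
  let g : (Σ _ : Config L, ℕ × ℕ) → ℝ := fun p => gibbs L β p.1 * f p.1 ^ 2
  have hg : ∀ p, 0 ≤ g p := fun p => mul_nonneg (gibbs_pos β _).le (sq_nonneg _)
  have hmem : ∀ p ∈ V, p.2.1 ≤ L ∧ p.2.2 < L ∧ isDefect p.1 p.2.1 p.2.2 = true := by
    intro p hp
    obtain ⟨h1, h2, h3, -⟩ := mem_upSet.1 (Finset.mem_sigma.1 hp).2
    exact ⟨h1, by omega, h3⟩
  have hmono : ∑ p ∈ W, g (T p) ≤ ∑ σ, ∑ _z ∈ upSet σ j, gibbs L β σ * f σ ^ 2 := by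
    rw [Finset.sum_sigma']
    have hinj : Set.InjOn T W := by
      rintro ⟨σ, z⟩ hp ⟨σ', z'⟩ hp' h
      obtain ⟨hp1, hp2⟩ := Finset.mem_filter.1 hp
      obtain ⟨hp1', hp2'⟩ := Finset.mem_filter.1 hp'
      simp only [T, Sigma.mk.injEq, heq_eq_eq, Prod.mk.injEq, Nat.add_right_cancel_iff] at h
      obtain ⟨h1, h2, h3⟩ := h
      have hz : z = z' := Prod.ext h2 h3
      subst hz
      obtain ⟨a1, a2, a3⟩ := hmem _ hp1
      obtain ⟨b1, b2, b3⟩ := hmem _ hp1'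
      have := pushUp_pushUp a1 a2 a3 hp2
      simp only at this
      rw [h1, pushUp_pushUp b1 b2 b3 hp2'] at this
      rw [show σ = σ' from this.symm]
    rw [← Finset.sum_image (f := g) hinj]
    refine Finset.sum_le_sum_of_subset_of_nonneg ?_ fun p _ _ => hg p
    intro p hp
    obtain ⟨p', hp', rfl⟩ := Finset.mem_image.1 hp
    have h1 := (Finset.mem_sigma.1 (Finset.mem_filter.1 hp').1).2
    exact Finset.mem_sigma.2 ⟨Finset.mem_univ _, pushUp_mem_upSet h1⟩
  have hpt : ∀ p ∈ V, g p ≤ (if pushOcc p.1 p.2 ≤ 2 then (1 + 1 / (L : ℝ)) * g (T p) else 0) +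
      hardyTerm β f p.1 p.2 := by
    intro p hp
    obtain ⟨a1, a2, a3⟩ := hmem p hp
    split_ifs with hocc
    · refine gibbs_mul_sq_le_of_not_terminal f (by omega) ?_
      have h1 := energy_pushUp a1 a2 a3
      have h2 := (isNeighbour_mateCol a1 a3).2.2.1
      have h3 := occ_pos_of_isDefect a3
      simp only at h2
      unfold pushOcc at h1 hocc
      omega
    · rw [zero_add]
      exact gibbs_mul_sq_le_of_terminal f (by omega) (by omega)
  calc _ = ∑ p ∈ V, g p := Finset.sum_sigma' _ _ _
    _ ≤ _ := Finset.sum_le_sum hpt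
    _ = (1 + 1 / (L : ℝ)) * ∑ p ∈ W, g (T p) + ∑ p ∈ V, hardyTerm β f p.1 p.2 := by
        rw [Finset.sum_add_distrib, ← Finset.sum_filter, ← Finset.mul_sum]
    _ ≤ _ := by
        refine add_le_add (mul_le_mul_of_nonneg_left hmono (by positivity)) ?_
        rw [Finset.sum_sigma']

theorem hardy_inequality (β : ℝ) (f : Config L → ℝ) :
    ∑ j ∈ Finset.range L, ∑ σ, ∑ _z ∈ upSet σ j, gibbs L β σ * f σ ^ 2 ≤
      3 * L * ∑ j ∈ Finset.range L, ∑ σ, ∑ z ∈ upSet σ j, hardyTerm β f σ z := by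
  refine sum_le_of_hardy_recursion (fun j => Finset.sum_nonneg fun σ _ => Finset.sum_nonneg
    fun z _ => hardyTerm_nonneg β f σ z) ?_ (hardy_step β f)
  refine Finset.sum_le_sum fun σ _ => Finset.sum_le_sum fun z hz => ?_
  have := (mem_upSet.1 hz).2.1
  exact gibbs_mul_sq_le_of_terminal f (by omega) (three_le_pushOcc_of_mem_upSet_zero hz)

theorem sum_upSet_le (σ : Config L) {H : ℕ × ℕ → ℝ} (hH : ∀ z, 0 ≤ H z) :
    ∑ j ∈ Finset.range L, ∑ z ∈ upSet σ j, H z ≤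
      ∑ y ∈ Finset.range L, ∑ x ∈ Finset.range (L + 1),
        if isDefect σ x y = true then H (x, y) else 0 := by
  rw [← Finset.sum_biUnion]
  · rw [Finset.sum_comm, ← Finset.sum_product (s := Finset.range (L + 1)) (t := Finset.range L)
      (f := fun z => if isDefect σ z.1 z.2 = true then H (z.1, z.2) else 0), ← Finset.sum_filter]
    refine Finset.sum_le_sum_of_subset_of_nonneg ?_ fun z _ _ => hH z
    intro z hz
    obtain ⟨j, -, hz⟩ := Finset.mem_biUnion.1 hz
    obtain ⟨h1, h2, h3, -⟩ := mem_upSet.1 hz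
    exact Finset.mem_filter.2 ⟨Finset.mem_product.2 ⟨Finset.mem_range.2 (by omega),
      Finset.mem_range.2 (by omega)⟩, h3⟩
  · intro j _ j' _ hne
    refine Finset.disjoint_left.2 fun z hz hz' => ?_
    obtain ⟨-, -, -, h4, h5⟩ := mem_upSet.1 hz
    obtain ⟨-, -, -, h4', h5'⟩ := mem_upSet.1 hz'
    rcases lt_or_gt_of_ne hne with hl | hl
    · rw [h5' j hl] at h4; exact absurd h4 (by simp)
    · rw [h5 j' hl] at h4'; exact absurd h4' (by simp)

theorem sum_sq_pushUp_le (β : ℝ) (f : Config L → ℝ) :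
    ∑ j ∈ Finset.range L, ∑ σ, ∑ z ∈ upSet σ j, gibbs L β σ * (f (pushUp σ z) - f σ) ^ 2 ≤
      2 * runSum β f := by
  let h : Config L → ℕ → ℕ → ℕ → ℝ := fun σ y a u =>
    if Consec σ y a u then gibbs L β σ * (f (flipRow σ y a u) - f σ) ^ 2 else 0
  have hh : ∀ σ y a u, 0 ≤ h σ y a u := by
    intro σ y a u
    have := gibbs_pos β σ
    simp only [h]
    split_ifs <;> positivity
  rw [Finset.sum_comm]
  calc _ ≤ ∑ σ : Config L, ∑ y ∈ Finset.range L, ∑ x ∈ Finset.range (L + 1),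
        (if isDefect σ x y = true then gibbs L β σ * (f (pushUp σ (x, y)) - f σ) ^ 2 else 0) :=
        Finset.sum_le_sum fun σ _ => sum_upSet_le σ
          (H := fun z => gibbs L β σ * (f (pushUp σ z) - f σ) ^ 2) fun z =>
          mul_nonneg (gibbs_pos β σ).le (sq_nonneg _)
    _ ≤ ∑ σ : Config L, ∑ y ∈ Finset.range L, ∑ x ∈ Finset.range (L + 1),
        ∑ u ∈ Finset.range (L + 1), (h σ y x u + h σ y u x) := by
        refine Finset.sum_le_sum fun σ _ => Finset.sum_le_sum fun y _ =>
          Finset.sum_le_sum fun x hx => ?_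
        have hx' : x ≤ L := by have := Finset.mem_range.1 hx; omega
        split_ifs with hd
        · have hm : mateCol σ y x ∈ Finset.range (L + 1) := by
            have := (isNeighbour_mateCol hx' hd).1
            exact Finset.mem_range.2 (by omega)
          refine le_trans ?_ (Finset.single_le_sum (f := fun u => h σ y x u + h σ y u x)
            (fun u _ => add_nonneg (hh _ _ _ _) (hh _ _ _ _)) hm)
          simp only [pushUp]
          rcases consec_mateCol hx' hd with hc | hc
          · refine le_add_of_le_of_nonneg (le_of_eq ?_) (hh _ _ _ _)
            simp only [h]
            rw [if_pos hc]
          · refine le_add_of_nonneg_of_le (hh _ _ _ _) (le_of_eq ?_)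
            simp only [h]
            rw [if_pos hc, flipRow_comm]
        · exact Finset.sum_nonneg fun u _ => add_nonneg (hh _ _ _ _) (hh _ _ _ _)
    _ = 2 * ∑ σ : Config L, ∑ y ∈ Finset.range L, ∑ x ∈ Finset.range (L + 1),
        ∑ u ∈ Finset.range (L + 1), h σ y x u := by
        simp_rw [Finset.sum_add_distrib]
        rw [two_mul]
        congr 1
        exact Finset.sum_congr rfl fun σ _ => Finset.sum_congr rfl fun y _ => Finset.sum_comm
    _ = _ := by
        unfold runSum
        rw [Finset.sum_comm]
        congr 1
        refine Finset.sum_congr rfl fun y _ => ?_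
        rw [Finset.sum_comm]
        refine Finset.sum_congr rfl fun x _ => ?_
        rw [Finset.sum_comm]

theorem sum_occ_le (σ : Config L) :
    ∑ y ∈ Finset.range L, ∑ x ∈ Finset.range (L + 1), occ σ y x ≤ 2 * energy σ := by
  have hE : energy σ = ∑ y ∈ Finset.range (L + 1), ∑ x ∈ Finset.range (L + 1),
      (isDefect σ x y).toNat := by
    rw [energy_eq_sum, grid, Finset.sum_product, Finset.sum_comm]
  have h1 : ∑ y ∈ Finset.range L, ∑ x ∈ Finset.range (L + 1), (isDefect σ x y).toNat ≤ energy σ := by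
    rw [hE, Finset.sum_range_succ]; omega
  have h2 : ∑ y ∈ Finset.range L, ∑ x ∈ Finset.range (L + 1), (isDefect σ x (y + 1)).toNat ≤
      energy σ := by
    rw [hE, Finset.sum_range_succ']; omega
  simp only [occ, Finset.sum_add_distrib]
  omega

theorem terminal_term_le {β : ℝ} (f : Config L → ℝ) (τ : Config L) {y x u : ℕ} (hy : y < L)
    (hx : x ≤ L) (hu : u ≤ L) :
    (if x ≠ u ∧ 3 ≤ occ (flipRow τ y x u) y x + occ (flipRow τ y x u) y u then
      gibbs L β (flipRow τ y x u) * f τ ^ 2 else 0) ≤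
    (Real.exp (-4 * β) + (occ τ y x + occ τ y u) * Real.exp (-2 * β)) *
      (gibbs L β τ * f τ ^ 2) := by
  have hp := gibbs_pos β τ
  split_ifs with h
  · obtain ⟨hne, h3⟩ := h
    have e1 := occ_flipRow_left τ hy hx hu hne
    have e2 := occ_flipRow_right τ hy hx hu hne
    have e3 := energy_flipRow τ hy hx hu hne
    have hs : occ τ y x + occ τ y u = 0 ∨ occ τ y x + occ τ y u = 1 := by omega
    have e3' : (energy (flipRow τ y x u) : ℝ) = energy τ + (4 - 2 * (occ τ y x + occ τ y u)) := by
      have : (energy (flipRow τ y x u) : ℝ) + 2 * (occ τ y x + occ τ y u) = energy τ + 4 := by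
        exact_mod_cast e3
      linarith
    rw [gibbs_eq_mul_of_energy e3', mul_assoc]
    refine mul_le_mul_of_nonneg_right ?_ (by positivity)
    rcases hs with hs | hs
    · have hs' : (occ τ y x : ℝ) + occ τ y u = 0 := by exact_mod_cast hs
      rw [hs', show -β * (4 - 2 * 0) = -4 * β by ring]
      simp
    · have hs' : (occ τ y x : ℝ) + occ τ y u = 1 := by exact_mod_cast hs
      rw [hs', show -β * (4 - 2 * 1) = -2 * β by ring, one_mul]
      linarith [Real.exp_pos (-4 * β)]
  · positivity

theorem sum_terminal_le (β : ℝ) (f : Config L → ℝ) (hf : f (allPlus L) = 0) :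
    (∑ j ∈ Finset.range L, ∑ σ, ∑ z ∈ upSet σ j,
      if 3 ≤ pushOcc σ z then gibbs L β σ * f (pushUp σ z) ^ 2 else 0) ≤
    (4 * (L + 1) * Real.exp (-2 * β) + L * (L + 1) ^ 2 * Real.exp (-4 * β)) *
      ∑ σ, gibbs L β σ * energy σ * f σ ^ 2 := by
  let h : Config L → ℕ → ℕ → ℕ → ℝ := fun σ y x u =>
    if x ≠ u ∧ 3 ≤ occ σ y x + occ σ y u then gibbs L β σ * f (flipRow σ y x u) ^ 2 else 0
  have hh : ∀ σ y a u, 0 ≤ h σ y a u := by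
    intro σ y a u
    have := gibbs_pos β σ
    simp only [h]
    split_ifs <;> positivity
  rw [Finset.sum_comm]
  calc _ ≤ ∑ σ : Config L, ∑ y ∈ Finset.range L, ∑ x ∈ Finset.range (L + 1),
        (if isDefect σ x y = true then (if 3 ≤ pushOcc σ (x, y) then
          gibbs L β σ * f (pushUp σ (x, y)) ^ 2 else 0) else 0) := by
        refine Finset.sum_le_sum fun σ _ => sum_upSet_le σ (H := fun z => if 3 ≤ pushOcc σ z then
          gibbs L β σ * f (pushUp σ z) ^ 2 else 0) fun z => ?_
        have := gibbs_pos β σ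
        split_ifs <;> positivity
    _ ≤ ∑ σ : Config L, ∑ y ∈ Finset.range L, ∑ x ∈ Finset.range (L + 1),
        ∑ u ∈ Finset.range (L + 1), h σ y x u := by
        refine Finset.sum_le_sum fun σ _ => Finset.sum_le_sum fun y _ =>
          Finset.sum_le_sum fun x hx => ?_
        have hx' : x ≤ L := by have := Finset.mem_range.1 hx; omega
        split_ifs with hd hocc
        · obtain ⟨h1, h2, -, -⟩ := isNeighbour_mateCol hx' hd
          refine le_trans ?_ (Finset.single_le_sum (f := fun u => h σ y x u)
            (fun u _ => hh _ _ _ _) (Finset.mem_range.2 (by omega : mateCol σ y x < L + 1)))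
          simp only [h, pushUp]
          rw [if_pos ⟨h2.symm, hocc⟩]
        · exact Finset.sum_nonneg fun u _ => hh _ _ _ _
        · exact Finset.sum_nonneg fun u _ => hh _ _ _ _
    _ = ∑ y ∈ Finset.range L, ∑ x ∈ Finset.range (L + 1),
        ∑ u ∈ Finset.range (L + 1), ∑ τ : Config L, h (flipRow τ y x u) y x u := by
        rw [Finset.sum_comm]
        refine Finset.sum_congr rfl fun y _ => ?_
        rw [Finset.sum_comm]
        refine Finset.sum_congr rfl fun x _ => ?_
        rw [Finset.sum_comm]
        refine Finset.sum_congr rfl fun u _ => ?_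
        rw [sum_flipRow y x u]
    _ ≤ ∑ y ∈ Finset.range L, ∑ x ∈ Finset.range (L + 1),
        ∑ u ∈ Finset.range (L + 1), ∑ τ : Config L,
        (Real.exp (-4 * β) + (occ τ y x + occ τ y u) * Real.exp (-2 * β)) *
          (gibbs L β τ * f τ ^ 2) := by
        refine Finset.sum_le_sum fun y hy => Finset.sum_le_sum fun x hx =>
          Finset.sum_le_sum fun u hu => Finset.sum_le_sum fun τ _ => ?_
        rw [Finset.mem_range] at hy hx hu
        simp only [h]
        rw [flipRow_flipRow]
        exact terminal_term_le f τ hy (by omega) (by omega)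
    _ = ∑ τ : Config L, (∑ y ∈ Finset.range L, ∑ x ∈ Finset.range (L + 1),
        ∑ u ∈ Finset.range (L + 1),
        (Real.exp (-4 * β) + (occ τ y x + occ τ y u) * Real.exp (-2 * β))) *
          (gibbs L β τ * f τ ^ 2) := by
        simp_rw [Finset.sum_mul]
        symm
        rw [Finset.sum_comm]
        refine Finset.sum_congr rfl fun y _ => ?_
        rw [Finset.sum_comm]
        refine Finset.sum_congr rfl fun x _ => ?_
        rw [Finset.sum_comm]
    _ ≤ _ := by
        rw [Finset.mul_sum]
        refine Finset.sum_le_sum fun τ _ => ?_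
        by_cases hτ : τ = allPlus L
        · rw [hτ, hf]; simp
        have hE : (1 : ℝ) ≤ energy τ := by
          exact_mod_cast (by have := four_le_energy hτ; omega : 1 ≤ energy τ)
        have hsum : ∑ y ∈ Finset.range L, ∑ x ∈ Finset.range (L + 1),
            ∑ u ∈ Finset.range (L + 1),
            (Real.exp (-4 * β) + (occ τ y x + occ τ y u) * Real.exp (-2 * β)) =
            L * (L + 1) ^ 2 * Real.exp (-4 * β) + 2 * (L + 1) * Real.exp (-2 * β) *
              ∑ y ∈ Finset.range L, ∑ x ∈ Finset.range (L + 1), (occ τ y x : ℝ) := by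
          simp only [Finset.sum_add_distrib, Finset.sum_const, Finset.card_range, nsmul_eq_mul,
            ← Finset.sum_mul, ← Finset.mul_sum]
          push_cast
          ring
        have hocc : ∑ y ∈ Finset.range L, ∑ x ∈ Finset.range (L + 1), (occ τ y x : ℝ) ≤
            2 * energy τ := by exact_mod_cast sum_occ_le τ
        rw [hsum]
        have hp := gibbs_pos β τ
        calc _ ≤ (L * (L + 1) ^ 2 * Real.exp (-4 * β) * energy τ +
              2 * (L + 1) * Real.exp (-2 * β) * (2 * energy τ)) * (gibbs L β τ * f τ ^ 2) := by
              refine mul_le_mul_of_nonneg_right (add_le_add ?_ ?_) (by positivity)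
              · exact le_mul_of_one_le_right (by positivity) hE
              · exact mul_le_mul_of_nonneg_left hocc (by positivity)
          _ = _ := by ring

theorem energy_poincare {β : ℝ} (hβ : 0 ≤ β) (f : Config L → ℝ) (hf : f (allPlus L) = 0)
    (hsmall : 12 * L * (4 * (L + 1) * Real.exp (-2 * β) + L * (L + 1) ^ 2 * Real.exp (-4 * β)) ≤
      1 / 2) :
    ∑ σ, gibbs L β σ * energy σ * f σ ^ 2 ≤
      48 * L ^ 2 * (1 + L) * (Real.exp (2 * β) + (L + 1)) *
        dirichlet (gen L β) (gibbs L β) f := by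
  set Q := ∑ σ, gibbs L β σ * energy σ * f σ ^ 2 with hQ
  have hQ0 : 0 ≤ Q := Finset.sum_nonneg fun σ _ => by
    have := gibbs_pos β σ
    positivity
  have hcount : Q ≤ 2 * ∑ j ∈ Finset.range L, ∑ σ, ∑ _z ∈ upSet σ j, gibbs L β σ * f σ ^ 2 := by
    rw [Finset.sum_comm, Finset.mul_sum]
    refine Finset.sum_le_sum fun σ _ => ?_
    simp only [Finset.sum_const, nsmul_eq_mul, ← Finset.sum_mul]
    have h1 : (energy σ : ℝ) ≤ 2 * ∑ j ∈ Finset.range L, ((upSet σ j).card : ℝ) := by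
      exact_mod_cast energy_le_two_mul_sum_card_upSet σ
    have hp : 0 ≤ gibbs L β σ * f σ ^ 2 := mul_nonneg (gibbs_pos β σ).le (sq_nonneg _)
    nlinarith
  have hhardy := hardy_inequality β f
  have hsplit : ∑ j ∈ Finset.range L, ∑ σ, ∑ z ∈ upSet σ j, hardyTerm β f σ z =
      (1 + L) * (∑ j ∈ Finset.range L, ∑ σ, ∑ z ∈ upSet σ j,
        gibbs L β σ * (f (pushUp σ z) - f σ) ^ 2) +
      2 * ∑ j ∈ Finset.range L, ∑ σ, ∑ z ∈ upSet σ j,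
        (if 3 ≤ pushOcc σ z then gibbs L β σ * f (pushUp σ z) ^ 2 else 0) := by
    simp only [hardyTerm, Finset.sum_add_distrib, Finset.mul_sum]
  have h1 := sum_sq_pushUp_le β f
  have h2 := sum_terminal_le β f hf
  have h3 := runSum_le hβ f
  rw [hsplit] at hhardy
  set S := ∑ j ∈ Finset.range L, ∑ σ, ∑ z ∈ upSet σ j,
        gibbs L β σ * (f (pushUp σ z) - f σ) ^ 2
  set T := ∑ j ∈ Finset.range L, ∑ σ, ∑ z ∈ upSet σ j,
        (if 3 ≤ pushOcc σ z then gibbs L β σ * f (pushUp σ z) ^ 2 else 0)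
  set D := dirichlet (gen L β) (gibbs L β) f
  have hL : (0 : ℝ) ≤ L := Nat.cast_nonneg L
  have h4 : 12 * L * T ≤ 1 / 2 * Q := by
    calc 12 * L * T ≤ 12 * L * ((4 * (L + 1) * Real.exp (-2 * β) +
          L * (L + 1) ^ 2 * Real.exp (-4 * β)) * Q) := mul_le_mul_of_nonneg_left h2 (by positivity)
      _ = 12 * L * (4 * (L + 1) * Real.exp (-2 * β) + L * (L + 1) ^ 2 * Real.exp (-4 * β)) * Q := by
          ring
      _ ≤ _ := mul_le_mul_of_nonneg_right hsmall hQ0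
  have h5 : 6 * L * (1 + L) * S ≤ 6 * L * (1 + L) * (2 * (L * (Real.exp (2 * β) + (L + 1)) *
      (2 * D))) := by
    refine mul_le_mul_of_nonneg_left ?_ (by positivity)
    linarith
  have h6 : Q ≤ 6 * L * (1 + L) * S + 12 * L * T := by
    calc Q ≤ _ := hcount
      _ ≤ 2 * (3 * L * ((1 + L) * S + 2 * T)) := mul_le_mul_of_nonneg_left hhardy zero_le_two
      _ = _ := by ring
  have h7 : Q ≤ 2 * (6 * L * (1 + L) * (2 * (L * (Real.exp (2 * β) + (L + 1)) * (2 * D)))) := by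
    linarith
  calc Q ≤ _ := h7
    _ = _ := by ring

/-- The number of minus spins. -/
def minusCount (σ : Config L) : ℕ := (Finset.univ.filter fun k => σ k = false).card

/-- The test function for the lower bound: the minus area above the threshold `2L`. -/
def areaFn (σ : Config L) : ℝ := max 0 ((minusCount σ : ℝ) - 2 * L)

theorem minusCount_flip_le (σ : Config L) (x : Fin L × Fin L) :
    minusCount (flip L σ x) ≤ minusCount σ + 1 := by
  unfold minusCount
  refine le_trans (Finset.card_le_card ?_) (Finset.card_insert_le x _)
  intro k hk
  rw [Finset.mem_insert]
  by_cases h : k = x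
  · exact Or.inl h
  · right
    have := (Finset.mem_filter.1 hk).2
    rw [flip, if_neg h] at this
    exact Finset.mem_filter.2 ⟨Finset.mem_univ _, this⟩

theorem sq_areaFn_flip_sub_le_one (σ : Config L) (x : Fin L × Fin L) :
    (areaFn (flip L σ x) - areaFn σ) ^ 2 ≤ 1 := by
  have h1 : (minusCount (flip L σ x) : ℝ) ≤ minusCount σ + 1 := by
    exact_mod_cast minusCount_flip_le σ x
  have h2 : (minusCount σ : ℝ) ≤ minusCount (flip L σ x) + 1 := by
    have := minusCount_flip_le (flip L σ x) x
    rw [flip_flip] at this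
    exact_mod_cast this
  rw [sq_le_one_iff_abs_le_one]
  unfold areaFn
  refine (abs_max_sub_max_le_max _ _ _ _).trans ?_
  rw [sub_self, abs_zero, max_le_iff]
  refine ⟨zero_le_one, ?_⟩
  rw [abs_le]
  constructor <;> linarith

theorem areaFn_allPlus : areaFn (allPlus L) = 0 := by
  have : minusCount (allPlus L) = 0 := by simp [minusCount, allPlus]
  rw [areaFn, this]
  exact max_eq_left (by simp)

/-- The sites whose flip does not increase the energy. -/
def easySites (σ : Config L) : Finset (Fin L × Fin L) :=
  Finset.univ.filter fun x => energy (flip L σ x) ≤ energy σ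

/-- The flips of a configuration, charged to the endpoint of higher energy. -/
theorem dirichlet_le_sum_easySites {β : ℝ} (f : Config L → ℝ) :
    dirichlet (gen L β) (gibbs L β) f ≤
      ∑ σ, ∑ x ∈ easySites σ, gibbs L β σ * (f (flip L σ x) - f σ) ^ 2 := by
  let a : Config L → Fin L × Fin L → ℝ := fun σ x =>
    if energy (flip L σ x) ≤ energy σ then gibbs L β σ * (f (flip L σ x) - f σ) ^ 2 else 0
  have ha : ∀ σ x, 0 ≤ a σ x := by
    intro σ x
    have := gibbs_pos β σ
    simp only [a]
    split_ifs <;> positivity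
  have h1 : ∀ σ x, min (gibbs L β σ) (gibbs L β (flip L σ x)) * (f (flip L σ x) - f σ) ^ 2 ≤
      a σ x + a (flip L σ x) x := by
    intro σ x
    rcases le_total (energy (flip L σ x)) (energy σ) with h | h
    · refine le_add_of_le_of_nonneg ?_ (ha _ _)
      simp only [a]
      rw [if_pos h]
      exact mul_le_mul_of_nonneg_right (min_le_left _ _) (sq_nonneg _)
    · refine le_add_of_nonneg_of_le (ha _ _) ?_
      simp only [a]
      rw [flip_flip, if_pos h, ← neg_sub (f (flip L σ x)) (f σ), neg_sq]
      exact mul_le_mul_of_nonneg_right (min_le_right _ _) (sq_nonneg _)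
  have h2 : ∑ σ : Config L, ∑ x, a (flip L σ x) x = ∑ σ : Config L, ∑ x, a σ x := by
    rw [Finset.sum_comm, Finset.sum_comm (s := (Finset.univ : Finset (Config L)))
      (f := fun σ x => a σ x)]
    refine Finset.sum_congr rfl fun x _ => ?_
    exact Equiv.sum_comp (⟨fun σ => flip L σ x, fun σ => flip L σ x, fun σ => flip_flip σ x,
      fun σ => flip_flip σ x⟩ : Config L ≃ Config L) (fun σ => a σ x)
  have h3 : ∀ σ, ∑ x, a σ x =
      ∑ x ∈ easySites σ, gibbs L β σ * (f (flip L σ x) - f σ) ^ 2 := by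
    intro σ
    rw [easySites, Finset.sum_filter]
  rw [dirichlet_gen, div_le_iff₀ two_pos]
  calc _ ≤ ∑ σ : Config L, ∑ x, (a σ x + a (flip L σ x) x) :=
        Finset.sum_le_sum fun σ _ => Finset.sum_le_sum fun x _ => h1 σ x
    _ = (∑ σ : Config L, ∑ x, a σ x) * 2 := by
        simp_rw [Finset.sum_add_distrib]
        rw [h2]
        ring
    _ = _ := by rw [Finset.sum_congr rfl fun σ _ => h3 σ]

theorem energy_flip (σ : Config L) (x : Fin L × Fin L) :
    energy (flip L σ x) + 2 * (occ σ x.2 x.1 + occ σ x.2 (x.1 + 1)) = energy σ + 4 := by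
  have := energy_flipRow σ x.2.2 x.1.2.le (Nat.succ_le_of_lt x.1.2) (Nat.lt_succ_self x.1).ne
  rw [flip_eq_flipRect]
  exact this

theorem mem_easySites {σ : Config L} {x : Fin L × Fin L} :
    x ∈ easySites σ ↔ 2 ≤ occ σ x.2 x.1 + occ σ x.2 (x.1 + 1) := by
  have := energy_flip σ x
  simp only [easySites, Finset.mem_filter, Finset.mem_univ, true_and]
  omega

theorem card_easySites_le (σ : Config L) : (easySites σ).card ≤ 2 * energy σ := by
  have h1 : 2 * (easySites σ).card ≤ ∑ x : Fin L × Fin L, (occ σ x.2 x.1 + occ σ x.2 (x.1 + 1)) := by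
    rw [mul_comm, ← smul_eq_mul, ← Finset.sum_const]
    refine (Finset.sum_le_sum fun x hx => mem_easySites.1 hx).trans ?_
    exact Finset.sum_le_sum_of_subset (Finset.subset_univ _)
  have h2 : ∑ x : Fin L × Fin L, (occ σ x.2 x.1 + occ σ x.2 (x.1 + 1)) ≤ 4 * energy σ := by
    have h3 := sum_occ_le σ
    have h4 : ∀ y, ∑ k ∈ Finset.range L, (occ σ y k + occ σ y (k + 1)) ≤
        2 * ∑ x ∈ Finset.range (L + 1), occ σ y x := by
      intro y
      rw [Finset.sum_add_distrib]
      have e1 := Finset.sum_range_succ (fun x => occ σ y x) L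
      have e2 := Finset.sum_range_succ' (fun x => occ σ y x) L
      omega
    calc _ = ∑ y ∈ Finset.range L, ∑ k ∈ Finset.range L, (occ σ y k + occ σ y (k + 1)) := by
          rw [Fintype.sum_prod_type_right, Finset.sum_range]
          exact Finset.sum_congr rfl fun y _ => by rw [Finset.sum_range]
      _ ≤ ∑ y ∈ Finset.range L, 2 * ∑ x ∈ Finset.range (L + 1), occ σ y x :=
          Finset.sum_le_sum fun y _ => h4 y
      _ ≤ _ := by rw [← Finset.mul_sum]; omega
  omega

/-- A configuration with four defects is a rectangle of minus spins. -/
theorem exists_rectangle_of_energy_eq_four {σ : Config L} (h : energy σ = 4) :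
    ∃ x u y v, x ≤ L ∧ u ≤ L ∧ y ≤ L ∧ v ≤ L ∧ σ = flipRect (allPlus L) x u y v := by
  have hne : σ ≠ allPlus L := by rintro rfl; rw [energy_allPlus] at h; omega
  obtain ⟨z, hz⟩ := exists_defect_of_ne_allPlus hne
  obtain ⟨w, hw, hred⟩ := exists_rectangle_reduction hz
  obtain ⟨hz', -⟩ := mem_defectSet.1 hz
  have hw' := mem_grid.1 hw
  refine ⟨z.1, w.1, z.2, w.2, hz'.1, hw'.1, hz'.2, hw'.2, ?_⟩
  have h0 : flipRect σ z.1 w.1 z.2 w.2 = allPlus L := by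
    by_contra hcon
    have := four_le_energy hcon
    omega
  rw [← h0, flipRect_flipRect]

theorem adjacent_of_easySites_nonempty {x u y v : ℕ} (hx : x ≤ L) (hu : u ≤ L) (hy : y ≤ L)
    (hv : v ≤ L) {s : Fin L × Fin L} (h : s ∈ easySites (flipRect (allPlus L) x u y v)) :
    (u = x + 1 ∨ x = u + 1) ∨ (v = y + 1 ∨ y = v + 1) := by
  rw [mem_easySites] at h
  by_contra hcon
  simp only [occ, isDefect_flipRect _ hx hu hy hv, isDefect_allPlus, Bool.false_xor] at h
  generalize (s.1 : ℕ) = a at h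
  generalize (s.2 : ℕ) = b at h
  have key : ∀ p q i : ℕ, ¬ (q = p + 1 ∨ p = q + 1) →
      ((decide (i = p) ^^ decide (i = q)) && (decide (i + 1 = p) ^^ decide (i + 1 = q))) = false := by
    intro p q i hpq
    by_cases h1 : i = p <;> by_cases h2 : i = q <;> by_cases h3 : i + 1 = p <;>
      by_cases h4 : i + 1 = q <;> simp [h1, h2, h3, h4] <;> omega
  push Not at hcon
  have k1 := key x u a (by omega)
  have k2 := key y v b (by omega)
  revert h k1 k2
  generalize (decide (a = x) ^^ decide (a = u)) = b1
  generalize (decide (a + 1 = x) ^^ decide (a + 1 = u)) = b2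
  generalize (decide (b = y) ^^ decide (b = v)) = b3
  generalize (decide (b + 1 = y) ^^ decide (b + 1 = v)) = b4
  revert b1 b2 b3 b4
  decide

theorem between_succ_eq {x i : ℕ} : between x (x + 1) (i + 1) = decide (i = x) := by
  unfold between
  rcases lt_trichotomy x i with h | h | h <;> grind

theorem between_comm (a u i : ℕ) : between a u i = between u a i := Bool.xor_comm _ _

theorem minusCount_flipRect_le_of_adjacent {x u y v : ℕ}
    (h : (u = x + 1 ∨ x = u + 1) ∨ (v = y + 1 ∨ y = v + 1)) :
    minusCount (flipRect (allPlus L) x u y v) ≤ L := by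
  have key : ∀ p q i i' : ℕ, (q = p + 1 ∨ p = q + 1) → between p q (i + 1) = true →
      between p q (i' + 1) = true → i = i' := by
    intro p q i i' hpq h1 h2
    rcases hpq with rfl | rfl
    · rw [between_succ_eq] at h1 h2
      simp only [decide_eq_true_eq] at h1 h2
      omega
    · rw [between_comm, between_succ_eq] at h1 h2
      simp only [decide_eq_true_eq] at h1 h2
      omega
  have hmem : ∀ k : Fin L × Fin L, flipRect (allPlus L) x u y v k = false →
      between x u (k.1 + 1) = true ∧ between y v (k.2 + 1) = true := by
    intro k hk
    simpa [flipRect, allPlus] using hk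
  unfold minusCount
  have hcard : (Finset.univ : Finset (Fin L)).card = L := by simp
  rcases h with h | h
  · refine le_of_le_of_eq (Finset.card_le_card_of_injOn (fun k => k.2) (fun _ _ => Finset.mem_univ _)
      ?_) hcard
    intro k hk k' hk' hkk
    have e1 := hmem k (Finset.mem_filter.1 hk).2
    have e2 := hmem k' (Finset.mem_filter.1 hk').2
    exact Prod.ext (Fin.ext (key x u _ _ h e1.1 e2.1)) hkk
  · refine le_of_le_of_eq (Finset.card_le_card_of_injOn (fun k => k.1) (fun _ _ => Finset.mem_univ _)
      ?_) hcard
    intro k hk k' hk' hkk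
    have e1 := hmem k (Finset.mem_filter.1 hk).2
    have e2 := hmem k' (Finset.mem_filter.1 hk').2
    exact Prod.ext hkk (Fin.ext (key y v _ _ h e1.2 e2.2))

theorem areaFn_flip_eq_of_energy_eq_four {σ : Config L} (h : energy σ = 4) {s : Fin L × Fin L}
    (hs : s ∈ easySites σ) : areaFn (flip L σ s) = areaFn σ := by
  obtain ⟨x, u, y, v, hx, hu, hy, hv, rfl⟩ := exists_rectangle_of_energy_eq_four h
  have h1 := minusCount_flipRect_le_of_adjacent (L := L)
    (adjacent_of_easySites_nonempty hx hu hy hv hs)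
  have h2 := minusCount_flip_le (flipRect (allPlus L) x u y v) s
  have hL : 1 ≤ L := by have := s.1.2; omega
  have h1' : (minusCount (flipRect (allPlus L) x u y v) : ℝ) ≤ 2 * L := by
    exact_mod_cast (by omega : _ ≤ 2 * L)
  have h2' : (minusCount (flip L (flipRect (allPlus L) x u y v) s) : ℝ) ≤ 2 * L := by
    exact_mod_cast (by omega : _ ≤ 2 * L)
  unfold areaFn
  rw [max_eq_left (by linarith), max_eq_left (by linarith)]

theorem two_mul_card_le_energy {σ : Config L} (R : Finset ℕ)
    (hR : ∀ r ∈ R, r ≤ L ∧ ∃ i ≤ L, isDefect σ i r = true) : 2 * R.card ≤ energy σ := by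
  have h1 : ∀ r ∈ R, 2 ≤ ((defectSet σ).filter fun z => z.2 = r).card := by
    intro r hr
    obtain ⟨hrL, i, hi, hd⟩ := hR r hr
    obtain ⟨u, hu, hui, hud⟩ := exists_row_mate hi hd
    have hne : ((i, r) : ℕ × ℕ) ≠ (u, r) := by
      intro h
      exact hui (Prod.ext_iff.1 h).1.symm
    rw [← Finset.card_pair hne]
    refine Finset.card_le_card ?_
    intro z hz
    rw [Finset.mem_insert, Finset.mem_singleton] at hz
    rcases hz with rfl | rfl
    · exact Finset.mem_filter.2 ⟨mem_defectSet.2 ⟨⟨hi, hrL⟩, hd⟩, rfl⟩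
    · exact Finset.mem_filter.2 ⟨mem_defectSet.2 ⟨⟨hu, hrL⟩, hud⟩, rfl⟩
  calc 2 * R.card = ∑ _r ∈ R, 2 := by rw [Finset.sum_const, smul_eq_mul, mul_comm]
    _ ≤ ∑ r ∈ R, ((defectSet σ).filter fun z => z.2 = r).card := Finset.sum_le_sum h1
    _ = (R.biUnion fun r => (defectSet σ).filter fun z => z.2 = r).card := by
        rw [Finset.card_biUnion]
        intro r _ r' _ hrr
        refine Finset.disjoint_left.2 fun z hz hz' => ?_
        exact hrr ((Finset.mem_filter.1 hz).2.symm.trans (Finset.mem_filter.1 hz').2)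
    _ ≤ energy σ := by
        refine Finset.card_le_card ?_
        intro z hz
        obtain ⟨r, -, hz⟩ := Finset.mem_biUnion.1 hz
        exact (Finset.mem_filter.1 hz).1

/-- Two neighbouring plaquette columns both contain a defect. -/
def HasAdjacentColumns (σ : Config L) : Prop :=
  ∃ k < L, (∃ j ≤ L, isDefect σ k j = true) ∧ ∃ j ≤ L, isDefect σ (k + 1) j = true

theorem exists_common_row_of_energy_eq_six {σ : Config L} (h : energy σ = 6) {k : ℕ} (hk : k < L)
    (h1 : ∃ j ≤ L, isDefect σ k j = true) (h2 : ∃ j ≤ L, isDefect σ (k + 1) j = true) :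
    ∃ r ≤ L, isDefect σ k r = true ∧ isDefect σ (k + 1) r = true := by
  obtain ⟨j₁, hj₁, d₁⟩ := h1
  obtain ⟨j₂, hj₂, hne, d₂⟩ := exists_col_mate hj₁ d₁
  obtain ⟨j₃, hj₃, d₃⟩ := h2
  obtain ⟨j₄, hj₄, hne', d₄⟩ := exists_col_mate hj₃ d₃
  by_contra hcon
  push Not at hcon
  have n13 : j₁ ≠ j₃ := by rintro rfl; exact hcon _ hj₁ d₁ d₃
  have n14 : j₁ ≠ j₄ := by rintro rfl; exact hcon _ hj₁ d₁ d₄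
  have n23 : j₂ ≠ j₃ := by rintro rfl; exact hcon _ hj₂ d₂ d₃
  have n24 : j₂ ≠ j₄ := by rintro rfl; exact hcon _ hj₂ d₂ d₄
  have hc : ({j₁, j₂, j₃, j₄} : Finset ℕ).card = 4 := by
    rw [Finset.card_insert_of_notMem (by simp [hne.symm, n13, n14]),
      Finset.card_insert_of_notMem (by simp [n23, n24]), Finset.card_pair hne'.symm]
  have := two_mul_card_le_energy (σ := σ) {j₁, j₂, j₃, j₄} (by
    intro r hr
    simp only [Finset.mem_insert, Finset.mem_singleton] at hr
    rcases hr with rfl | rfl | rfl | rfl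
    · exact ⟨hj₁, k, hk.le, d₁⟩
    · exact ⟨hj₂, k, hk.le, d₂⟩
    · exact ⟨hj₃, k + 1, hk, d₃⟩
    · exact ⟨hj₄, k + 1, hk, d₄⟩)
  omega

/-- Six defects with two neighbouring columns come from a rectangle by moving along one of its
sides. -/
theorem exists_flipRect_of_energy_eq_six {σ : Config L} (h : energy σ = 6)
    (hadj : HasAdjacentColumns σ) :
    ∃ τ ∈ levelSet L 4, ∃ z ∈ defectSet τ, ∃ r ∈ Finset.range (L + 1),
      flipRect τ (z.1 - 1) z.1 r z.2 = σ := by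
  obtain ⟨k, hk, h1, h2⟩ := hadj
  obtain ⟨r, hr, d1, d2⟩ := exists_common_row_of_energy_eq_six h hk h1 h2
  obtain ⟨v, hv, hvr, d3⟩ := exists_col_mate hr d1
  have he := energy_flipRect σ hk.le hk hr hv (Nat.lt_succ_self k).ne hvr.symm
  rw [Nat.succ_eq_add_one, d1, d2, d3, h] at he
  have hne : flipRect σ k (k + 1) r v ≠ allPlus L := by
    intro h0
    rw [h0, energy_allPlus] at he
    cases hd : isDefect σ (k + 1) v <;> simp [hd] at he
  have h4 := four_le_energy hne
  have hd : isDefect σ (k + 1) v = false := by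
    cases hd : isDefect σ (k + 1) v
    · rfl
    · simp [hd] at he; omega
  rw [hd] at he
  simp only [Bool.toNat_true, Bool.toNat_false] at he
  refine ⟨flipRect σ k (k + 1) r v, mem_levelSet.2 (by omega), (k + 1, v),
    mem_defectSet.2 ⟨⟨hk, hv⟩, ?_⟩, r, Finset.mem_range.2 (by omega), ?_⟩
  · simp only
    rw [isDefect_flipRect σ hk.le hk hr hv, hd]
    simp [hvr]
  · simp only [Nat.add_sub_cancel]
    exact flipRect_flipRect σ k (k + 1) r v

theorem card_energy_six_adjacent_columns_le (L : ℕ) :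
    (Finset.univ.filter fun σ : Config L => energy σ = 6 ∧ HasAdjacentColumns σ).card ≤
      4 * (L + 1) ^ 5 := by
  have hsub : (Finset.univ.filter fun σ : Config L => energy σ = 6 ∧ HasAdjacentColumns σ) ⊆
      (levelSet L 4).biUnion fun τ => (defectSet τ ×ˢ Finset.range (L + 1)).image
        fun q => flipRect τ (q.1.1 - 1) q.1.1 q.2 q.1.2 := by
    intro σ hσ
    obtain ⟨-, h6, hadj⟩ := Finset.mem_filter.1 hσ
    obtain ⟨τ, hτ, z, hz, r, hr, he⟩ := exists_flipRect_of_energy_eq_six h6 hadj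
    rw [Finset.mem_biUnion]
    exact ⟨τ, hτ, Finset.mem_image.2 ⟨(z, r), Finset.mem_product.2 ⟨hz, hr⟩, he⟩⟩
  refine (Finset.card_le_card hsub).trans (Finset.card_biUnion_le.trans ?_)
  calc _ ≤ ∑ _τ ∈ levelSet L 4, 4 * (L + 1) := by
        refine Finset.sum_le_sum fun τ hτ => Finset.card_image_le.trans ?_
        rw [Finset.card_product, Finset.card_range]
        exact (congrArg (· * (L + 1)) (mem_levelSet.1 hτ)).le
    _ = 4 * (L + 1) * (levelSet L 4).card := by rw [Finset.sum_const, smul_eq_mul, mul_comm]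
    _ ≤ 4 * (L + 1) * (L + 1) ^ 4 := Nat.mul_le_mul_left _ (card_levelSet_le L 4)
    _ = _ := by ring

/-- Reflection of a configuration in the diagonal. -/
def transposeConfig (σ : Config L) : Config L := fun k => σ (k.2, k.1)

theorem transposeConfig_transposeConfig (σ : Config L) :
    transposeConfig (transposeConfig σ) = σ := rfl

theorem minusAt_transposeConfig (σ : Config L) (i j : ℕ) :
    minusAt (transposeConfig σ) i j = minusAt σ j i := by
  unfold minusAt transposeConfig
  refine decide_eq_decide.2 ⟨?_, ?_⟩ <;>
  · rintro ⟨k, h1, h2, h3⟩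
    exact ⟨(k.2, k.1), h2, h1, h3⟩

theorem isDefect_transposeConfig (σ : Config L) (i j : ℕ) :
    isDefect (transposeConfig σ) i j = isDefect σ j i := by
  unfold isDefect
  simp only [minusAt_transposeConfig]
  generalize minusAt σ j i = m1
  generalize minusAt σ j (i + 1) = m2
  generalize minusAt σ (j + 1) i = m3
  generalize minusAt σ (j + 1) (i + 1) = m4
  revert m1 m2 m3 m4
  decide

theorem energy_transposeConfig (σ : Config L) : energy (transposeConfig σ) = energy σ := by
  rw [energy_eq_sum, energy_eq_sum, grid, Finset.sum_product, Finset.sum_product_right]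
  simp only [isDefect_transposeConfig]

theorem hasAdjacentColumns_of_easySites_nonempty {σ : Config L} (h : (easySites σ).Nonempty) :
    HasAdjacentColumns σ ∨ HasAdjacentColumns (transposeConfig σ) := by
  obtain ⟨s, hs⟩ := h
  rw [mem_easySites] at hs
  have ha := s.1.2
  have hb := s.2.2
  revert hs ha hb
  generalize (s.1 : ℕ) = a
  generalize (s.2 : ℕ) = b
  intro hs ha hb
  unfold occ at hs
  unfold HasAdjacentColumns
  simp only [isDefect_transposeConfig]
  cases h1 : isDefect σ a b <;> cases h2 : isDefect σ a (b + 1) <;>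
    cases h3 : isDefect σ (a + 1) b <;> cases h4 : isDefect σ (a + 1) (b + 1) <;>
    simp only [h1, h2, h3, h4, Bool.toNat_true, Bool.toNat_false] at hs <;>
    first
    | omega
    | exact Or.inl ⟨a, ha, ⟨b, hb.le, h1⟩, ⟨b, hb.le, h3⟩⟩
    | exact Or.inl ⟨a, ha, ⟨b, hb.le, h1⟩, ⟨b + 1, hb, h4⟩⟩
    | exact Or.inl ⟨a, ha, ⟨b + 1, hb, h2⟩, ⟨b, hb.le, h3⟩⟩
    | exact Or.inl ⟨a, ha, ⟨b + 1, hb, h2⟩, ⟨b + 1, hb, h4⟩⟩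
    | exact Or.inr ⟨b, hb, ⟨a, ha.le, h1⟩, ⟨a, ha.le, h2⟩⟩
    | exact Or.inr ⟨b, hb, ⟨a + 1, ha, h3⟩, ⟨a + 1, ha, h4⟩⟩

theorem card_energy_six_easySites_nonempty_le (L : ℕ) :
    (Finset.univ.filter fun σ : Config L => energy σ = 6 ∧ (easySites σ).Nonempty).card ≤
      8 * (L + 1) ^ 5 := by
  let S := Finset.univ.filter fun σ : Config L => energy σ = 6 ∧ HasAdjacentColumns σ
  have hsub : (Finset.univ.filter fun σ : Config L => energy σ = 6 ∧ (easySites σ).Nonempty) ⊆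
      S ∪ S.image transposeConfig := by
    intro σ hσ
    obtain ⟨-, h6, hne⟩ := Finset.mem_filter.1 hσ
    rw [Finset.mem_union]
    rcases hasAdjacentColumns_of_easySites_nonempty hne with h | h
    · exact Or.inl (Finset.mem_filter.2 ⟨Finset.mem_univ _, h6, h⟩)
    · exact Or.inr (Finset.mem_image.2 ⟨transposeConfig σ, Finset.mem_filter.2
        ⟨Finset.mem_univ _, (energy_transposeConfig σ).trans h6, h⟩,
        transposeConfig_transposeConfig σ⟩)
  have h1 := (Finset.card_le_card hsub).trans (Finset.card_union_le _ _)
  have h2 : (S.image transposeConfig).card ≤ S.card := Finset.card_image_le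
  have h3 := card_energy_six_adjacent_columns_le L
  have h4 : S.card ≤ 4 * (L + 1) ^ 5 := h3
  omega

theorem gibbs_le_exp (β : ℝ) (σ : Config L) : gibbs L β σ ≤ Real.exp (-β * energy σ) := by
  rw [gibbs_eq]
  exact div_le_self (Real.exp_pos _).le (one_le_partitionFn L β)

theorem sum_easySites_areaFn_le (β : ℝ) (σ : Config L) :
    ∑ x ∈ easySites σ, gibbs L β σ * (areaFn (flip L σ x) - areaFn σ) ^ 2 ≤
      2 * (energy σ * Real.exp (-β * energy σ)) := by
  have h1 : ∀ x ∈ easySites σ, gibbs L β σ * (areaFn (flip L σ x) - areaFn σ) ^ 2 ≤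
      Real.exp (-β * energy σ) := fun x _ =>
    (mul_le_of_le_one_right (gibbs_pos β σ).le (sq_areaFn_flip_sub_le_one σ x)).trans
      (gibbs_le_exp β σ)
  refine (Finset.sum_le_sum h1).trans ?_
  rw [Finset.sum_const, nsmul_eq_mul, ← mul_assoc]
  refine mul_le_mul_of_nonneg_right ?_ (Real.exp_pos _).le
  exact_mod_cast card_easySites_le σ

theorem dirichlet_areaFn_le {β r : ℝ} (hr : r = (L + 1) * Real.exp (-β)) (hr4 : r ≤ 1 / 4) :
    dirichlet (gen L β) (gibbs L β) (areaFn (L := L)) ≤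
      96 * (L + 1) ^ 5 * Real.exp (-β * 6) + 4 * (2 * r) ^ 7 := by
  refine (dirichlet_le_sum_easySites _).trans ?_
  have key : ∀ σ : Config L,
      ∑ x ∈ easySites σ, gibbs L β σ * (areaFn (flip L σ x) - areaFn σ) ^ 2 ≤
        (if energy σ = 6 ∧ (easySites σ).Nonempty then 12 * Real.exp (-β * 6) else 0) +
        (if 7 ≤ energy σ then 2 * (energy σ * Real.exp (-β * energy σ)) else 0) := by
    intro σ
    have hgen := sum_easySites_areaFn_le β σ
    have hnn : 0 ≤ (if energy σ = 6 ∧ (easySites σ).Nonempty then 12 * Real.exp (-β * 6) else 0) := by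
      split_ifs <;> positivity
    by_cases h7 : 7 ≤ energy σ
    · rw [if_pos h7]
      linarith
    rw [if_neg h7, add_zero]
    by_cases h6 : energy σ = 6
    · by_cases hne : (easySites σ).Nonempty
      · rw [if_pos ⟨h6, hne⟩]
        rw [h6] at hgen
        push_cast at hgen
        linarith
      · rw [Finset.not_nonempty_iff_eq_empty.1 hne, Finset.sum_empty]
        simp
    by_cases h4 : energy σ = 4
    · refine le_trans (le_of_eq ?_) hnn
      refine Finset.sum_eq_zero fun x hx => ?_
      rw [areaFn_flip_eq_of_energy_eq_four h4 hx]
      ring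
    by_cases h0 : energy σ = 0
    · rw [h0] at hgen
      refine le_trans (hgen.trans_eq (by simp)) hnn
    exfalso
    by_cases h5 : energy σ = 5
    · have := mem_levelSet.2 h5
      rw [levelSet_five_eq_empty] at this
      simp at this
    · have : σ ∈ levelSet L (energy σ) := mem_levelSet.2 rfl
      rw [levelSet_eq_empty (by omega) (by omega)] at this
      simp at this
  refine (Finset.sum_le_sum fun σ _ => key σ).trans ?_
  rw [Finset.sum_add_distrib, ← Finset.sum_filter, ← Finset.sum_filter, Finset.sum_const,
    nsmul_eq_mul, ← Finset.mul_sum]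
  have h1 : ((Finset.univ.filter fun σ : Config L =>
      energy σ = 6 ∧ (easySites σ).Nonempty).card : ℝ) ≤ 8 * (L + 1) ^ 5 := by
    exact_mod_cast card_energy_six_easySites_nonempty_le L
  have h2 := sum_energy_exp_le hr hr4 7
  have h3 := mul_le_mul_of_nonneg_right h1 (by positivity : 0 ≤ 12 * Real.exp (-β * 6))
  linarith

/-- If `f` vanishes at a point of mass at least one half, its squared mean is at most half its
second moment. -/
theorem two_mul_sq_sum_le {S : Type*} [Fintype S] {p f : S → ℝ} {o : S} (hp : ∀ s, 0 ≤ p s)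
    (hsum : ∑ s, p s = 1) (ho : 1 / 2 ≤ p o) (hf : f o = 0) :
    2 * (∑ s, p s * f s) ^ 2 ≤ ∑ s, p s * f s ^ 2 := by
  let q : S → ℝ := fun s => if s = o then 0 else p s
  have hq : ∑ s, q s ≤ 1 / 2 := by
    have : ∑ s, (q s + if s = o then p o else 0) = 1 := by
      rw [← hsum]
      refine Finset.sum_congr rfl fun s _ => ?_
      by_cases h : s = o <;> simp [q, h]
    rw [Finset.sum_add_distrib, Finset.sum_ite_eq' Finset.univ o] at this
    simp only [Finset.mem_univ, if_true] at this
    linarith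
  have hq0 : ∀ s, 0 ≤ q s := by
    intro s
    simp only [q]
    split_ifs
    · exact le_rfl
    · exact hp s
  have e1 : ∑ s, p s * f s = ∑ s, q s * f s := by
    refine Finset.sum_congr rfl fun s _ => ?_
    by_cases h : s = o <;> simp [q, h, hf]
  have hcs : (∑ s, q s * f s) ^ 2 ≤ (∑ s, q s) * ∑ s, q s * f s ^ 2 := by
    refine Finset.sum_sq_le_sum_mul_sum_of_sq_le_mul _ (fun s _ => hq0 s)
      (fun s _ => mul_nonneg (hq0 s) (sq_nonneg _)) fun s _ => le_of_eq (by ring)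
  have e2 : ∑ s, q s * f s ^ 2 = ∑ s, p s * f s ^ 2 := by
    refine Finset.sum_congr rfl fun s _ => ?_
    by_cases h : s = o <;> simp [q, h, hf]
  rw [e1]
  rw [e2] at hcs
  have h0 : 0 ≤ ∑ s, p s * f s ^ 2 := Finset.sum_nonneg fun s _ => mul_nonneg (hp s) (sq_nonneg _)
  nlinarith

theorem sq_le_minusCount_rect {m a u b v : ℕ} (hL : 3 * m ≤ L) (ha : a < m) (hu : 2 * m ≤ u)
    (hb : b < m) (hv : 2 * m ≤ v) : m ^ 2 ≤ minusCount (flipRect (allPlus L) a u b v) := by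
  let g : Fin m × Fin m → Fin L × Fin L := fun k =>
    (⟨m + k.1, by have := k.1.2; omega⟩, ⟨m + k.2, by have := k.2.2; omega⟩)
  have hg : Function.Injective g := by
    intro k k' h
    simp only [g, Prod.mk.injEq, Fin.mk.injEq] at h
    exact Prod.ext (Fin.ext (by omega)) (Fin.ext (by omega))
  have hcard : (Finset.univ.image g).card = m ^ 2 := by
    rw [Finset.card_image_of_injective _ hg]
    simp [sq]
  rw [← hcard]
  refine Finset.card_le_card ?_
  intro z hz
  obtain ⟨k, -, rfl⟩ := Finset.mem_image.1 hz
  refine Finset.mem_filter.2 ⟨Finset.mem_univ _, ?_⟩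
  have hk1 := k.1.2
  have hk2 := k.2.2
  have e1 : between a u (m + k.1 + 1) = true := by
    simp only [between, show a < m + k.1 + 1 by omega, show ¬ u < m + k.1 + 1 by omega]
    simp
  have e2 : between b v (m + k.2 + 1) = true := by
    simp only [between, show b < m + k.2 + 1 by omega, show ¬ v < m + k.2 + 1 by omega]
    simp
  simp only [flipRect, g, allPlus, e1, e2]
  decide

theorem energy_flipRect_allPlus {a u b v : ℕ} (ha : a ≤ L) (hu : u ≤ L) (hb : b ≤ L) (hv : v ≤ L)
    (hau : a ≠ u) (hbv : b ≠ v) : energy (flipRect (allPlus L) a u b v) = 4 := by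
  have := energy_flipRect (allPlus L) ha hu hb hv hau hbv
  simpa [isDefect_allPlus, energy_allPlus] using this

theorem flipRect_allPlus_inj {a u b v a' u' b' v' : ℕ} (hu : u ≤ L) (hv : v ≤ L) (hu' : u' ≤ L)
    (hv' : v' ≤ L) (hau : a < u) (hbv : b < v) (hau' : a' < u') (hbv' : b' < v')
    (h : flipRect (allPlus L) a u b v = flipRect (allPlus L) a' u' b' v') :
    a = a' ∧ u = u' ∧ b = b' ∧ v = v' := by
  have key : ∀ i j : ℕ,
      ((i = a ∨ i = u) ∧ (j = b ∨ j = v)) ↔ ((i = a' ∨ i = u') ∧ (j = b' ∨ j = v')) := by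
    intro i j
    have e1 := isDefect_flipRect (allPlus L) (hau.le.trans hu) hu (hbv.le.trans hv) hv i j
    have e2 := isDefect_flipRect (allPlus L) (hau'.le.trans hu') hu' (hbv'.le.trans hv') hv' i j
    rw [h] at e1
    rw [e1, isDefect_allPlus, Bool.false_xor, Bool.false_xor] at e2
    have hx : ∀ p q i : ℕ, p < q → ((decide (i = p) ^^ decide (i = q)) = decide (i = p ∨ i = q)) := by
      intro p q i hpq
      by_cases h1 : i = p <;> by_cases h2 : i = q <;> simp [h1, h2] <;> omega
    rw [hx _ _ _ hau, hx _ _ _ hbv, hx _ _ _ hau', hx _ _ _ hbv', ← Bool.decide_and,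
      ← Bool.decide_and, decide_eq_decide] at e2
    exact e2
  have k1 := key a b
  have k2 := key u v
  have k3 := key a' b'
  have k4 := key u' v'
  omega

theorem le_sum_gibbs_areaFn_sq {β : ℝ} {m : ℕ} (hL : 3 * m ≤ L) (hm : 2 * L ≤ m ^ 2)
    (hZ : partitionFn L β ≤ 2) :
    (m : ℝ) ^ 4 * ((m : ℝ) ^ 2 - 2 * L) ^ 2 * (Real.exp (-β * 4) / 2) ≤
      ∑ σ : Config L, gibbs L β σ * areaFn σ ^ 2 := by
  let g : (Fin m × Fin m) × (Fin m × Fin m) → Config L := fun k =>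
    flipRect (allPlus L) k.1.1 (2 * m + k.1.2) k.2.1 (2 * m + k.2.2)
  have hg : Function.Injective g := by
    intro k k' h
    have a1 := k.1.1.2
    have a2 := k.1.2.2
    have a3 := k.2.1.2
    have a4 := k.2.2.2
    have b1 := k'.1.1.2
    have b2 := k'.1.2.2
    have b3 := k'.2.1.2
    have b4 := k'.2.2.2
    obtain ⟨h1, h2, h3, h4⟩ := flipRect_allPlus_inj (by omega) (by omega) (by omega) (by omega)
      (by omega) (by omega) (by omega) (by omega) h
    exact Prod.ext (Prod.ext (Fin.ext h1) (Fin.ext (by omega)))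
      (Prod.ext (Fin.ext h3) (Fin.ext (by omega)))
  have hterm : ∀ k, ((m : ℝ) ^ 2 - 2 * L) ^ 2 * (Real.exp (-β * 4) / 2) ≤
      gibbs L β (g k) * areaFn (g k) ^ 2 := by
    intro k
    have a1 := k.1.1.2
    have a2 := k.1.2.2
    have a3 := k.2.1.2
    have a4 := k.2.2.2
    have he : energy (g k) = 4 := energy_flipRect_allPlus (by omega) (by omega) (by omega) (by omega)
      (by omega) (by omega)
    have hc : (m : ℝ) ^ 2 ≤ minusCount (g k) := by
      exact_mod_cast sq_le_minusCount_rect hL a1 (by omega) a3 (by omega)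
    have hm' : (2 : ℝ) * L ≤ (m : ℝ) ^ 2 := by exact_mod_cast hm
    have h1 : (m : ℝ) ^ 2 - 2 * L ≤ areaFn (g k) :=
      le_trans (by linarith) (le_max_right _ _)
    rw [mul_comm, gibbs_eq, he]
    refine mul_le_mul ?_ (pow_le_pow_left₀ (by linarith) h1 2) (sq_nonneg _)
      (div_nonneg (Real.exp_pos _).le (partitionFn_pos L β).le)
    exact div_le_div_of_nonneg_left (Real.exp_pos _).le (partitionFn_pos L β) hZ
  calc _ = ∑ _k : (Fin m × Fin m) × (Fin m × Fin m),
        ((m : ℝ) ^ 2 - 2 * L) ^ 2 * (Real.exp (-β * 4) / 2) := by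
        rw [Finset.sum_const, nsmul_eq_mul, Finset.card_univ]
        simp only [Fintype.card_prod, Fintype.card_fin]
        push_cast
        ring
    _ ≤ ∑ k, gibbs L β (g k) * areaFn (g k) ^ 2 := Finset.sum_le_sum fun k _ => hterm k
    _ = ∑ σ ∈ Finset.univ.image g, gibbs L β σ * areaFn σ ^ 2 :=
        (Finset.sum_image (f := fun σ => gibbs L β σ * areaFn σ ^ 2) fun _ _ _ _ h => hg h).symm
    _ ≤ _ := Finset.sum_le_sum_of_subset_of_nonneg (Finset.subset_univ _)
        fun σ _ _ => mul_nonneg (gibbs_pos β σ).le (sq_nonneg _)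

theorem dirichlet_gen_nonneg (β : ℝ) (f : Config L → ℝ) :
    0 ≤ dirichlet (gen L β) (gibbs L β) f := by
  rw [dirichlet_gen]
  refine div_nonneg (Finset.sum_nonneg fun σ _ => Finset.sum_nonneg fun x _ => ?_) two_pos.le
  exact mul_nonneg (le_min (gibbs_pos β σ).le (gibbs_pos β _).le) (sq_nonneg _)

theorem mul_exp_neg_le_of_le {β X : ℝ} (hX : 1024 ≤ X) (hL : (L : ℝ) + 1 ≤ 2 * X)
    (hβ : Real.exp (-β) = (X ^ 2)⁻¹) : ((L : ℝ) + 1) * Real.exp (-β) ≤ 2 / X := by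
  have h0 : 0 < X := by linarith
  rw [hβ]
  calc ((L : ℝ) + 1) * (X ^ 2)⁻¹ ≤ 2 * X * (X ^ 2)⁻¹ :=
        mul_le_mul_of_nonneg_right hL (by positivity)
    _ = 2 / X := by field_simp

theorem exp_neg_mul_eq {β X : ℝ} (hβ : Real.exp (-β) = (X ^ 2)⁻¹) (n : ℕ) :
    Real.exp (-β * n) = (X ^ (2 * n))⁻¹ := by
  rw [mul_comm, Real.exp_nat_mul, hβ, inv_pow, ← pow_mul]

/-- A time at which the dynamics is mixed, on a box of side of order `X = e^{β/2}`. -/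
theorem tv_lt_of_scale {β X : ℝ} (hβ1 : 4 ≤ β) (hX : 1024 ≤ X) (hXβ : X ^ 2 = Real.exp β)
    (hL : (L : ℝ) ≤ X) (σ : Config L) :
    tv (mexp ((β * (288 * X ^ 7) * Real.log (β * (4 * X ^ 2)) + 3 * (288 * X ^ 7)) • gen L β) σ)
      (gibbs L β) < 1 / 4 := by
  have h0 : 0 < X := by linarith
  have hexp : Real.exp (-β) = (X ^ 2)⁻¹ := by rw [hXβ, Real.exp_neg]
  have hL1 : (L : ℝ) + 1 ≤ 2 * X := by linarith
  have hr : ((L : ℝ) + 1) * Real.exp (-β) ≤ 1 / 4 := by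
    refine (mul_exp_neg_le_of_le hX hL1 hexp).trans ?_
    rw [div_le_iff₀ h0]
    linarith
  have hLn : (0 : ℝ) ≤ L := L.cast_nonneg
  have hsq : ((L : ℝ) + 1) ^ 2 ≤ 4 * X ^ 2 := by nlinarith
  refine (isReversibleGenerator_gen L β).tv_lt_of_energy_poincare (D := energy) (o := allPlus L)
    (by linarith) (partitionFn_pos L β) (partitionFn_le_two hr) (gibbs_eq β) energy_allPlus
    (fun s hs => by have := four_le_energy hs; omega) (fun s => ?_) ?_ (by positivity) ?_ σ
  · refine le_trans ?_ hsq
    exact_mod_cast energy_le s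
  · nlinarith
  · intro f hf
    have e2 : Real.exp (-2 * β) = (X ^ 4)⁻¹ := by
      have := exp_neg_mul_eq hexp 2
      rw [← this]
      congr 1
      push_cast
      ring
    have e4 : Real.exp (-4 * β) = (X ^ 8)⁻¹ := by
      have := exp_neg_mul_eq hexp 4
      rw [← this]
      congr 1
      push_cast
      ring
    have ep : Real.exp (2 * β) = X ^ 4 := by
      rw [show (2 : ℝ) * β = (2 : ℕ) * β by norm_num, Real.exp_nat_mul, ← hXβ]
      ring
    have hsmall : 12 * (L : ℝ) * (4 * (L + 1) * Real.exp (-2 * β) +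
        L * (L + 1) ^ 2 * Real.exp (-4 * β)) ≤ 1 / 2 := by
      rw [e2, e4]
      calc _ ≤ 12 * X * (4 * (2 * X) * (X ^ 4)⁻¹ + X * (2 * X) ^ 2 * (X ^ 8)⁻¹) := by gcongr
        _ = (96 * X ^ 2 + 48 * X ^ 0) / X ^ 4 := by field_simp; ring
        _ ≤ 1 / 2 := by
            rw [div_le_iff₀ (by positivity)]
            have h2 : (1024 : ℝ) ^ 2 ≤ X ^ 2 := by gcongr
            have h4 : (1024 : ℝ) ^ 2 * X ^ 2 ≤ X ^ 4 := by nlinarith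
            rw [pow_zero]
            linarith
    refine (energy_poincare (by linarith) f hf hsmall).trans
      (mul_le_mul_of_nonneg_right ?_ (dirichlet_gen_nonneg β f))
    rw [ep]
    have hX3 : 2 * X ≤ X ^ 4 / 2 := by
      have : (1024 : ℝ) ^ 3 ≤ X ^ 3 := by gcongr
      nlinarith
    calc 48 * (L : ℝ) ^ 2 * (1 + L) * (X ^ 4 + (L + 1))
        ≤ 48 * X ^ 2 * (2 * X) * (X ^ 4 + X ^ 4 / 2) := by
          gcongr
          · linarith
          · linarith
      _ ≤ 288 * X ^ 7 := by
          have : 0 < X ^ 7 := by positivity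
          nlinarith

/-- Every time at which the dynamics is mixed is at least of order `X ^ 7 = e^{3.5β}`. -/
theorem le_of_tv_lt {β X : ℝ} (hX : 1024 ≤ X) (hXβ : X ^ 2 = Real.exp β)
    (hL : (L : ℝ) ≤ X) (hXL : X ≤ 2 * L) {t : ℝ} (ht : 0 < t)
    (hmix : ∀ σ : Config L, tv (mexp (t • gen L β) σ) (gibbs L β) < 1 / 4) :
    (3 / 16) * (1 / 2 ^ 35) / 68608 * X ^ 7 ≤ t := by
  have h0 : 0 < X := by linarith
  have hexp : Real.exp (-β) = (X ^ 2)⁻¹ := by rw [hXβ, Real.exp_neg]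
  have hL1 : (L : ℝ) + 1 ≤ 2 * X := by linarith
  have hr2 := mul_exp_neg_le_of_le hX hL1 hexp
  have hr : ((L : ℝ) + 1) * Real.exp (-β) ≤ 1 / 4 := by
    refine hr2.trans ?_
    rw [div_le_iff₀ h0]
    linarith
  have hZ := partitionFn_le_two hr
  have hD : dirichlet (gen L β) (gibbs L β) (areaFn (L := L)) ≤ 68608 / X ^ 7 := by
    refine (dirichlet_areaFn_le rfl hr).trans ?_
    have e6 : Real.exp (-β * 6) = (X ^ 12)⁻¹ := by
      have := exp_neg_mul_eq hexp 6
      exact_mod_cast this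
    rw [e6]
    calc _ ≤ 96 * (2 * X) ^ 5 * (X ^ 12)⁻¹ + 4 * (2 * (2 / X)) ^ 7 := by gcongr
      _ = 68608 / X ^ 7 := by field_simp; norm_num
  have hL512 : 512 ≤ L := by
    have : (512 : ℝ) ≤ L := by linarith
    exact_mod_cast this
  have hm8 : (L : ℝ) / 8 ≤ ((L / 4 : ℕ) : ℝ) := by
    rw [div_le_iff₀ (by norm_num)]
    exact_mod_cast (by omega : L ≤ L / 4 * 8)
  have hLr : (512 : ℝ) ≤ L := by exact_mod_cast hL512
  have hmsq : (L : ℝ) ^ 2 / 128 ≤ ((L / 4 : ℕ) : ℝ) ^ 2 - 2 * L := by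
    have : ((L : ℝ) / 8) ^ 2 ≤ ((L / 4 : ℕ) : ℝ) ^ 2 := by gcongr
    nlinarith
  have hS : 1 / 2 ^ 35 ≤ ∑ σ : Config L, gibbs L β σ * areaFn σ ^ 2 := by
    refine le_trans ?_ (le_sum_gibbs_areaFn_sq (m := L / 4) (by omega) ?_ hZ)
    · have e4 : Real.exp (-β * 4) = (X ^ 8)⁻¹ := by
        have := exp_neg_mul_eq hexp 4
        exact_mod_cast this
      rw [e4]
      calc (1 : ℝ) / 2 ^ 35 = (X / 2 / 8) ^ 4 * ((X / 2) ^ 2 / 128) ^ 2 * ((X ^ 8)⁻¹ / 2) := by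
            field_simp
            norm_num
        _ ≤ ((L : ℝ) / 8) ^ 4 * ((L : ℝ) ^ 2 / 128) ^ 2 * ((X ^ 8)⁻¹ / 2) := by
            have : X / 2 ≤ L := by linarith
            gcongr
        _ ≤ _ := by gcongr
    · have : (2 : ℝ) * L ≤ ((L / 4 : ℕ) : ℝ) ^ 2 := by nlinarith
      exact_mod_cast this
  have ho : 1 / 2 ≤ gibbs L β (allPlus L) := by
    rw [gibbs_eq, energy_allPlus]
    simp only [Nat.cast_zero, mul_zero, Real.exp_zero]
    exact one_div_le_one_div_of_le (partitionFn_pos L β) hZ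
  have hmean := two_mul_sq_sum_le (fun σ => (gibbs_pos β σ).le) (sum_gibbs L β) ho
    (areaFn_allPlus (L := L))
  have hvar := (isReversibleGenerator_gen L β).variance_le_of_tv ht.le hmix areaFn
  have hfin : 3 / 16 * (1 / 2 ^ 35) ≤ t * (68608 / X ^ 7) := by
    have := mul_le_mul_of_nonneg_left hD ht.le
    linarith
  rw [div_mul_eq_mul_div, div_le_iff₀ (by norm_num)]
  have h7 : 0 < X ^ 7 := by positivity
  rw [← mul_div_assoc t, le_div_iff₀ h7] at hfin
  exact hfin

end SPM

/-- Theorem `ThmMainResPlus`: mixing time bounds for the square plaquette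
model with all-plus boundary conditions on the critical length scale:
`e^{3.5β} ≲ T⁺_mix(L_c) ≲ β⁸ e^{3.75β}`. -/
theorem spm_plus_mixing_time_bounds :
    ∃ c C β₀ : ℝ, 0 < c ∧ 0 < C ∧ ∀ β : ℝ, β₀ ≤ β →
      c * Real.exp (3.5 * β) ≤ tmix (Lc β) β (1 / 4) ∧
      tmix (Lc β) β (1 / 4) ≤ C * β ^ 8 * Real.exp (3.75 * β) := by
  refine ⟨(3 / 16) * (1 / 2 ^ 35) / 68608, 1728, 20, by norm_num, by norm_num, fun β hβ => ?_⟩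
  set X := Real.exp (β / 2) with hXdef
  have hX : 1024 ≤ X := by
    have h1 : (2 : ℝ) ≤ Real.exp 1 := by linarith [Real.add_one_le_exp (1 : ℝ)]
    calc (1024 : ℝ) = 2 ^ 10 := by norm_num
      _ ≤ Real.exp 1 ^ 10 := by gcongr
      _ = Real.exp 10 := by rw [← Real.exp_nat_mul]; norm_num
      _ ≤ X := Real.exp_le_exp.2 (by linarith)
  have hXβ : X ^ 2 = Real.exp β := by
    rw [hXdef, ← Real.exp_nat_mul]
    congr 1
    push_cast
    ring
  have hX7 : X ^ 7 = Real.exp (3.5 * β) := by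
    rw [hXdef, ← Real.exp_nat_mul]
    congr 1
    push_cast
    ring
  have hL : (Lc β : ℝ) ≤ X := Nat.floor_le (Real.exp_pos _).le
  have hXL : X ≤ 2 * Lc β := by
    have : X < (Lc β : ℝ) + 1 := Nat.lt_floor_add_one _
    linarith
  have hmem : (β * (288 * X ^ 7) * Real.log (β * (4 * X ^ 2)) + 3 * (288 * X ^ 7)) ∈
      {t : ℝ | 0 < t ∧ ∀ σ : Config (Lc β), tv (mexp (t • gen (Lc β) β) σ) (gibbs (Lc β) β) <
        1 / 4} := by
    refine ⟨?_, tv_lt_of_scale (by linarith) hX hXβ hL⟩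
    have : 0 ≤ Real.log (β * (4 * X ^ 2)) := Real.log_nonneg (by nlinarith)
    positivity
  rw [← hX7]
  refine ⟨le_csInf ⟨_, hmem⟩ fun t ht => le_of_tv_lt hX hXβ hL hXL ht.1 ht.2, ?_⟩
  refine (csInf_le ⟨0, fun t ht => ht.1.le⟩ hmem).trans ?_
  have hlog : Real.log (β * (4 * X ^ 2)) ≤ 3 * β := by
    have hβ0 : (0 : ℝ) < β := by linarith
    rw [hXβ, Real.log_mul hβ0.ne' (by positivity), Real.log_mul (by norm_num) (by positivity),
      Real.log_exp]
    have h1 := Real.log_le_sub_one_of_pos hβ0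
    have h2 := Real.log_le_sub_one_of_pos (by norm_num : (0 : ℝ) < 4)
    linarith
  have hX7le : X ^ 7 ≤ Real.exp (3.75 * β) := by
    rw [hX7]
    exact Real.exp_le_exp.2 (by linarith)
  have hβ2 : β ^ 2 ≤ β ^ 8 := pow_le_pow_right₀ (by linarith) (by norm_num)
  have h7 : 0 < X ^ 7 := by positivity
  calc _ ≤ β * (288 * X ^ 7) * (3 * β) + 3 * (288 * X ^ 7) := by gcongr
    _ = (864 * β ^ 2 + 864) * X ^ 7 := by ring
    _ ≤ 1728 * β ^ 2 * X ^ 7 := by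
        refine mul_le_mul_of_nonneg_right ?_ h7.le
        nlinarith
    _ ≤ 1728 * β ^ 8 * Real.exp (3.75 * β) := by gcongr

end
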